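/- arXiv:0911.3810 — 2 statements merged into one kernel-verified Lean document; each statement's English description precedes it below -/
import Mathlib

section
/- Let F be the bowtie graph (two triangles joined by an edge: vertex set {1,...,6}, edges {1,2},{1,3},{2,3},{4,5},{4,6},{5,6},{1,4}). Then Builder has a winning strategy in the deterministic F-avoidance game with 2 colors and density restriction d = 61/36. -/
open SimpleGraph Filter Asymptotics
open scoped Classical

/-- A history of the game: the sequence of edges presented so far, together with
the colors (elements of `Fin r`, representing the colors `1,…,r`) they received. -/
abbrev EdgeHistory (V : Type) (r : ℕ) := List (Sym2 V × Fin r)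

/-- A Painter strategy on vertex type `V` with `r` colors: a function assigning a color
to every pair (history, new edge). -/
abbrev PainterStrategy (V : Type) (r : ℕ) := EdgeHistory V r → Sym2 V → Fin r

/-- Auxiliary function: run a Painter strategy on a list of presented edges,
extending the given history. -/
def runPainterAux {V : Type} {r : ℕ} (π : PainterStrategy V r) :
    EdgeHistory V r → List (Sym2 V) → EdgeHistory V r
  | h, [] => h
  | h, e :: es => runPainterAux π (h ++ [(e, π h e)]) es

/-- The colored history obtained by coloring the edges of `l` successively
according to the Painter strategy `π`. -/
def runPainter {V : Type} {r : ℕ} (π : PainterStrategy V r) (l : List (Sym2 V)) :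
    EdgeHistory V r :=
  runPainterAux π [] l

/-- `G` contains a copy of `F`, i.e. a subgraph isomorphic to `F`. -/
def IsCopy {α β : Type} (F : SimpleGraph α) (G : SimpleGraph β) : Prop :=
  ∃ f : α ↪ β, ∀ u v : α, F.Adj u v → G.Adj (f u) (f v)

/-- The graph formed by the edges of color `c` in the history `h`. -/
def colorGraph {V : Type} {r : ℕ} (h : EdgeHistory V r) (c : Fin r) : SimpleGraph V :=
  SimpleGraph.fromEdgeSet {e | (e, c) ∈ h}

/-- The history `h` contains a monochromatic copy of `F`. -/
def HasMonoCopy {α V : Type} {r : ℕ} (F : SimpleGraph α) (h : EdgeHistory V r) : Prop :=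
  ∃ c : Fin r, IsCopy F (colorGraph h c)

/-- The number of edges of `G` lying entirely within the vertex set `S`. -/
noncomputable def edgesWithin {V : Type} (G : SimpleGraph V) (S : Set V) : ℕ :=
  (G.edgeSet ∩ {e | ∀ v ∈ e, v ∈ S}).ncard

/-- `m(G) ≤ d`: every subgraph `H` of `G` with at least one vertex satisfies `e_H ≤ d · v_H`. -/
def DensityLE {V : Type} (G : SimpleGraph V) (d : ℝ) : Prop :=
  ∀ S : Finset V, S.Nonempty → (edgesWithin G (↑S : Set V) : ℝ) ≤ d * (S.card : ℝ)

/-- `G` contains no cycle and every connected component of `G` has at most `k` edges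
(equivalently, `G` is acyclic and contains no connected subgraph with more than `k` edges). -/
def TreeSizeLE {V : Type} (G : SimpleGraph V) (k : ℕ) : Prop :=
  G.IsAcyclic ∧ ∀ S : Set V, (G.induce S).Connected → edgesWithin G S ≤ k

/-- A legal sequence of moves for Builder: distinct non-loop edges. -/
def ValidEdgeSeq {V : Type} (l : List (Sym2 V)) : Prop :=
  l.Nodup ∧ ∀ e ∈ l, ¬ e.IsDiag

/-- The (uncolored) board formed by a list of edges. -/
def boardOf {V : Type} (l : List (Sym2 V)) : SimpleGraph V :=
  SimpleGraph.fromEdgeSet {e | e ∈ l}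

/-- Builder has a winning strategy in the deterministic `F`-avoidance game with `r` colors
and density restriction `d`. -/
def BuilderWinsDensity {α : Type} (F : SimpleGraph α) (r : ℕ) (d : ℝ) : Prop :=
  ∃ a : ℕ, ∀ π : PainterStrategy (Fin a) r, ∃ l : List (Sym2 (Fin a)),
    ValidEdgeSeq l ∧ (∀ i : ℕ, DensityLE (boardOf (l.take i)) d) ∧
    HasMonoCopy F (runPainter π l)

/-- Builder has a winning strategy in the deterministic `F`-avoidance game with `r` colors
and tree size restriction `k`. -/
def BuilderWinsTree {α : Type} (F : SimpleGraph α) (r k : ℕ) : Prop :=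
  ∃ a : ℕ, ∀ π : PainterStrategy (Fin a) r, ∃ l : List (Sym2 (Fin a)),
    ValidEdgeSeq l ∧ (∀ i : ℕ, TreeSizeLE (boardOf (l.take i)) k) ∧
    HasMonoCopy F (runPainter π l)

/-- The Painter strategy `π` on `a` vertices never creates a monochromatic copy of `F`
against any Builder play obeying the tree size restriction `k`. -/
def PainterAvoidsTree {α : Type} (F : SimpleGraph α) (r k a : ℕ)
    (π : PainterStrategy (Fin a) r) : Prop :=
  ∀ l : List (Sym2 (Fin a)), ValidEdgeSeq l →
    (∀ i : ℕ, TreeSizeLE (boardOf (l.take i)) k) →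
    ¬ HasMonoCopy F (runPainter π l)

/-- Painter has a winning strategy in the deterministic `F`-avoidance game with `r` colors
and tree size restriction `k`. -/
def PainterWinsTree {α : Type} (F : SimpleGraph α) (r k : ℕ) : Prop :=
  ∀ a : ℕ, ∃ π : PainterStrategy (Fin a) r, PainterAvoidsTree F r k a π

/-- A sequence of `N` distinct non-loop edges on `n` vertices. -/
def ValidSeqFun {n N : ℕ} (f : Fin N → Sym2 (Fin n)) : Prop :=
  Function.Injective f ∧ ∀ i, ¬ (f i).IsDiag

/-- The probability (with respect to the uniformly random order in which the `N` distinct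
edges of the random process on `n` vertices appear) of the event `P`. -/
noncomputable def onlineProb (n N : ℕ) (P : (Fin N → Sym2 (Fin n)) → Prop) : ℝ :=
  (Set.ncard {f : Fin N → Sym2 (Fin n) | ValidSeqFun f ∧ P f} : ℝ) /
  (Set.ncard {f : Fin N → Sym2 (Fin n) | ValidSeqFun f} : ℝ)

/-- Event: playing the online strategy `π` on the random edge sequence `f` produces
a monochromatic copy of `F`. -/
def OnlineMonoCopy {α : Type} (F : SimpleGraph α) {r n N : ℕ}
    (π : PainterStrategy (Fin n) r) (f : Fin N → Sym2 (Fin n)) : Prop :=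
  HasMonoCopy F (runPainter π (List.ofFn f))

/-- The bowtie graph: two triangles `{0,1,2}` and `{3,4,5}` joined by the edge `{0,3}`
(vertices `1,…,6` of the informal statement correspond to `0,…,5` here). -/
def bowtie : SimpleGraph (Fin 6) :=
  SimpleGraph.fromEdgeSet
    {s(0, 1), s(0, 2), s(1, 2), s(3, 4), s(3, 5), s(4, 5), s(0, 3)}

/-!
Measure a set `S` of vertices by its slack `d * |S| - e(S)`, where `d = 61 / 36`; Builder has to
keep all slacks nonnegative. Suppose that Builder cannot force a bowtie. Then Painter has a safe
answer to every legal edge, and since each component can be rebuilt as often as desired, finitely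
many repetitions fix one of her answers: Builder may use as many disjoint copies of the
corresponding component as he likes.

Joining path ends in this way gives long monochromatic paths inside trees. On a path with
7 vertices, Builder presents one or two chords and then a sequence of edges each of which would
close a triangle in the color of the path; if Painter never does so, she completes a triangle in
the other color. Every vertex set then has slack at least `7 / 6`.

Now let triangles of color `x` be available, and let `y` be the other color. An edge between the
roots of two disjoint such triangles must be given color `y`, as otherwise it closes a bowtie.
Connecting three roots pairwise therefore yields a triangle of color `y`, which shares each root
with a triangle of color `x`. The slack goes down from `7 / 6` to `3 * (7 / 6) - 3 = 1 / 2`. An edge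
between the roots of two such components closes a bowtie in either color, and since
`1 / 2 + 1 / 2 - 1 = 0`, Builder may present it. In the worst case the final board has 36 vertices
and 61 edges.
-/

open scoped Finset

/-- A board with vertices in `V` whose edges carry one of `r` colors; each edge is recorded together
with its color. -/
abbrev ColoredBoard (V : Type) (r : ℕ) := Finset (Sym2 V × Fin r)

namespace ColoredBoard

section Defs

variable {α V W : Type} {r : ℕ}

/-- The graph formed by the edges of color `c`. -/
def colorClass (D : ColoredBoard V r) (c : Fin r) : SimpleGraph V :=
  fromEdgeSet {e | (e, c) ∈ D}

/-- The board contains a monochromatic copy of `F`. -/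
def ContainsMono (F : SimpleGraph α) (D : ColoredBoard V r) : Prop :=
  ∃ c, IsCopy F (D.colorClass c)

/-- All edges of the board lie within `C`. -/
def SupportedOn (D : ColoredBoard V r) (C : Finset V) : Prop :=
  ∀ x ∈ D, ∀ v ∈ x.1, v ∈ C

/-- The board obtained by renaming the vertices along an embedding. -/
def relabel (f : V ↪ W) (D : ColoredBoard V r) : ColoredBoard W r :=
  D.map (f.sym2Map.prodMap (.refl _))

variable [DecidableEq V]

/-- The number of edges lying within the vertex set `S`. An edge occurring in two colors would be
counted twice, which does not happen in a play of the game. -/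
def edgeCount (D : ColoredBoard V r) (S : Finset V) : ℕ :=
  #{x ∈ D | x.1 ∈ S.sym2}

/-- The amount by which the edges within `S` fall short of the density bound `d`. -/
noncomputable def slack (d : ℝ) (D : ColoredBoard V r) (S : Finset V) : ℝ :=
  d * #S - D.edgeCount S

/-- Every nonempty vertex set has slack at least `t`. With `t = 0` this says that the board has
maximum density at most `d`, and with `d = t = 1` that it is a forest. -/
def HasSlack (d t : ℝ) (D : ColoredBoard V r) : Prop :=
  ∀ S : Finset V, S.Nonempty → t ≤ slack d D S

end Defs

section ColorClass

variable {α V W : Type} {r : ℕ} {D D' : ColoredBoard V r}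

lemma colorClass_adj {c : Fin r} {u v : V} :
    (D.colorClass c).Adj u v ↔ (s(u, v), c) ∈ D ∧ u ≠ v := by
  simp [colorClass]

lemma colorClass_mono (h : D ⊆ D') (c : Fin r) : D.colorClass c ≤ D'.colorClass c :=
  fromEdgeSet_mono fun _ he ↦ h he

lemma ContainsMono.mono {F : SimpleGraph α} (hD : D.ContainsMono F) (h : D ⊆ D') :
    D'.ContainsMono F := by
  obtain ⟨c, f, hf⟩ := hD
  exact ⟨c, f, fun u v huv ↦ colorClass_mono h c (hf u v huv)⟩

lemma SupportedOn.mono {C C' : Finset V} (hD : D.SupportedOn C) (h : C ⊆ C') :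
    D.SupportedOn C' :=
  fun x hx v hv ↦ h (hD x hx v hv)

lemma SupportedOn.union [DecidableEq V] {C C' : Finset V} (hD : D.SupportedOn C)
    (hD' : D'.SupportedOn C') : SupportedOn (D ∪ D') (C ∪ C') := by
  intro x hx v hv
  rcases Finset.mem_union.1 hx with hx | hx
  · exact Finset.mem_union_left _ (hD x hx v hv)
  · exact Finset.mem_union_right _ (hD' x hx v hv)

lemma SupportedOn.insert [DecidableEq V] {C : Finset V} {u v : V} (hD : D.SupportedOn C)
    (hu : u ∈ C) (hv : v ∈ C) (c : Fin r) : SupportedOn (insert (s(u, v), c) D) C := by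
  intro x hx w hw
  rcases Finset.mem_insert.1 hx with rfl | hx
  · rcases Sym2.mem_iff.1 hw with rfl | rfl <;> assumption
  · exact hD x hx w hw

lemma mk_mem_relabel {f : V ↪ W} {u v : V} {c : Fin r} :
    (s(f u, f v), c) ∈ D.relabel f ↔ (s(u, v), c) ∈ D := by
  rw [relabel, show (s(f u, f v), c) = (f.sym2Map.prodMap (.refl _)) (s(u, v), c) from rfl,
    Finset.mem_map']

lemma colorClass_relabel_adj {f : V ↪ W} {u v : V} {c : Fin r} :
    ((D.relabel f).colorClass c).Adj (f u) (f v) ↔ (D.colorClass c).Adj u v := by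
  simp only [colorClass_adj, mk_mem_relabel, ne_eq, f.injective.eq_iff]

lemma relabel_insert [DecidableEq V] [DecidableEq W] (f : V ↪ W) (u v : V) (c : Fin r) :
    relabel f (insert (s(u, v), c) D) = insert (s(f u, f v), c) (D.relabel f) :=
  Finset.map_insert ..

lemma map_colorClass_le (f : V ↪ W) (D : ColoredBoard V r) (c : Fin r) :
    (D.colorClass c).map f ≤ (D.relabel f).colorClass c := by
  rintro _ _ ⟨-, u, v, huv, rfl, rfl⟩
  exact colorClass_relabel_adj.2 huv

lemma supportedOn_relabel [Fintype V] (f : V ↪ W) (D : ColoredBoard V r) :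
    (D.relabel f).SupportedOn (Finset.univ.map f) := by
  intro x hx v hv
  obtain ⟨⟨e, c⟩, -, rfl⟩ := Finset.mem_map.1 hx
  obtain ⟨w, -, rfl⟩ := Sym2.mem_map.1 hv
  exact Finset.mem_map_of_mem f (Finset.mem_univ w)

end ColorClass

section EdgeCount

variable {V W : Type} [DecidableEq V] [DecidableEq W] {r : ℕ} {D D' : ColoredBoard V r}

lemma edgeCount_mono (h : D ⊆ D') (S : Finset V) : D.edgeCount S ≤ D'.edgeCount S :=
  Finset.card_le_card (Finset.filter_subset_filter _ h)

lemma edgeCount_empty (D : ColoredBoard V r) : D.edgeCount ∅ = 0 := by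
  simp [edgeCount]

lemma edgeCount_union_le (D D' : ColoredBoard V r) (S : Finset V) :
    edgeCount (D ∪ D') S ≤ D.edgeCount S + D'.edgeCount S := by
  rw [edgeCount, Finset.filter_union]
  exact Finset.card_union_le _ _

lemma edgeCount_insert_le (D : ColoredBoard V r) (u v : V) (c : Fin r) (S : Finset V) :
    edgeCount (insert (s(u, v), c) D) S ≤ D.edgeCount S + if u ∈ S ∧ v ∈ S then 1 else 0 := by
  simp only [edgeCount, Finset.filter_insert, Finset.mk_mem_sym2_iff]
  split_ifs
  · exact Finset.card_insert_le _ _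
  · exact le_rfl

lemma edgeCount_subset {S T : Finset V} (h : S ⊆ T) (D : ColoredBoard V r) :
    D.edgeCount S ≤ D.edgeCount T :=
  Finset.card_le_card (Finset.monotone_filter_right _ fun _ _ hx ↦ Finset.sym2_mono h hx)

lemma edgeCount_sdiff_add_edgeCount (h : D ⊆ D') (S : Finset V) :
    edgeCount (D' \ D) S + D.edgeCount S = D'.edgeCount S := by
  rw [edgeCount, edgeCount, ← Finset.card_union_of_disjoint
    (Finset.disjoint_filter_filter Finset.sdiff_disjoint), ← Finset.filter_union,
    Finset.sdiff_union_of_subset h, edgeCount]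

lemma SupportedOn.edgeCount_eq_card {C : Finset V} (hD : D.SupportedOn C) :
    D.edgeCount C = #D := by
  rw [edgeCount, Finset.filter_true_of_mem fun _ hx ↦ Finset.mem_sym2_iff.2 (hD _ hx)]

lemma SupportedOn.edgeCount_inter {C : Finset V} (hD : D.SupportedOn C) (S : Finset V) :
    D.edgeCount (S ∩ C) = D.edgeCount S := by
  unfold edgeCount
  congr 1
  refine Finset.filter_congr fun x hx ↦ ?_
  simp only [Finset.mem_sym2_iff, Finset.mem_inter]
  exact ⟨fun h v hv ↦ (h v hv).1, fun h v hv ↦ ⟨h v hv, hD x hx v hv⟩⟩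

lemma SupportedOn.edgeCount_sdiff {C C' : Finset V} (hD : D.SupportedOn C') (h : Disjoint C C')
    (S : Finset V) : D.edgeCount (S \ C) = D.edgeCount S := by
  rw [← hD.edgeCount_inter, ← hD.edgeCount_inter S, Finset.sdiff_inter_right_comm,
    sdiff_eq_left.2 (h.symm.mono_left Finset.inter_subset_right)]

lemma edgeCount_relabel (f : V ↪ W) (D : ColoredBoard V r) (S : Finset W) :
    (D.relabel f).edgeCount S = D.edgeCount (S.preimage f f.injective.injOn) := by
  rw [edgeCount, relabel, Finset.filter_map, Finset.card_map, edgeCount]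
  congr 1
  refine Finset.filter_congr fun ⟨e, c⟩ _ ↦ ?_
  induction e with
  | _ u v => simp

end EdgeCount

section Slack

variable {V W : Type} [DecidableEq V] [DecidableEq W] {r : ℕ} {D D' : ColoredBoard V r}
  {C C' S : Finset V} {u v : V} {d d' t t' : ℝ}

lemma slack_empty (d : ℝ) (D : ColoredBoard V r) : slack d D ∅ = 0 := by
  simp [slack, edgeCount_empty]

lemma slack_le_slack (h : d ≤ d') (D : ColoredBoard V r) (S : Finset V) :
    slack d D S ≤ slack d' D S := by
  unfold slack
  gcongr

lemma slack_anti (h : D ⊆ D') (d : ℝ) (S : Finset V) : slack d D' S ≤ slack d D S :=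
  sub_le_sub_left (mod_cast edgeCount_mono h S) _

lemma slack_sub_le_slack_insert (d : ℝ) (D : ColoredBoard V r) (u v : V) (c : Fin r)
    (S : Finset V) :
    slack d D S - (if u ∈ S ∧ v ∈ S then 1 else 0) ≤ slack d (insert (s(u, v), c) D) S := by
  have h : (edgeCount (insert (s(u, v), c) D) S : ℝ) ≤
      D.edgeCount S + if u ∈ S ∧ v ∈ S then 1 else 0 :=
    mod_cast edgeCount_insert_le D u v c S
  unfold slack
  linarith

lemma slack_add_slack_le_slack_union (hD : D.SupportedOn C) (hD' : D'.SupportedOn C')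
    (hCC' : Disjoint C C') (d : ℝ) (S : Finset V) :
    slack d D (S ∩ C) + slack d D' (S \ C) ≤ slack d (D ∪ D') S := by
  have hcard : (#(S ∩ C) + #(S \ C) : ℝ) = #S := mod_cast Finset.card_inter_add_card_sdiff S C
  have hedge : (edgeCount (D ∪ D') S : ℝ) ≤ D.edgeCount S + D'.edgeCount S :=
    mod_cast edgeCount_union_le D D' S
  rw [slack, slack, slack, hD.edgeCount_inter, hD'.edgeCount_sdiff hCC', ← hcard]
  linarith

lemma slack_add_slack_sub_le_slack_join (hD : D.SupportedOn C) (hD' : D'.SupportedOn C')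
    (hCC' : Disjoint C C') (d : ℝ) (u v : V) (c : Fin r) (S : Finset V) :
    slack d D (S ∩ C) + slack d D' (S \ C) - (if u ∈ S ∧ v ∈ S then 1 else 0) ≤
      slack d (insert (s(u, v), c) (D ∪ D')) S :=
  (sub_le_sub_right (slack_add_slack_le_slack_union hD hD' hCC' d S) _).trans
    (slack_sub_le_slack_insert d _ u v c S)

lemma HasSlack.anti (h : HasSlack d t' D) (ht : t ≤ t') : HasSlack d t D :=
  fun S hS ↦ ht.trans (h S hS)

lemma HasSlack.mono_density (h : HasSlack d t D) (hd : d ≤ d') : HasSlack d' t D :=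
  fun S hS ↦ (h S hS).trans (slack_le_slack hd D S)

lemma HasSlack.slack_nonneg (h : HasSlack d 0 D) (S : Finset V) : 0 ≤ slack d D S := by
  rcases S.eq_empty_or_nonempty with rfl | hS
  · exact (slack_empty d D).ge
  · exact h S hS

lemma hasSlack_empty (hd : 0 ≤ d) : HasSlack d d (∅ : ColoredBoard V r) := by
  intro S hS
  have : (1 : ℝ) ≤ #S := mod_cast hS.card_pos
  simpa [slack, edgeCount] using le_mul_of_one_le_right hd this

lemma HasSlack.union (hD : HasSlack d t D) (hD' : HasSlack d t D') (hC : D.SupportedOn C)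
    (hC' : D'.SupportedOn C') (hCC' : Disjoint C C') (ht : 0 ≤ t) : HasSlack d t (D ∪ D') := by
  intro S hS
  have hle := slack_add_slack_le_slack_union hC hC' hCC' d S
  have h₁ := (hD.anti ht).slack_nonneg (S ∩ C)
  have h₂ := (hD'.anti ht).slack_nonneg (S \ C)
  rcases (S ∩ C).eq_empty_or_nonempty with hSC | hSC
  · have := hD' (S \ C) (by rwa [Finset.sdiff_eq_self_of_disjoint
      (Finset.disjoint_iff_inter_eq_empty.2 hSC)])
    linarith
  · have := hD _ hSC
    linarith

lemma HasSlack.add_sub_one_le_slack_join (hD : HasSlack d t D) (hD' : HasSlack d t' D')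
    (hC : D.SupportedOn C) (hC' : D'.SupportedOn C') (hCC' : Disjoint C C') (hu : u ∈ C)
    (hv : v ∈ C') (c : Fin r) (huS : u ∈ S) (hvS : v ∈ S) :
    t + t' - 1 ≤ slack d (insert (s(u, v), c) (D ∪ D')) S := by
  have hle := slack_add_slack_sub_le_slack_join hC hC' hCC' d u v c S
  have h₁ := hD (S ∩ C) ⟨u, Finset.mem_inter.2 ⟨huS, hu⟩⟩
  have h₂ := hD' (S \ C) ⟨v, Finset.mem_sdiff.2 ⟨hvS, Finset.disjoint_right.1 hCC' hv⟩⟩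
  rw [if_pos ⟨huS, hvS⟩] at hle
  linarith

lemma HasSlack.join (hD : HasSlack d t D) (hD' : HasSlack d t D') (hC : D.SupportedOn C)
    (hC' : D'.SupportedOn C') (hCC' : Disjoint C C') (ht : 1 ≤ t) (hu : u ∈ C) (hv : v ∈ C')
    (c : Fin r) : HasSlack d t (insert (s(u, v), c) (D ∪ D')) := by
  intro S hS
  by_cases h : u ∈ S ∧ v ∈ S
  · linarith [hD.add_sub_one_le_slack_join hD' hC hC' hCC' hu hv c h.1 h.2]
  · have h₁ := hD.union hD' hC hC' hCC' (zero_le_one.trans ht) S hS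
    have h₂ := slack_sub_le_slack_insert d (D ∪ D') u v c S
    rw [if_neg h] at h₂
    linarith

lemma HasSlack.of_relabel {f : V ↪ W} (h : HasSlack d t (D.relabel f)) : HasSlack d t D := by
  intro S hS
  simpa [slack, edgeCount_relabel] using h (S.map f) (hS.map)

end Slack

end ColoredBoard

open ColoredBoard

section Transfer

variable {α : Type} {F : SimpleGraph α} {a r : ℕ} {d : ℝ}

/-- Builder can force a monochromatic copy of `F` from the given position on the unbounded vertex
set `ℕ`, keeping the maximum density at most `d`. -/
inductive BuilderWinsFrom (F : SimpleGraph α) (d : ℝ) : ColoredBoard ℕ r → Prop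
  | of_containsMono {A : ColoredBoard ℕ r} : A.ContainsMono F → BuilderWinsFrom F d A
  | play {A : ColoredBoard ℕ r} {u v : ℕ} : u ≠ v → (∀ c, (s(u, v), c) ∉ A) →
      (∀ c, HasSlack d 0 (insert (s(u, v), c) A)) →
      (∀ c, BuilderWinsFrom F d (insert (s(u, v), c) A)) → BuilderWinsFrom F d A

/-- The board reached by a history on the vertices `0, …, a - 1`, viewed on the vertex set `ℕ`. -/
def historyBoard (h : EdgeHistory (Fin a) r) : ColoredBoard ℕ r :=
  relabel Fin.valEmbedding h.toFinset

lemma mk_mem_historyBoard {h : EdgeHistory (Fin a) r} {u v : Fin a} {c : Fin r} :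
    (s((u : ℕ), (v : ℕ)), c) ∈ historyBoard h ↔ (s(u, v), c) ∈ h :=
  (mk_mem_relabel (f := Fin.valEmbedding)).trans List.mem_toFinset

lemma historyBoard_concat (h : EdgeHistory (Fin a) r) (u v : Fin a) (c : Fin r) :
    historyBoard (h ++ [(s(u, v), c)]) = insert (s((u : ℕ), (v : ℕ)), c) (historyBoard h) := by
  rw [historyBoard, List.toFinset_append, List.toFinset_cons, List.toFinset_nil,
    insert_empty_eq, Finset.union_singleton]
  exact relabel_insert ..

lemma densityLE_boardOf {h : EdgeHistory (Fin a) r} (hd : HasSlack d 0 (historyBoard h)) :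
    DensityLE (boardOf (h.map Prod.fst)) d := by
  intro S hS
  have hedges : edgesWithin (boardOf (h.map Prod.fst)) (S : Set (Fin a)) ≤
      edgeCount h.toFinset S := by
    have hsub : (boardOf (h.map Prod.fst)).edgeSet ∩ {e | ∀ v ∈ e, v ∈ (S : Set (Fin a))} ⊆
        (({x ∈ h.toFinset | x.1 ∈ S.sym2}.image Prod.fst : Finset _) : Set (Sym2 (Fin a))) := by
      rintro e ⟨he, heS⟩
      obtain ⟨x, hx, rfl⟩ : ∃ x ∈ h, x.1 = e := by
        rw [boardOf, edgeSet_fromEdgeSet] at he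
        exact List.mem_map.1 he.1
      rw [Finset.mem_coe]
      exact Finset.mem_image_of_mem _
        (Finset.mem_filter.2 ⟨List.mem_toFinset.2 hx, Finset.mem_sym2_iff.2 heS⟩)
    refine (Set.ncard_le_ncard hsub (Finset.finite_toSet _)).trans ?_
    rw [Set.ncard_coe_finset]
    exact Finset.card_image_le
  have hslack : 0 ≤ slack d h.toFinset S := hd.of_relabel S hS
  have : (edgesWithin (boardOf (h.map Prod.fst)) (S : Set (Fin a)) : ℝ) ≤
    edgeCount h.toFinset S := mod_cast hedges
  rw [slack] at hslack
  linarith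

lemma hasMonoCopy_of_containsMono {h : EdgeHistory (Fin a) r} {c : Fin r} {f : α ↪ ℕ}
    (hf : ∀ i j, F.Adj i j → ((historyBoard h).colorClass c).Adj (f i) (f j))
    (ha : ∀ i, f i < a) : HasMonoCopy F h := by
  refine ⟨c, ⟨fun i ↦ ⟨f i, ha i⟩, fun i j hij ↦ f.injective (Fin.mk.inj_iff.1 hij)⟩, ?_⟩
  intro i j hij
  obtain ⟨hmem, hne⟩ := colorClass_adj.1 (hf i j hij)
  exact (fromEdgeSet_adj _).2
    ⟨mk_mem_historyBoard (u := ⟨f i, ha i⟩) (v := ⟨f j, ha j⟩) |>.1 hmem,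
      fun h ↦ hne (Fin.mk.inj_iff.1 h)⟩

lemma ValidEdgeSeq.concat {V : Type} {l : List (Sym2 V)} {e : Sym2 V} (hl : ValidEdgeSeq l)
    (he : e ∉ l) (hdiag : ¬e.IsDiag) : ValidEdgeSeq (l ++ [e]) := by
  refine ⟨?_, ?_⟩
  · rw [← List.concat_eq_append]
    exact hl.1.concat he
  · simpa [or_imp, forall_and, hdiag] using hl.2

lemma BuilderWinsFrom.exists_continuation [Finite α] {A : ColoredBoard ℕ r}
    (hA : BuilderWinsFrom F d A) (hd : HasSlack d 0 A) :
    ∃ a₀, ∀ a ≥ a₀, ∀ (π : PainterStrategy (Fin a) r) (h : EdgeHistory (Fin a) r),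
      historyBoard h = A → ValidEdgeSeq (h.map Prod.fst) →
      ∃ l, ValidEdgeSeq (h.map Prod.fst ++ l) ∧
        (∀ i, DensityLE (boardOf (h.map Prod.fst ++ l.take i)) d) ∧
        HasMonoCopy F (runPainterAux π h l) := by
  induction hA with
  | @of_containsMono A hF =>
    obtain ⟨c, f, hf⟩ := hF
    obtain ⟨b, hb⟩ := (Set.finite_range f).bddAbove
    refine ⟨b + 1, fun a ha π h hh hvalid ↦ ⟨[], by simpa using hvalid, fun i ↦ ?_, ?_⟩⟩
    · simpa using densityLE_boardOf (hh ▸ hd)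
    · exact hasMonoCopy_of_containsMono (hh ▸ hf)
        fun i ↦ (Nat.lt_succ_of_le (hb (Set.mem_range_self i))).trans_le ha
  | @play A u v huv hfresh hdens _ ih =>
    choose n hn using fun c ↦ ih c (hdens c)
    refine ⟨Finset.univ.sup n + u + v + 1, fun a ha π h hh hvalid ↦ ?_⟩
    let e : Sym2 (Fin a) := s(⟨u, by omega⟩, ⟨v, by omega⟩)
    have hna : n (π h e) ≤ a := (Finset.le_sup (Finset.mem_univ _)).trans (by omega)
    have hnew : e ∉ h.map Prod.fst := by
      rintro he
      obtain ⟨⟨e', c⟩, hmem, rfl : e' = e⟩ := List.mem_map.1 he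
      exact hfresh c (hh ▸ mk_mem_historyBoard.2 hmem)
    have hvalid' : ValidEdgeSeq ((h ++ [(e, π h e)]).map Prod.fst) := by
      rw [List.map_append]
      exact hvalid.concat hnew (by simpa [e] using huv)
    obtain ⟨l, hl, hdens', hcopy⟩ := hn (π h e) a hna π (h ++ [(e, π h e)])
      (by rw [historyBoard_concat, hh]) hvalid'
    refine ⟨e :: l, by simpa using hl, fun i ↦ ?_, hcopy⟩
    cases i with
    | zero => simpa using densityLE_boardOf (hh ▸ hd)
    | succ i => simpa using hdens' i

theorem builderWinsDensity_of_builderWinsFrom_empty [Finite α] (hd : 0 ≤ d)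
    (h : BuilderWinsFrom F d (∅ : ColoredBoard ℕ r)) : BuilderWinsDensity F r d := by
  obtain ⟨a, ha⟩ := h.exists_continuation ((hasSlack_empty hd).anti hd)
  refine ⟨a, fun π ↦ ?_⟩
  obtain ⟨l, hl, hdens, hcopy⟩ := ha a le_rfl π [] rfl ⟨List.nodup_nil, by simp⟩
  exact ⟨l, hl, hdens, hcopy⟩

end Transfer

/-- A position from which Builder cannot force a monochromatic copy of `F`, together with a finite
set of vertices that have been used so far. -/
structure SafePosition {α : Type} (F : SimpleGraph α) (r : ℕ) (d : ℝ) where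
  board : ColoredBoard ℕ r
  used : Finset ℕ
  supportedOn : board.SupportedOn used
  hasSlack : HasSlack d 0 board
  not_builderWinsFrom : ¬BuilderWinsFrom F d board

/-- A type of component: a property of a colored board `D` on a vertex set `C`. -/
abbrev Gadget (r : ℕ) := Finset ℕ → ColoredBoard ℕ r → Prop

/-- The disjoint union of a component of type `T` and one of type `T'`. -/
def Gadget.disjUnion {r : ℕ} (T T' : Gadget r) : Gadget r := fun C D ↦
  ∃ C₁ C₂ D₁ D₂, C = C₁ ∪ C₂ ∧ D = D₁ ∪ D₂ ∧ Disjoint C₁ C₂ ∧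
    D₁.SupportedOn C₁ ∧ D₂.SupportedOn C₂ ∧ T C₁ D₁ ∧ T' C₂ D₂

/-- Builder may present the edge `uv` inside a component `D`: it is new, and the density bound
survives. -/
structure Playable {r : ℕ} (d : ℝ) (D : ColoredBoard ℕ r) (u v : ℕ) : Prop where
  ne : u ≠ v
  fresh : ∀ c, (s(u, v), c) ∉ D
  one_le_slack : ∀ S, u ∈ S → v ∈ S → 1 ≤ slack d D S

namespace SafePosition

variable {α : Type} {F : SimpleGraph α} {r : ℕ} {d : ℝ} {s t : SafePosition F r d}
  {C C' : Finset ℕ} {D D' : ColoredBoard ℕ r}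

/-- `s ≤ t` if `t` arises from `s` by adding vertices and edges among the added vertices. -/
instance : Preorder (SafePosition F r d) where
  le s t := s.board ⊆ t.board ∧ s.used ⊆ t.used ∧
    SupportedOn (t.board \ s.board) (t.used \ s.used)
  le_refl s := ⟨subset_rfl, subset_rfl, by simp [SupportedOn]⟩
  le_trans s t u := fun ⟨hst, hst', hst''⟩ ⟨htu, htu', htu''⟩ ↦ by
    refine ⟨hst.trans htu, hst'.trans htu', fun x hx v hv ↦ ?_⟩
    rw [Finset.mem_sdiff] at hx ⊢
    by_cases hxt : x ∈ t.board
    · have := Finset.mem_sdiff.1 (hst'' x (Finset.mem_sdiff.2 ⟨hxt, hx.2⟩) v hv)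
      exact ⟨htu' this.1, this.2⟩
    · have := Finset.mem_sdiff.1 (htu'' x (Finset.mem_sdiff.2 ⟨hx.1, hxt⟩) v hv)
      exact ⟨this.1, fun hvs ↦ this.2 (hst' hvs)⟩

lemma board_subset (h : s ≤ t) : s.board ⊆ t.board := h.1

lemma used_subset (h : s ≤ t) : s.used ⊆ t.used := h.2.1

lemma supportedOn_sdiff (h : s ≤ t) : SupportedOn (t.board \ s.board) (t.used \ s.used) := h.2.2

/-- The edges `D` form the part of the board within `C`, and no edge joins `C` to its complement. -/
structure HasComponent (s : SafePosition F r d) (C : Finset ℕ) (D : ColoredBoard ℕ r) : Prop where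
  board_subset : D ⊆ s.board
  used_subset : C ⊆ s.used
  supportedOn : D.SupportedOn C
  supportedOn_sdiff : SupportedOn (s.board \ D) (s.used \ C)

lemma HasComponent.of_le (h : s.HasComponent C D) (hst : s ≤ t) : t.HasComponent C D where
  board_subset := h.board_subset.trans (SafePosition.board_subset hst)
  used_subset := h.used_subset.trans (SafePosition.used_subset hst)
  supportedOn := h.supportedOn
  supportedOn_sdiff x hx v hv := by
    rw [Finset.mem_sdiff] at hx ⊢
    by_cases hxs : x ∈ s.board
    · have := Finset.mem_sdiff.1 (h.supportedOn_sdiff x (Finset.mem_sdiff.2 ⟨hxs, hx.2⟩) v hv)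
      exact ⟨SafePosition.used_subset hst this.1, this.2⟩
    · have := Finset.mem_sdiff.1
        (SafePosition.supportedOn_sdiff hst x (Finset.mem_sdiff.2 ⟨hx.1, hxs⟩) v hv)
      exact ⟨this.1, fun hvC ↦ this.2 (h.used_subset hvC)⟩

lemma HasComponent.union (h : s.HasComponent C D) (h' : s.HasComponent C' D') :
    s.HasComponent (C ∪ C') (D ∪ D') where
  board_subset := Finset.union_subset h.board_subset h'.board_subset
  used_subset := Finset.union_subset h.used_subset h'.used_subset
  supportedOn := h.supportedOn.union h'.supportedOn
  supportedOn_sdiff x hx v hv := by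
    simp only [Finset.mem_sdiff, Finset.mem_union, not_or] at hx ⊢
    have hC := Finset.mem_sdiff.1
      (h.supportedOn_sdiff x (Finset.mem_sdiff.2 ⟨hx.1, hx.2.1⟩) v hv)
    have hC' := Finset.mem_sdiff.1
      (h'.supportedOn_sdiff x (Finset.mem_sdiff.2 ⟨hx.1, hx.2.2⟩) v hv)
    exact ⟨hC.1, hC.2, hC'.2⟩

lemma HasComponent.union_sdiff (h : s.HasComponent C D) : D ∪ s.board \ D = s.board :=
  Finset.union_sdiff_of_subset h.board_subset

lemma HasComponent.notMem_board (h : s.HasComponent C D) {u v : ℕ} (hu : u ∈ C)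
    (hD : ∀ c, (s(u, v), c) ∉ D) (c : Fin r) : (s(u, v), c) ∉ s.board := by
  intro hs
  have := h.supportedOn_sdiff _ (Finset.mem_sdiff.2 ⟨hs, hD c⟩) u (Sym2.mem_mk_left u v)
  exact (Finset.mem_sdiff.1 this).2 hu

lemma HasComponent.hasSlack_insert (h : s.HasComponent C D) {u v : ℕ} (hu : u ∈ C) (hv : v ∈ C)
    (hD : ∀ S, u ∈ S → v ∈ S → 1 ≤ slack d D S) (c : Fin r) :
    HasSlack d 0 (insert (s(u, v), c) s.board) := by
  intro S _
  by_cases huv : u ∈ S ∧ v ∈ S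
  · have hle := slack_add_slack_sub_le_slack_join h.supportedOn h.supportedOn_sdiff
      Finset.disjoint_sdiff d u v c S
    rw [h.union_sdiff, if_pos huv] at hle
    have hinner : 1 ≤ slack d D (S ∩ C) :=
      hD _ (Finset.mem_inter.2 ⟨huv.1, hu⟩) (Finset.mem_inter.2 ⟨huv.2, hv⟩)
    have houter : 0 ≤ slack d (s.board \ D) (S \ C) :=
      (s.hasSlack.slack_nonneg _).trans (slack_anti Finset.sdiff_subset d _)
    linarith
  · have hle := slack_sub_le_slack_insert d s.board u v c S
    rw [if_neg huv, sub_zero] at hle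
    exact (s.hasSlack.slack_nonneg S).trans hle

lemma HasComponent.exists_insert (h : s.HasComponent C D) {u v : ℕ} (hu : u ∈ C) (hv : v ∈ C)
    (huv : Playable d D u v) :
    ∃ (c : Fin r) (t : SafePosition F r d), t.board = insert (s(u, v), c) s.board ∧
      t.used = s.used ∧ t.HasComponent C (insert (s(u, v), c) D) := by
  obtain ⟨c, hc⟩ : ∃ c, ¬BuilderWinsFrom F d (insert (s(u, v), c) s.board) := by
    by_contra! hwin
    exact s.not_builderWinsFrom <| .play huv.ne (h.notMem_board hu huv.fresh)
      (h.hasSlack_insert hu hv huv.one_le_slack) hwin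
  refine ⟨c, ⟨_, s.used, s.supportedOn.insert (h.used_subset hu) (h.used_subset hv) c,
    h.hasSlack_insert hu hv huv.one_le_slack c, hc⟩, rfl, rfl,
    ⟨Finset.insert_subset_insert _ h.board_subset, h.used_subset, h.supportedOn.insert hu hv c,
      fun x hx ↦ h.supportedOn_sdiff x ?_⟩⟩
  simp only [Finset.mem_sdiff, Finset.mem_insert, not_or] at hx ⊢
  exact ⟨hx.1.resolve_left hx.2.1, hx.2.2⟩

/-- Some safe extension of `s` has a component of type `T` on vertices not used by `s`. -/
def Constructible (s : SafePosition F r d) (T : Gadget r) : Prop :=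
  ∃ t ≥ s, ∃ C D, Disjoint C s.used ∧ t.HasComponent C D ∧ T C D

/-- From every safe extension of `s`, a component of type `T` can be built on unused vertices.
Components which are available at the same position can thus be built side by side, arbitrarily
often. -/
def Available (s : SafePosition F r d) (T : Gadget r) : Prop :=
  ∀ t ≥ s, t.Constructible T

variable {T T' : Gadget r}

lemma Constructible.of_ge (h : t.Constructible T) (hst : s ≤ t) : s.Constructible T := by
  obtain ⟨u, hu, C, D, hC, hCD⟩ := h
  exact ⟨u, hst.trans hu, C, D, hC.mono_right (used_subset hst), hCD⟩

lemma Available.of_le (h : s.Available T) (hst : s ≤ t) : t.Available T :=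
  fun u hu ↦ h u (hst.trans hu)

lemma Available.mono (h : s.Available T) (hT : ∀ C D, D.SupportedOn C → T C D → T' C D) :
    s.Available T' := by
  intro t ht
  obtain ⟨u, hu, C, D, hC, hcomp, hCD⟩ := h t ht
  exact ⟨u, hu, C, D, hC, hcomp, hT C D hcomp.supportedOn hCD⟩

lemma available_vertex (s : SafePosition F r d) : s.Available fun C D ↦ ∃ v, C = {v} ∧ D = ∅ := by
  intro t _
  obtain ⟨v, hv⟩ := Infinite.exists_notMem_finset t.used
  let u : SafePosition F r d := { t with
    used := insert v t.used
    supportedOn := t.supportedOn.mono (Finset.subset_insert v _) }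
  refine ⟨u, ⟨subset_rfl, Finset.subset_insert v _, by simp [u, SupportedOn]⟩, {v}, ∅, by simpa,
    ⟨Finset.empty_subset _, by simp [u], by simp [SupportedOn], fun x hx w hw ↦ ?_⟩, v, rfl, rfl⟩
  have hw' : w ∈ t.used := t.supportedOn x (by simpa [u] using hx) w hw
  simp only [u, Finset.mem_sdiff, Finset.mem_insert, Finset.mem_singleton]
  exact ⟨.inr hw', fun h ↦ hv (h ▸ hw')⟩

lemma Available.disjUnion (h : s.Available T) (h' : s.Available T') :
    s.Available (T.disjUnion T') := by
  intro t ht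
  obtain ⟨u, hu, C, D, hC, hcomp, hT⟩ := h t ht
  obtain ⟨w, hw, C', D', hC', hcomp', hT'⟩ := h' u (ht.trans hu)
  refine ⟨w, hu.trans hw, C ∪ C', D ∪ D', ?_, (hcomp.of_le hw).union hcomp',
    C, C', D, D', rfl, rfl, (hC'.mono_right hcomp.used_subset).symm, hcomp.supportedOn,
    hcomp'.supportedOn, hT, hT'⟩
  exact Finset.disjoint_union_left.2 ⟨hC, hC'.mono_right (used_subset hu)⟩

lemma Available.exists_of_exists {ι : Type} [Finite ι] {T : ι → Gadget r}
    (h : s.Available fun C D ↦ ∃ i, T i C D) : ∃ t ≥ s, ∃ i, t.Available (T i) := by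
  by_contra! hnot
  have hfail (K : Set ι) : ∃ t ≥ s, ∀ i ∈ K, ¬t.Constructible (T i) := by
    induction K, K.toFinite using Set.Finite.induction_on with
    | empty => exact ⟨s, le_rfl, by simp⟩
    | @insert i K _ _ ih =>
      obtain ⟨t, hst, ht⟩ := ih
      obtain ⟨u, htu, hu⟩ : ∃ u ≥ t, ¬u.Constructible (T i) := by
        simpa [Available] using hnot t hst i
      exact ⟨u, hst.trans htu,
        Set.forall_mem_insert.2 ⟨hu, fun j hj hju ↦ ht j hj (hju.of_ge htu)⟩⟩
  obtain ⟨t, hst, ht⟩ := hfail Set.univ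
  obtain ⟨u, htu, C, D, hC, hcomp, i, hi⟩ := h t hst
  exact ht i trivial ⟨u, htu, C, D, hC, hcomp, hi⟩

lemma Available.exists_insert {T' : Fin r → Gadget r} (h : s.Available T)
    (hT : ∀ C D, D.SupportedOn C → T C D →
      ∃ u ∈ C, ∃ v ∈ C, Playable d D u v ∧ ∀ c, T' c C (insert (s(u, v), c) D)) :
    ∃ t ≥ s, ∃ c, t.Available (T' c) := by
  refine Available.exists_of_exists fun t ht ↦ ?_
  obtain ⟨w, htw, C, D, hC, hcomp, hCD⟩ := h t ht
  obtain ⟨u, hu, v, hv, huv, hT'⟩ := hT C D hcomp.supportedOn hCD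
  obtain ⟨c, w', hboard, hused, hcomp'⟩ := hcomp.exists_insert hu hv huv
  refine ⟨w', ⟨?_, ?_, ?_⟩, C, _, hC, hcomp', c, hT' c⟩
  · rw [hboard]
    exact (board_subset htw).trans (Finset.subset_insert _ _)
  · exact hused ▸ used_subset htw
  · have hC' : C ⊆ w.used \ t.used := Finset.subset_sdiff.2 ⟨hcomp.used_subset, hC⟩
    rw [hboard, hused]
    exact fun x hx ↦ (supportedOn_sdiff htw).insert (hC' hu) (hC' hv) c x (by grind)

lemma not_available_of_containsMono (hT : ∀ C D, T C D → D.ContainsMono F) : ¬s.Available T := by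
  intro h
  obtain ⟨t, -, C, D, -, hcomp, hCD⟩ := h s le_rfl
  exact t.not_builderWinsFrom <|
    .of_containsMono ((hT C D hCD).mono hcomp.board_subset)

lemma Available.exists_insert_of_threat {x y : Fin r} (hxy : ∀ c, c ≠ y → c = x)
    (h : s.Available T)
    (hT : ∀ C D, D.SupportedOn C → T C D → ∃ u ∈ C, ∃ v ∈ C, Playable d D u v ∧
      ContainsMono F (insert (s(u, v), x) D) ∧ T' C (insert (s(u, v), y) D)) :
    ∃ t ≥ s, t.Available T' := by
  obtain ⟨t, hst, c, hc⟩ := h.exists_insert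
    (T' := fun c C D ↦ if c = y then T' C D else D.ContainsMono F) fun C D hD hCD ↦ by
      obtain ⟨u, hu, v, hv, huv, hx, hy⟩ := hT C D hD hCD
      refine ⟨u, hu, v, hv, huv, fun c ↦ ?_⟩
      split_ifs with hcy
      · exact hcy ▸ hy
      · exact hxy c hcy ▸ hx
  by_cases hcy : c = y
  · exact ⟨t, hst, by simpa only [if_pos hcy] using hc⟩
  · simp only [if_neg hcy] at hc
    exact absurd hc (not_available_of_containsMono fun _ _ ↦ id)

end SafePosition

section Join

variable {r : ℕ} {d t t' : ℝ} {D D' : ColoredBoard ℕ r} {C C' : Finset ℕ} {u v : ℕ}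

lemma mk_notMem_union_of_disjoint (hC : D.SupportedOn C) (hC' : D'.SupportedOn C')
    (hCC' : Disjoint C C') (hu : u ∈ C) (hv : v ∈ C') (c : Fin r) : (s(u, v), c) ∉ D ∪ D' := by
  intro h
  rcases Finset.mem_union.1 h with h | h
  · exact Finset.disjoint_left.1 hCC' (hC _ h v (Sym2.mem_mk_right u v)) hv
  · exact Finset.disjoint_left.1 hCC' hu (hC' _ h u (Sym2.mem_mk_left u v))

lemma playable_union (hD : HasSlack d t D) (hD' : HasSlack d t' D') (htt' : 1 ≤ t + t')
    (hC : D.SupportedOn C) (hC' : D'.SupportedOn C') (hCC' : Disjoint C C') (hu : u ∈ C)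
    (hv : v ∈ C') : Playable d (D ∪ D') u v where
  ne := fun huv ↦ Finset.disjoint_left.1 hCC' hu (huv ▸ hv)
  fresh := mk_notMem_union_of_disjoint hC hC' hCC' hu hv
  one_le_slack S huS hvS := by
    have hle := slack_add_slack_le_slack_union hC hC' hCC' d S
    have h₁ := hD (S ∩ C) ⟨u, Finset.mem_inter.2 ⟨huS, hu⟩⟩
    have h₂ := hD' (S \ C) ⟨v, Finset.mem_sdiff.2 ⟨hvS, Finset.disjoint_right.1 hCC' hv⟩⟩
    linarith

end Join

section MonochromaticPath

/-- The list `l` enumerates the vertices of a path in color `c`, all of them in `C`. -/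
structure IsMonoPath (c : Fin 2) (C : Finset ℕ) (D : ColoredBoard ℕ 2) (l : List ℕ) : Prop where
  nodup : l.Nodup
  mem : ∀ v ∈ l, v ∈ C
  isChain : l.IsChain (D.colorClass c).Adj

/-- A forest containing a path on `n` vertices in color `c`. -/
def PathGadget (c : Fin 2) (n : ℕ) : Gadget 2 := fun C D ↦
  HasSlack 1 1 D ∧ ∃ l : List ℕ, l.length = n ∧ IsMonoPath c C D l

variable {α : Type} {F : SimpleGraph α} {d : ℝ}

lemma SafePosition.available_pathGadget_one (s : SafePosition F 2 d) (c : Fin 2) :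
    s.Available (PathGadget c 1) := by
  refine s.available_vertex.mono ?_
  rintro _ _ - ⟨v, rfl, rfl⟩
  exact ⟨hasSlack_empty zero_le_one, [v], rfl, List.nodup_singleton v, by simp, .singleton v⟩

lemma IsMonoPath.cons {c : Fin 2} {C C' : Finset ℕ} {D D' : ColoredBoard ℕ 2} {u v : ℕ}
    {l : List ℕ} (h : IsMonoPath c C D (v :: l)) (hC : C ⊆ C') (hD : D ⊆ D') (hu : u ∈ C')
    (huC : u ∉ C) (huv : (s(u, v), c) ∈ D') : IsMonoPath c C' D' (u :: v :: l) := by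
  have hnew : u ∉ v :: l := fun hmem ↦ huC (h.mem u hmem)
  refine ⟨h.nodup.cons hnew, List.forall_mem_cons.2 ⟨hu, fun w hw ↦ hC (h.mem w hw)⟩, ?_⟩
  exact List.isChain_cons_cons.2 ⟨colorClass_adj.2 ⟨huv, List.ne_of_not_mem_cons hnew⟩,
    h.isChain.imp fun _ _ hadj ↦ colorClass_mono hD c hadj⟩

lemma SafePosition.Available.exists_longer_path {s : SafePosition F 2 d} (hd : 1 ≤ d) {i j : ℕ}
    (h₀ : s.Available (PathGadget 0 (i + 1))) (h₁ : s.Available (PathGadget 1 (j + 1))) :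
    ∃ t ≥ s, t.Available (PathGadget 0 (i + 2)) ∨ t.Available (PathGadget 1 (j + 2)) := by
  obtain ⟨t, hst, c, hc⟩ := (h₀.disjUnion h₁).exists_insert
    (T' := fun c ↦ PathGadget c (if c = 0 then i + 2 else j + 2)) <| by
    rintro _ _ - ⟨C, C', D, D', rfl, rfl, hCC', hC, hC', ⟨hD, l, hlen, hl⟩, ⟨hD', l', hlen', hl'⟩⟩
    obtain ⟨u, l, rfl⟩ := List.exists_cons_of_length_eq_add_one hlen
    obtain ⟨v, l', rfl⟩ := List.exists_cons_of_length_eq_add_one hlen'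
    have hu : u ∈ C := hl.mem u List.mem_cons_self
    have hv : v ∈ C' := hl'.mem v List.mem_cons_self
    refine ⟨u, Finset.mem_union_left _ hu, v, Finset.mem_union_right _ hv,
      playable_union (hD.mono_density hd) (hD'.mono_density hd) (by norm_num) hC hC' hCC' hu hv,
      fun c ↦ ⟨hD.join hD' hC hC' hCC' le_rfl hu hv c, ?_⟩⟩
    have hsub : D ∪ D' ⊆ insert (s(u, v), c) (D ∪ D') := Finset.subset_insert _ _
    fin_cases c
    · exact ⟨v :: u :: l, by simpa using hlen, hl.cons Finset.subset_union_left
        (Finset.subset_union_left.trans hsub) (Finset.mem_union_right _ hv)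
        (Finset.disjoint_right.1 hCC' hv) (Sym2.eq_swap ▸ Finset.mem_insert_self _ _)⟩
    · exact ⟨u :: v :: l', by simpa using hlen', hl'.cons Finset.subset_union_right
        (Finset.subset_union_right.trans hsub) (Finset.mem_union_left _ hu)
        (Finset.disjoint_left.1 hCC' hu) (Finset.mem_insert_self _ _)⟩
  refine ⟨t, hst, ?_⟩
  fin_cases c
  · exact .inl hc
  · exact .inr hc

lemma SafePosition.exists_available_two_paths (s : SafePosition F 2 d) (hd : 1 ≤ d) (k : ℕ) :
    ∃ t ≥ s, ∃ i j, i + j = k ∧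
      t.Available (PathGadget 0 (i + 1)) ∧ t.Available (PathGadget 1 (j + 1)) := by
  induction k with
  | zero =>
    exact ⟨s, le_rfl, 0, 0, rfl, s.available_pathGadget_one 0, s.available_pathGadget_one 1⟩
  | succ k ih =>
    obtain ⟨t, hst, i, j, hij, hi, hj⟩ := ih
    obtain ⟨u, htu, hu | hu⟩ := hi.exists_longer_path hd hj
    · exact ⟨u, hst.trans htu, i + 1, j, by omega, hu, hj.of_le htu⟩
    · exact ⟨u, hst.trans htu, i, j + 1, by omega, hi.of_le htu, hu⟩

lemma PathGadget.take {c : Fin 2} {m n : ℕ} {C : Finset ℕ} {D : ColoredBoard ℕ 2} (hmn : m ≤ n)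
    (h : PathGadget c n C D) : PathGadget c m C D := by
  obtain ⟨hslack, l, hlen, hl⟩ := h
  exact ⟨hslack, l.take m, by simp [hlen, hmn], hl.nodup.sublist (l.take_sublist m),
    fun v hv ↦ hl.mem v (List.mem_of_mem_take hv), hl.isChain.take m⟩

lemma SafePosition.exists_available_pathGadget (s : SafePosition F 2 d) (hd : 1 ≤ d) (n : ℕ) :
    ∃ t ≥ s, ∃ c, t.Available (PathGadget c n) := by
  obtain ⟨t, hst, i, j, hij, hi, hj⟩ := s.exists_available_two_paths hd (2 * n)
  rcases le_total n i with h | h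
  · exact ⟨t, hst, 0, hi.mono fun _ _ _ ↦ PathGadget.take (by omega)⟩
  · exact ⟨t, hst, 1, hj.mono fun _ _ _ ↦ PathGadget.take (by omega)⟩

end MonochromaticPath

section Core

variable {V : Type} {r : ℕ}

/-- Contracting `K` to a single vertex turns the board `R` into a forest: trees hang from `K`. -/
structure HangsFrom (R : ColoredBoard ℕ r) (K : Finset ℕ) : Prop where
  edgeCount_le : ∀ S, R.edgeCount S ≤ #(S \ K)
  edgeCount_lt : ∀ S : Finset ℕ, S.Nonempty → Disjoint S K → R.edgeCount S < #S

lemma HangsFrom.mk_notMem {R : ColoredBoard ℕ r} {K : Finset ℕ} {u v : ℕ} (hR : HangsFrom R K)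
    (hu : u ∈ K) (hv : v ∈ K) (c : Fin r) : (s(u, v), c) ∉ R := by
  intro hmem
  have hpos : 0 < R.edgeCount {u, v} :=
    Finset.card_pos.2 ⟨_, Finset.mem_filter.2 ⟨hmem, by simp⟩⟩
  have hle := hR.edgeCount_le {u, v}
  have hempty : ({u, v} : Finset ℕ) \ K = ∅ := by
    simp [Finset.sdiff_eq_empty_iff_subset, Finset.insert_subset_iff, hu, hv]
  rw [hempty, Finset.card_empty] at hle
  omega

lemma ColoredBoard.HasSlack.edgeCount_lt [DecidableEq V] {D : ColoredBoard V r}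
    (hD : HasSlack 1 1 D) {S : Finset V} (hS : S.Nonempty) : D.edgeCount S < #S := by
  have := hD S hS
  rw [slack] at this
  have : (D.edgeCount S + 1 : ℝ) ≤ #S := by linarith
  exact_mod_cast this

/-- A forest hangs from any of its subtrees. -/
lemma ColoredBoard.HasSlack.hangsFrom_sdiff {T P : ColoredBoard ℕ r} {K : Finset ℕ}
    (hT : HasSlack 1 1 T) (hPT : P ⊆ T) (hP : P.SupportedOn K) (hK : #K = #P + 1) :
    HangsFrom (T \ P) K where
  edgeCount_le S := by
    have hne : (S ∪ K).Nonempty :=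
      (Finset.card_pos.1 (by omega : 0 < #K)).mono Finset.subset_union_right
    have hlt : T.edgeCount (S ∪ K) < #(S ∪ K) := hT.edgeCount_lt hne
    have hadd := edgeCount_sdiff_add_edgeCount hPT (S ∪ K)
    rw [(hP.mono (Finset.subset_union_right (s₁ := S))).edgeCount_eq_card] at hadd
    have hle := edgeCount_subset (Finset.subset_union_left (s₁ := S) (s₂ := K)) (T \ P)
    have hcard : #(S \ K) + #K = #(S ∪ K) := Finset.card_sdiff_add_card S K
    omega
  edgeCount_lt S hS _ :=
    (edgeCount_mono Finset.sdiff_subset S).trans_lt (hT.edgeCount_lt hS)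

variable [Fintype V] [DecidableEq V]

/-- A copy of the board `E` with trees hanging from it. -/
def CoreGadget (E : ColoredBoard V r) : Gadget r := fun C D ↦
  ∃ (f : V ↪ ℕ) (R : ColoredBoard ℕ r), (∀ i, f i ∈ C) ∧ HangsFrom R (Finset.univ.map f) ∧
    D = R ∪ E.relabel f

variable {E : ColoredBoard V r} {R : ColoredBoard ℕ r} {f : V ↪ ℕ} {d t : ℝ}

lemma HangsFrom.hasSlack_union (hR : HangsFrom R (Finset.univ.map f)) (hE : HasSlack d t E)
    (hd : 1 ≤ d) (ht : t ≤ d) : HasSlack d t (R ∪ E.relabel f) := by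
  intro S hS
  set S' := S.preimage f f.injective.injOn
  have hcard : (#S' + #(S \ Finset.univ.map f) : ℝ) = #S := by
    rw [← Finset.card_map f, Finset.map_eq_image, Finset.image_preimage]
    simp [← Finset.card_inter_add_card_sdiff S (Finset.univ.map f), ← Finset.filter_mem_eq_inter]
  have hedges : (edgeCount (R ∪ E.relabel f) S : ℝ) ≤ R.edgeCount S + E.edgeCount S' := by
    rw [← edgeCount_relabel]
    exact mod_cast edgeCount_union_le R (E.relabel f) S
  rw [slack]
  rcases S'.eq_empty_or_nonempty with hS' | hS'
  · have hdisj : Disjoint S (Finset.univ.map f) := by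
      refine Finset.disjoint_left.2 fun v hv hvf ↦ ?_
      obtain ⟨i, -, rfl⟩ := Finset.mem_map.1 hvf
      exact Finset.eq_empty_iff_forall_notMem.1 hS' i (Finset.mem_preimage.2 hv)
    have hlt : (R.edgeCount S + 1 : ℝ) ≤ #S := mod_cast hR.edgeCount_lt S hS hdisj
    have hpos : (1 : ℝ) ≤ #S := mod_cast hS.card_pos
    rw [hS', edgeCount_empty, Nat.cast_zero] at hedges
    nlinarith
  · have hslack := hE S' hS'
    have hle : (R.edgeCount S : ℝ) ≤ #(S \ Finset.univ.map f) := mod_cast hR.edgeCount_le S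
    rw [slack] at hslack
    nlinarith

variable {α : Type} {F : SimpleGraph α}

lemma SafePosition.Available.exists_insert_core {s : SafePosition F r d} (hd : 1 ≤ d)
    (h : s.Available (CoreGadget E)) {i j : V} (hij : i ≠ j) (hE : ∀ c, (s(i, j), c) ∉ E)
    (hslack : HasSlack d 1 E) :
    ∃ t ≥ s, ∃ c, t.Available (CoreGadget (insert (s(i, j), c) E)) := by
  refine h.exists_insert ?_
  rintro C _ - ⟨f, R, hfC, hR, rfl⟩
  refine ⟨f i, hfC i, f j, hfC j, ⟨f.injective.ne hij, fun c hc ↦ ?_, fun S hi _ ↦ ?_⟩,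
    fun c ↦ ⟨f, R, hfC, hR, ?_⟩⟩
  · exact (Finset.mem_union.1 hc).elim
      (hR.mk_notMem (Finset.mem_map_of_mem f (Finset.mem_univ i))
        (Finset.mem_map_of_mem f (Finset.mem_univ j)) c)
      fun h ↦ hE c (mk_mem_relabel.1 h)
  · exact hR.hasSlack_union hslack hd hd S ⟨f i, hi⟩
  · rw [relabel_insert, Finset.union_insert]

end Core

section MonochromaticPathCore

/-- The path `0, 1, …, n` in color `c`. -/
def pathBoard {r : ℕ} (n : ℕ) (c : Fin r) : ColoredBoard (Fin (n + 1)) r :=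
  Finset.univ.image fun i : Fin n ↦ (s(i.castSucc, i.succ), c)

lemma card_pathBoard {r : ℕ} (n : ℕ) (c : Fin r) : #(pathBoard n c) = n := by
  have hinj : Function.Injective fun i : Fin n ↦ (s(i.castSucc, i.succ), c) := by
    intro i j hij
    simp only [Prod.mk.injEq, and_true, Sym2.eq_iff, Fin.ext_iff, Fin.val_castSucc,
      Fin.val_succ] at hij
    omega
  rw [pathBoard, Finset.card_image_of_injective _ hinj, Finset.card_fin]

lemma PathGadget.coreGadget {c : Fin 2} {n : ℕ} {C : Finset ℕ} {D : ColoredBoard ℕ 2}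
    (h : PathGadget c (n + 1) C D) : CoreGadget (pathBoard n c) C D := by
  obtain ⟨hslack, l, hlen, hl⟩ := h
  let f : Fin (n + 1) ↪ ℕ := ⟨fun i ↦ l[(i : ℕ)], fun i j hij ↦ by
    simpa [Fin.ext_iff] using (hl.nodup.getElem_inj_iff).1 hij⟩
  have hsub : (pathBoard n c).relabel f ⊆ D := by
    intro x hx
    simp only [relabel, pathBoard, Finset.mem_map, Finset.mem_image, Finset.mem_univ,
      true_and] at hx
    obtain ⟨_, ⟨i, rfl⟩, rfl⟩ := hx
    exact (colorClass_adj.1 (List.isChain_iff_getElem.1 hl.isChain i (by omega))).1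
  refine ⟨f, D \ (pathBoard n c).relabel f, fun i ↦ hl.mem _ (List.getElem_mem _),
    hslack.hangsFrom_sdiff hsub (supportedOn_relabel f _) ?_,
    (Finset.sdiff_union_of_subset hsub).symm⟩
  simp [relabel, card_pathBoard]

end MonochromaticPathCore

section MonochromaticTriangle

/-- The vertex set `V` spans a triangle of color `x` with root `u`. -/
def IsTriangleAt {r : ℕ} (D : ColoredBoard ℕ r) (x : Fin r) (u : ℕ) (V : Finset ℕ) : Prop :=
  (D.colorClass x).IsNClique 3 V ∧ u ∈ V

/-- A sparse component containing a triangle of color `x`. The constant `7 / 6` is the smallest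
slack occurring in the boards of `forcesTriangle_pathBoard`. -/
def TriangleGadget {r : ℕ} (d : ℝ) (x : Fin r) : Gadget r := fun C D ↦
  HasSlack d (7 / 6) D ∧ ∃ u, ∃ V ⊆ C, IsTriangleAt D x u V

/-- Once Builder can build copies of `E` with hanging trees, he can build monochromatic
triangles. -/
def ForcesTriangle {α V : Type} [Fintype V] {r : ℕ} (F : SimpleGraph α) (d : ℝ)
    (E : ColoredBoard V r) : Prop :=
  ∀ s : SafePosition F r d, s.Available (CoreGadget E) →
    ∃ t ≥ s, ∃ x, t.Available (TriangleGadget d x)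

variable {α V : Type} [DecidableEq V] {r : ℕ} {F : SimpleGraph α} {d : ℝ} {E : ColoredBoard V r}

lemma hasSlack_sixtyone_div_thirtysix_iff :
    HasSlack (61 / 36) (7 / 6) E ↔
      ∀ S : Finset V, S.Nonempty → 36 * E.edgeCount S + 42 ≤ 61 * #S := by
  refine forall₂_congr fun S _ ↦ ?_
  rw [slack, ← Nat.cast_le (α := ℝ)]
  push_cast
  constructor <;> intro <;> linarith

instance (c : Fin r) : DecidableRel (E.colorClass c).Adj :=
  fun _ _ ↦ decidable_of_iff' _ colorClass_adj

/-- The edge `ij` is new and would close the triangle `T` in color `x`, leaving the board sparse. -/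
def IsThreat (d : ℝ) (E : ColoredBoard V r) (x : Fin r) (i j : V) (T : Finset V) : Prop :=
  i ≠ j ∧ (∀ c, (s(i, j), c) ∉ E) ∧ HasSlack d (7 / 6) (insert (s(i, j), x) E) ∧
    (colorClass (insert (s(i, j), x) E) x).IsNClique 3 T

variable [Fintype V]

instance : Decidable (HasSlack (61 / 36) (7 / 6) E) :=
  decidable_of_iff' _ hasSlack_sixtyone_div_thirtysix_iff

instance (x : Fin r) (i j : V) (T : Finset V) : Decidable (IsThreat (61 / 36) E x i j T) :=
  inferInstanceAs (Decidable (_ ∧ _ ∧ _ ∧ _))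

lemma ForcesTriangle.of_isNClique (hd : 7 / 6 ≤ d) {x : Fin r} {T : Finset V}
    (hT : (E.colorClass x).IsNClique 3 T) (hE : HasSlack d (7 / 6) E) : ForcesTriangle F d E := by
  refine fun s hs ↦ ⟨s, le_rfl, x, hs.mono ?_⟩
  rintro C _ - ⟨f, R, hfC, hR, rfl⟩
  have hfT : T.map f ⊆ C := fun v hv ↦ by
    obtain ⟨i, -, rfl⟩ := Finset.mem_map.1 hv
    exact hfC i
  obtain ⟨i, hi⟩ : T.Nonempty := Finset.card_pos.1 (by simp [hT.card_eq])
  refine ⟨hR.hasSlack_union hE (by linarith) hd, f i, T.map f, hfT, ?_, Finset.mem_map_of_mem f hi⟩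
  exact hT.map.mono ((map_colorClass_le f E x).trans (colorClass_mono Finset.subset_union_right x))

lemma ForcesTriangle.of_insert (hd : 1 ≤ d) {i j : V} (hij : i ≠ j) (hE : ∀ c, (s(i, j), c) ∉ E)
    (hslack : HasSlack d 1 E) (h : ∀ c, ForcesTriangle F d (insert (s(i, j), c) E)) :
    ForcesTriangle F d E := by
  intro s hs
  obtain ⟨t, hst, c, hc⟩ := hs.exists_insert_core hd hij hE hslack
  obtain ⟨u, htu, hu⟩ := h c t hc
  exact ⟨u, hst.trans htu, hu⟩

lemma ForcesTriangle.of_threat (hd : 7 / 6 ≤ d) {i j : V} {x y : Fin r} {T : Finset V}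
    (hxy : ∀ c, c ≠ y → c = x) (h : IsThreat d E x i j T)
    (hy : ForcesTriangle F d (insert (s(i, j), y) E)) : ForcesTriangle F d E := by
  obtain ⟨hij, hE, hslack, hT⟩ := h
  have hslackE : HasSlack d 1 E := fun S hS ↦
    (hslack.anti (by norm_num) S hS).trans (slack_anti (Finset.subset_insert _ _) d S)
  refine .of_insert (by linarith) hij hE hslackE fun c ↦ ?_
  by_cases hcy : c = y
  · exact hcy ▸ hy
  · exact hxy c hcy ▸ .of_isNClique hd hT hslack

lemma exists_forall_ne_imp_eq (x : Fin 2) : ∃ y, ∀ c, c ≠ y → c = x := by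
  decide +revert

/-- Builder first presents `05`, and then `26` unless `05` got the color of the path. In each case
the threats leave a triangle in the other color. -/
lemma forcesTriangle_pathBoard (x : Fin 2) : ForcesTriangle F (61 / 36) (pathBoard 6 x) := by
  have hd : (7 / 6 : ℝ) ≤ 61 / 36 := by norm_num
  obtain ⟨y, hy⟩ : ∃ y, ∀ c, c ≠ y → c = x := exists_forall_ne_imp_eq x
  have h05 : HasSlack (61 / 36) (7 / 6) (pathBoard 6 x) := by decide +kernel +revert
  have h26 : HasSlack (61 / 36) (7 / 6) (insert (s(0, 5), y) (pathBoard 6 x)) := by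
    decide +kernel +revert
  refine .of_insert (by norm_num) (i := 0) (j := 5) (by decide) (by decide +kernel +revert)
    (h05.anti (by norm_num)) fun c ↦ ?_
  by_cases hc : c = y
  · subst hc
    refine .of_insert (by norm_num) (i := 2) (j := 6) (by decide) (by decide +kernel +revert)
      (h26.anti (by norm_num)) fun c' ↦ ?_
    by_cases hc' : c' = c
    · subst hc'
      exact .of_threat hd hy (i := 2) (j := 4) (T := {2, 3, 4}) (by decide +kernel +revert) <|
        .of_threat hd hy (i := 4) (j := 6) (T := {4, 5, 6}) (by decide +kernel +revert) <|
        .of_isNClique hd (x := c') (T := {2, 4, 6}) (by decide +kernel +revert)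
          (by decide +kernel +revert)
    · obtain rfl := hy c' hc'
      exact .of_threat hd hy (i := 0) (j := 2) (T := {0, 1, 2}) (by decide +kernel +revert) <|
        .of_threat hd hy (i := 2) (j := 5) (T := {2, 5, 6}) (by decide +kernel +revert) <|
        .of_isNClique hd (x := c) (T := {0, 2, 5}) (by decide +kernel +revert)
          (by decide +kernel +revert)
  · obtain rfl := hy c hc
    exact .of_threat hd hy (i := 0) (j := 2) (T := {0, 1, 2}) (by decide +kernel +revert) <|
      .of_threat hd hy (i := 0) (j := 4) (T := {0, 4, 5}) (by decide +kernel +revert) <|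
      .of_threat hd hy (i := 2) (j := 4) (T := {2, 3, 4}) (by decide +kernel +revert) <|
      .of_isNClique hd (x := y) (T := {0, 2, 4}) (by decide +kernel +revert)
        (by decide +kernel +revert)

end MonochromaticTriangle

section Bowtie

lemma exists_eq_insert_of_isNClique_three {β : Type} {G : SimpleGraph β} {V : Finset β} {u : β}
    (hV : G.IsNClique 3 V) (hu : u ∈ V) :
    ∃ a b, G.Adj u a ∧ G.Adj u b ∧ G.Adj a b ∧ V = {u, a, b} := by
  obtain ⟨a, b, c, hab, hac, hbc, rfl⟩ := is3Clique_iff.1 hV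
  simp only [Finset.mem_insert, Finset.mem_singleton] at hu
  rcases hu with rfl | rfl | rfl
  · exact ⟨b, c, hab, hac, hbc, rfl⟩
  · exact ⟨a, c, hab.symm, hbc, hac, Finset.insert_comm _ _ _⟩
  · exact ⟨a, b, hac.symm, hbc.symm, hab, by grind⟩

lemma isCopy_bowtie_of_disjoint_triangles {β : Type} {G : SimpleGraph β} {V W : Finset β}
    {u v : β} (hV : G.IsNClique 3 V) (hu : u ∈ V) (hW : G.IsNClique 3 W) (hv : v ∈ W)
    (hVW : Disjoint V W) (huv : G.Adj u v) : IsCopy bowtie G := by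
  obtain ⟨a, b, hua, hub, hab, rfl⟩ := exists_eq_insert_of_isNClique_three hV hu
  obtain ⟨a', b', hva, hvb, hab', rfl⟩ := exists_eq_insert_of_isNClique_three hW hv
  have hinj : Function.Injective ![u, a, b, v, a', b'] := by
    have := hua.ne; have := hub.ne; have := hab.ne
    have := hva.ne; have := hvb.ne; have := hab'.ne
    simp only [Finset.disjoint_left, Finset.mem_insert, Finset.mem_singleton] at hVW
    intro i j hij
    fin_cases i <;> fin_cases j <;> simp_all
  refine ⟨⟨_, hinj⟩, fun i j hij ↦ ?_⟩
  simp only [bowtie, fromEdgeSet_adj, Set.mem_insert_iff, Set.mem_singleton_iff, Sym2.eq_iff] at hij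
  obtain ⟨h, -⟩ := hij
  rcases h with (⟨rfl, rfl⟩ | ⟨rfl, rfl⟩) | (⟨rfl, rfl⟩ | ⟨rfl, rfl⟩) | (⟨rfl, rfl⟩ | ⟨rfl, rfl⟩) |
    (⟨rfl, rfl⟩ | ⟨rfl, rfl⟩) | (⟨rfl, rfl⟩ | ⟨rfl, rfl⟩) | (⟨rfl, rfl⟩ | ⟨rfl, rfl⟩) |
    (⟨rfl, rfl⟩ | ⟨rfl, rfl⟩)
  all_goals first | assumption | (symm; assumption)

variable {r : ℕ} {C : Finset ℕ} {D D' : ColoredBoard ℕ r} {V W : Finset ℕ} {u v : ℕ} {x y : Fin r}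

lemma IsTriangleAt.mono (h : IsTriangleAt D x u V) (hD : D ⊆ D') : IsTriangleAt D' x u V :=
  ⟨h.1.mono (colorClass_mono hD x), h.2⟩

lemma containsMono_bowtie_insert (hV : IsTriangleAt D x u V) (hW : IsTriangleAt D x v W)
    (hVW : Disjoint V W) : ContainsMono bowtie (insert (s(u, v), x) D) := by
  have hD : D ⊆ insert (s(u, v), x) D := Finset.subset_insert _ _
  exact ⟨x, isCopy_bowtie_of_disjoint_triangles (hV.mono hD).1 hV.2 (hW.mono hD).1 hW.2 hVW <|
    colorClass_adj.2 ⟨Finset.mem_insert_self _ _, Finset.disjoint_iff_ne.1 hVW u hV.2 v hW.2⟩⟩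

end Bowtie

section Endgame

variable {r : ℕ} {d : ℝ} {D D' : ColoredBoard ℕ r} {C C' V W : Finset ℕ} {u v : ℕ}
  {x y : Fin r}

/-- Two disjoint triangles of color `x` in a sparse component, with at least `t` edges to spare on
every vertex set that contains both roots. -/
structure IsTrianglePair (d t : ℝ) (x : Fin r) (C : Finset ℕ) (D : ColoredBoard ℕ r) (u : ℕ)
    (V : Finset ℕ) (v : ℕ) (W : Finset ℕ) : Prop where
  hasSlack : HasSlack d (7 / 6) D
  left : IsTriangleAt D x u V
  right : IsTriangleAt D x v W
  left_subset : V ⊆ C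
  right_subset : W ⊆ C
  disjoint : Disjoint V W
  le_slack : ∀ S, u ∈ S → v ∈ S → t ≤ slack d D S

/-- Two triangles of color `x` whose roots are joined in color `y`. -/
def TwinTriangleGadget (d : ℝ) (x y : Fin r) : Gadget r := fun C D ↦
  ∃ u V v W, IsTrianglePair d (4 / 3) x C D u V v W ∧ (D.colorClass y).Adj u v

/-- Three triangles of color `x` whose roots form a path in color `y`. -/
def TripleTriangleGadget (d : ℝ) (x y : Fin r) : Gadget r := fun C D ↦
  ∃ u V v W v' W', IsTrianglePair d (3 / 2) x C D v W v' W' ∧ V ⊆ C ∧ IsTriangleAt D x u V ∧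
    (D.colorClass y).Adj u v ∧ (D.colorClass y).Adj u v' ∧ ∀ c, (s(v, v'), c) ∉ D

/-- A vertex which lies on a triangle of every color. -/
def RainbowTriangleGadget (d : ℝ) : Gadget r := fun C D ↦
  HasSlack d (1 / 2) D ∧ ∃ u ∈ C, ∀ x, ∃ V ⊆ C, IsTriangleAt D x u V

variable {s : SafePosition bowtie r d}

lemma SafePosition.Available.exists_twinTriangle (hxy : ∀ c, c ≠ y → c = x)
    (h : s.Available (TriangleGadget d x)) : ∃ t ≥ s, t.Available (TwinTriangleGadget d x y) := by
  refine (h.disjUnion h).exists_insert_of_threat hxy ?_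
  rintro _ _ - ⟨C, C', D, D', rfl, rfl, hCC', hC, hC', ⟨hD, u, V, hVC, hV⟩, hD', v, W, hWC, hW⟩
  have hu : u ∈ C := hVC hV.2
  have hv : v ∈ C' := hWC hW.2
  have hVW : Disjoint V W := Finset.disjoint_of_subset_left hVC (hCC'.mono_right hWC)
  have hsub : D ∪ D' ⊆ insert (s(u, v), y) (D ∪ D') := Finset.subset_insert _ _
  refine ⟨u, Finset.mem_union_left _ hu, v, Finset.mem_union_right _ hv,
    playable_union hD hD' (by norm_num) hC hC' hCC' hu hv,
    containsMono_bowtie_insert (hV.mono Finset.subset_union_left)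
      (hW.mono Finset.subset_union_right) hVW, u, V, v, W, ?_,
    colorClass_adj.2 ⟨Finset.mem_insert_self _ _, Finset.disjoint_iff_ne.1 hCC' u hu v hv⟩⟩
  exact {
    hasSlack := hD.join hD' hC hC' hCC' (by norm_num) hu hv y
    left := hV.mono (Finset.subset_union_left.trans hsub)
    right := hW.mono (Finset.subset_union_right.trans hsub)
    left_subset := hVC.trans Finset.subset_union_left
    right_subset := hWC.trans Finset.subset_union_right
    disjoint := hVW
    le_slack := fun S huS hvS ↦ by
      linarith [hD.add_sub_one_le_slack_join hD' hC hC' hCC' hu hv y huS hvS] }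

lemma IsTrianglePair.le_slack_join {v' : ℕ} (h : IsTrianglePair d (4 / 3) x C D u V v W)
    (hD' : HasSlack d (7 / 6) D') (hC : D.SupportedOn C) (hC' : D'.SupportedOn C')
    (hCC' : Disjoint C C') (hv' : v' ∈ C') (c : Fin r) {S : Finset ℕ} (hvS : v ∈ S)
    (hvS' : v' ∈ S) : 3 / 2 ≤ slack d (insert (s(u, v'), c) (D ∪ D')) S := by
  have hu : u ∈ C := h.left_subset h.left.2
  have hv : v ∈ S ∩ C := Finset.mem_inter.2 ⟨hvS, h.right_subset h.right.2⟩
  have hle := slack_add_slack_sub_le_slack_join hC hC' hCC' d u v' c S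
  have h₂ := hD' (S \ C) ⟨v', Finset.mem_sdiff.2 ⟨hvS', Finset.disjoint_right.1 hCC' hv'⟩⟩
  by_cases huS : u ∈ S
  · have h₁ := h.le_slack (S ∩ C) (Finset.mem_inter.2 ⟨huS, hu⟩) hv
    rw [if_pos ⟨huS, hvS'⟩] at hle
    linarith
  · have h₁ := h.hasSlack (S ∩ C) ⟨v, hv⟩
    rw [if_neg fun h ↦ huS h.1] at hle
    linarith

lemma SafePosition.Available.exists_tripleTriangle (hxy : ∀ c, c ≠ y → c = x)
    (h : s.Available (TriangleGadget d x)) (h' : s.Available (TwinTriangleGadget d x y)) :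
    ∃ t ≥ s, t.Available (TripleTriangleGadget d x y) := by
  refine (h'.disjUnion h).exists_insert_of_threat hxy ?_
  rintro _ _ - ⟨C, C', D, D', rfl, rfl, hCC', hC, hC', ⟨u, V, v, W, hpair, hadj⟩, hD', v', W',
    hWC', hW'⟩
  have hu : u ∈ C := hpair.left_subset hpair.left.2
  have hv : v ∈ C := hpair.right_subset hpair.right.2
  have hv' : v' ∈ C' := hWC' hW'.2
  have hsub : D ∪ D' ⊆ insert (s(u, v'), y) (D ∪ D') := Finset.subset_insert _ _
  have hDsub : D ⊆ insert (s(u, v'), y) (D ∪ D') := Finset.subset_union_left.trans hsub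
  refine ⟨u, Finset.mem_union_left _ hu, v', Finset.mem_union_right _ hv',
    playable_union hpair.hasSlack hD' (by norm_num) hC hC' hCC' hu hv',
    containsMono_bowtie_insert (hpair.left.mono Finset.subset_union_left)
      (hW'.mono Finset.subset_union_right) (hCC'.mono hpair.left_subset hWC'),
    u, V, v, W, v', W', ?_, hpair.left_subset.trans Finset.subset_union_left,
    hpair.left.mono hDsub, colorClass_mono hDsub y hadj,
    colorClass_adj.2 ⟨Finset.mem_insert_self _ _, Finset.disjoint_iff_ne.1 hCC' u hu v' hv'⟩, ?_⟩
  · exact {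
      hasSlack := hpair.hasSlack.join hD' hC hC' hCC' (by norm_num) hu hv' y
      left := hpair.right.mono hDsub
      right := hW'.mono (Finset.subset_union_right.trans hsub)
      left_subset := hpair.right_subset.trans Finset.subset_union_left
      right_subset := hWC'.trans Finset.subset_union_right
      disjoint := hCC'.mono hpair.right_subset hWC'
      le_slack := fun S hvS hvS' ↦
        hpair.le_slack_join hD' hC hC' hCC' hv' y hvS hvS' }
  · intro c hc
    rcases Finset.mem_insert.1 hc with heq | hmem
    · exact hadj.ne' (Sym2.congr_left.1 (congrArg Prod.fst heq))
    · exact mk_notMem_union_of_disjoint hC hC' hCC' hv hv' c hmem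

lemma IsTrianglePair.hasSlack_insert (h : IsTrianglePair d (3 / 2) x C D u V v W) (c : Fin r) :
    HasSlack d (1 / 2) (insert (s(u, v), c) D) := by
  intro S hS
  have hle := slack_sub_le_slack_insert d D u v c S
  by_cases huv : u ∈ S ∧ v ∈ S
  · have := h.le_slack S huv.1 huv.2
    rw [if_pos huv] at hle
    linarith
  · have := h.hasSlack S hS
    rw [if_neg huv] at hle
    linarith

lemma SafePosition.Available.exists_rainbowTriangle (hxy : ∀ c, c ≠ y → c = x)
    (h : s.Available (TripleTriangleGadget d x y)) :
    ∃ t ≥ s, t.Available (RainbowTriangleGadget d) := by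
  refine h.exists_insert_of_threat hxy ?_
  rintro C D - ⟨u, V, v, W, v', W', hpair, hVC, hV, huv, huv', hnew⟩
  have hu : u ∈ C := hVC hV.2
  have hv : v ∈ C := hpair.left_subset hpair.left.2
  have hv' : v' ∈ C := hpair.right_subset hpair.right.2
  have hvv' : v ≠ v' := Finset.disjoint_iff_ne.1 hpair.disjoint v hpair.left.2 v' hpair.right.2
  have hsub : D ⊆ insert (s(v, v'), y) D := Finset.subset_insert _ _
  refine ⟨v, hv, v', hv', ⟨hvv', hnew, fun S hS hS' ↦ ?_⟩,
    containsMono_bowtie_insert hpair.left hpair.right hpair.disjoint,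
    hpair.hasSlack_insert y, u, hu, fun c ↦ ?_⟩
  · linarith [hpair.le_slack S hS hS']
  by_cases hc : c = y
  · subst hc
    refine ⟨{u, v, v'}, by simp [Finset.insert_subset_iff, hu, hv, hv'], ?_, by simp⟩
    exact is3Clique_triple_iff.2 ⟨colorClass_mono hsub c huv, colorClass_mono hsub c huv',
      colorClass_adj.2 ⟨Finset.mem_insert_self _ _, hvv'⟩⟩
  · exact hxy c hc ▸ ⟨V, hVC, hV.mono hsub⟩

lemma SafePosition.not_available_rainbowTriangle (s : SafePosition bowtie r d) :
    ¬s.Available (RainbowTriangleGadget d) := by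
  intro h
  obtain ⟨t, -, -, hc⟩ := (h.disjUnion h).exists_insert
    (T' := fun _ _ D ↦ D.ContainsMono bowtie) <| by
    rintro _ _ - ⟨C, C', D, D', rfl, rfl, hCC', hC, hC', ⟨hD, u, hu, hV⟩, hD', v, hv, hW⟩
    refine ⟨u, Finset.mem_union_left _ hu, v, Finset.mem_union_right _ hv,
      playable_union hD hD' (by norm_num) hC hC' hCC' hu hv, fun c ↦ ?_⟩
    obtain ⟨V, hVC, hV⟩ := hV c
    obtain ⟨W, hWC, hW⟩ := hW c
    exact containsMono_bowtie_insert (hV.mono Finset.subset_union_left)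
      (hW.mono Finset.subset_union_right) (hCC'.mono hVC hWC)
  exact not_available_of_containsMono (fun _ _ ↦ id) hc

end Endgame

lemma SafePosition.not_available_triangle {d : ℝ} {x : Fin 2} (s : SafePosition bowtie 2 d) :
    ¬s.Available (TriangleGadget d x) := by
  intro h
  obtain ⟨y, hxy⟩ : ∃ y, ∀ c, c ≠ y → c = x := exists_forall_ne_imp_eq x
  obtain ⟨t, hst, htwin⟩ := h.exists_twinTriangle hxy
  obtain ⟨u, -, htriple⟩ := (h.of_le hst).exists_tripleTriangle hxy htwin
  obtain ⟨w, -, hrainbow⟩ := htriple.exists_rainbowTriangle hxy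
  exact w.not_available_rainbowTriangle hrainbow

/-- deterministic part of the bowtie upper bound. Builder has a winning
strategy in the deterministic bowtie-avoidance game with 2 colors and density restriction
`d = 61/36`. -/
theorem statement11 : BuilderWinsDensity bowtie 2 ((61 : ℝ) / 36) := by
  refine builderWinsDensity_of_builderWinsFrom_empty (by norm_num) ?_
  by_contra hsafe
  let s : SafePosition bowtie 2 (61 / 36) := {
    board := ∅
    used := ∅
    supportedOn := by simp [SupportedOn]
    hasSlack := (hasSlack_empty (by norm_num)).anti (by norm_num)
    not_builderWinsFrom := hsafe }
  obtain ⟨t, -, c, hpath⟩ := s.exists_available_pathGadget (by norm_num) 7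
  obtain ⟨u, -, x, htriangle⟩ := forcesTriangle_pathBoard c t <|
    hpath.mono fun _ _ _ ↦ PathGadget.coreGadget
  exact u.not_available_triangle htriangle
end

section
/- Let F be the bowtie graph (two triangles joined by an edge: vertex set {1,...,6}, edges {1,2},{1,3},{2,3},{4,5},{4,6},{5,6},{1,4}). For every function N : ℕ → ℕ with n^{86/61} = o(N(n)) and N(n) ≤ n(n−1)/2 for all n, and for every sequence of online Painter strategies with 2 colors (one for each board size n), the probability that the board G_{N(n)} of the online F-avoidance game with 2 colors on n vertices contains a monochromatic copy of F tends to 1 as n → ∞. -/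
open SimpleGraph Filter Asymptotics
open scoped Classical

/-!
Builder first wins a deterministic game in which every vertex set `U` may span at most
`61 |U| / 36` edges. Linking disjoint copies of a monochromatic tree again and again either extends
the tree or produces links in the other color, so on a forest Builder can force a monochromatic
spider: a tree with a center and six legs of alternating lengths `2` and `3`. A 6-cycle is then
presented through the ends of its legs. Either some edge of it gets the color of the spider and
closes a 6-cycle with two of the legs, or the whole 6-cycle has the other color; three chords of a
monochromatic 6-cycle finally force a monochromatic triangle. The boards obtained in this way
satisfy `36 e(U) + 42 ≤ 61 |U|` for nonempty `U`. Among `11` disjoint ones, six have triangles of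
the same color. Builder joins these six along the `7` edges of a bowtie: either one of the links
completes a bowtie together with two triangles, or all of them form a bowtie in the other color.
The density stays at most `61 / 36` because `36 · 7 = 6 · 42`.

To transfer the strategy, with `L` moves and density `d`, to the random game, draw `L` blocks of
`m = ⌊N / L⌋` uniform edges and look for a vertex embedding and one position in each block such that
the edges drawn there are those Builder would present. By the second moment method some pair
succeeds with high probability: two successful pairs that share `s` edges share at least `s / d`
vertices, so dependent pairs are negligible once `(n² / m) ^ d = o(n)`, that is,
`n ^ (2 - 1 / d) = o(N)`, and `2 - 36 / 61 = 86 / 61`. Independent draws with repetitions skipped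
form an initial segment of the uniformly random edge order.
-/

/-- A partially `r`-colored board: `none` marks a pair that has not been presented yet. -/
abbrev Board (V : Type*) (r : ℕ) := Sym2 V → Option (Fin r)

namespace Board

variable {V W ι : Type*} {r : ℕ}

/-- The board on which no edge has been presented. -/
def empty : Board V r := fun _ => none

/-- The board induced by `S` along a map of vertex sets. -/
def comap (κ : V → W) (S : Board W r) : Board V r := S ∘ Sym2.map κ

section Forces

variable [DecidableEq V] {P Q : Board V r → Prop}

/-- In the game where Builder presents the edges and Painter colors them, Builder can reach a
board satisfying `P` from the given board by presenting exactly `n` new edges. -/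
def Forces (P : Board V r → Prop) : ℕ → Board V r → Prop
  | 0, s => P s
  | n + 1, s => ∃ e : Sym2 V, s e = none ∧ ¬ e.IsDiag ∧
      ∀ c : Fin r, Forces P n (Function.update s e (some c))

theorem Forces.bind {m : ℕ} (hPQ : ∀ s, P s → Forces Q m s) :
    ∀ {n : ℕ} {s : Board V r}, Forces P n s → Forces Q (n + m) s
  | 0, s, hs => by simpa only [Nat.zero_add] using hPQ s hs
  | n + 1, s, ⟨e, hfresh, hdiag, hs⟩ => by
    rw [Nat.succ_add]
    exact ⟨e, hfresh, hdiag, fun c => (hs c).bind hPQ⟩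

theorem Forces.mono {n : ℕ} {s : Board V r} (hs : Forces P n s) (hPQ : ∀ s, P s → Q s) :
    Forces Q n s :=
  hs.bind (m := 0) hPQ

theorem comap_update [DecidableEq W] {κ : V → W} (hκ : Function.Injective κ) (S : Board W r)
    (e : Sym2 V) (c : Option (Fin r)) :
    comap κ (Function.update S (Sym2.map κ e) c) = Function.update (comap κ S) e c :=
  Function.update_comp_eq_of_injective S (Sym2.map.injective hκ) e c

theorem forces_of_forces_comap [DecidableEq W] {κ : V → W} (hκ : Function.Injective κ) :
    ∀ (n : ℕ) (S : Board W r), Forces P n (comap κ S) →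
      Forces (fun S' => P (comap κ S') ∧ ∀ e ∉ Set.range (Sym2.map κ), S' e = S e) n S
  | 0, _, h => ⟨h, fun _ _ => rfl⟩
  | n + 1, S, ⟨e, hfresh, hdiag, hs⟩ => by
    refine ⟨Sym2.map κ e, hfresh, by rwa [Sym2.isDiag_map hκ], fun c => ?_⟩
    refine (forces_of_forces_comap hκ n _ (by rw [comap_update hκ]; exact hs c)).mono ?_
    rintro S' ⟨hP, hS'⟩
    refine ⟨hP, fun e' he' => ?_⟩
    rw [hS' e' he', Function.update_of_ne]
    rintro rfl
    exact he' (Set.mem_range_self e)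

theorem forces_present (E : Finset (Sym2 V)) (s : Board V r) (hfresh : ∀ e ∈ E, s e = none)
    (hdiag : ∀ e ∈ E, ¬ e.IsDiag) :
    Forces (fun s' => (∀ e ∈ E, s' e ≠ none) ∧ ∀ e ∉ E, s' e = s e) E.card s := by
  induction E using Finset.induction_on generalizing s with
  | empty => exact ⟨by simp, fun _ _ => rfl⟩
  | insert a E ha ih =>
    rw [Finset.card_insert_of_notMem ha]
    simp only [Finset.forall_mem_insert] at hfresh hdiag
    refine ⟨a, hfresh.1, hdiag.1, fun c => (ih (Function.update s a (some c)) ?_ hdiag.2).mono ?_⟩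
    · intro e he
      rw [Function.update_of_ne (ne_of_mem_of_not_mem he ha)]
      exact hfresh.2 e he
    · rintro s' ⟨hpresent, hsame⟩
      refine ⟨(Finset.forall_mem_insert ..).2 ⟨by simp [hsame a ha], hpresent⟩, fun e he => ?_⟩
      rw [Finset.mem_insert, not_or] at he
      rw [hsame e he.2, Function.update_of_ne he.1]

end Forces

section Copies

theorem map_fst_eq_iff {j : ι} {e : Sym2 (ι × V)} :
    Sym2.map Prod.fst e = s(j, j) ↔ e ∈ Set.range (Sym2.map (Prod.mk j : V → ι × V)) := by
  constructor
  · induction e with | _ p q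
    obtain ⟨i, v⟩ := p
    obtain ⟨i', v'⟩ := q
    intro h
    obtain ⟨rfl, rfl⟩ : i = j ∧ i' = j := by simpa using h
    exact ⟨s(v, v'), rfl⟩
  · rintro ⟨e, rfl⟩
    induction e with | _ v v'
    rfl

/-- The vertex `x j` of the `j`-th copy, for every index `j`. -/
def transversal (x : ι → V) (j : ι) : ι × V := (j, x j)

theorem transversal_injective (x : ι → V) : Function.Injective (transversal x) :=
  fun _ _ h => congrArg Prod.fst h

variable [DecidableEq V] [DecidableEq ι] {P : Board V r → Prop}

theorem forces_copies {n : ℕ} (hP : Forces P n empty) (J : Finset ι) :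
    Forces (fun S : Board (ι × V) r => (∀ j ∈ J, P (comap (Prod.mk j) S)) ∧
      ∀ e, (∀ j ∈ J, Sym2.map Prod.fst e ≠ s(j, j)) → S e = none) (J.card * n) empty := by
  induction J using Finset.induction_on with
  | empty =>
    rw [Finset.card_empty, Nat.zero_mul]
    exact ⟨by simp, fun _ _ => rfl⟩
  | insert a J ha ih =>
    rw [Finset.card_insert_of_notMem ha, Nat.succ_mul]
    refine ih.bind ?_
    rintro S ⟨hcopies, hnone⟩
    have hslice : comap (Prod.mk a) S = empty := by
      funext e
      refine hnone _ fun j hj h => ha ?_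
      rw [map_fst_eq_iff.2 (Set.mem_range_self e)] at h
      rwa [Sym2.diag_injective h]
    refine (forces_of_forces_comap (Prod.mk_right_injective a) n S (hslice ▸ hP)).mono ?_
    rintro S' ⟨hPa, hS'⟩
    refine ⟨(Finset.forall_mem_insert ..).2 ⟨hPa, fun j hj => ?_⟩, fun e he => ?_⟩
    · have : comap (Prod.mk j) S' = comap (Prod.mk j) S := by
        funext e
        refine hS' _ fun h => ha ?_
        rw [← map_fst_eq_iff, map_fst_eq_iff.2 (Set.mem_range_self e)] at h
        rwa [← Sym2.diag_injective h]
      rw [this]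
      exact hcopies j hj
    · rw [Finset.forall_mem_insert] at he
      rw [hS' e (map_fst_eq_iff.not.1 he.1)]
      exact hnone e he.2

/-- `S` consists of copies of a board, indexed by `ι`, together with links between the vertices
`x j` of distinct copies: the links along the edges of the template `H` have all been presented,
and no other edge between distinct copies has. -/
structure IsLinked (x : ι → V) (H : Finset (Sym2 ι)) (S : Board (ι × V) r) : Prop where
  link_ne_none : ∀ e ∈ H, S (Sym2.map (transversal x) e) ≠ none
  eq_link : ∀ e, S e ≠ none → ¬ (Sym2.map Prod.fst e).IsDiag →
    ∃ e' ∈ H, Sym2.map (transversal x) e' = e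

theorem forces_isLinked [Fintype ι] {Q : Board (ι × V) r → Prop} {n k : ℕ}
    (hP : Forces P n empty)
    (hQ : ∀ T : ι → Board V r, (∀ j, P (T j)) → ∃ (x : ι → V) (H : Finset (Sym2 ι)),
      H.card = k ∧ (∀ e ∈ H, ¬ e.IsDiag) ∧
      ∀ S : Board (ι × V) r, (∀ j, comap (Prod.mk j) S = T j) → IsLinked x H S → Q S) :
    Forces Q (Fintype.card ι * n + k) empty := by
  refine (forces_copies hP Finset.univ).bind ?_
  rintro S ⟨hcopies, hnone⟩
  obtain ⟨x, H, rfl, hdiag, hQ⟩ := hQ _ fun j => hcopies j (Finset.mem_univ j)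
  have hfst (e : Sym2 ι) : Sym2.map Prod.fst (Sym2.map (transversal x) e) = e := by
    induction e with | _ i j
    rfl
  rw [← Finset.card_image_of_injective H (Sym2.map.injective (transversal_injective x))]
  refine (forces_present (H.image (Sym2.map (transversal x))) S ?_ ?_).mono ?_
  · rw [Finset.forall_mem_image]
    intro e he
    refine hnone _ fun j _ h => hdiag e he ?_
    rw [← hfst e, h]
    exact Sym2.diag_isDiag j
  · rw [Finset.forall_mem_image]
    intro e he
    rw [Sym2.isDiag_map (transversal_injective x)]
    exact hdiag e he
  · rintro S' ⟨hpresent, hsame⟩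
    refine hQ S' (fun j => funext fun e => hsame _ ?_)
      ⟨fun e he => hpresent _ (Finset.mem_image_of_mem _ he), fun e he hcross => ?_⟩
    · rw [Finset.mem_image]
      rintro ⟨e', he', h⟩
      refine hdiag e' he' ?_
      rw [← hfst e', h, map_fst_eq_iff.2 (Set.mem_range_self e)]
      exact Sym2.diag_isDiag j
    · by_contra h
      rw [← Finset.mem_image] at h
      refine he ((hsame e h).trans (hnone e fun j _ hj => hcross ?_))
      rw [hj]
      exact Sym2.diag_isDiag j

end Copies

end Board

section Sparsity

open Board

variable {V ι : Type*} {r : ℕ}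

/-- The set of presented edges. -/
def Board.edges [Fintype V] (s : Board V r) : Finset (Sym2 V) := {e | s e ≠ none}

theorem Board.mem_edges [Fintype V] {s : Board V r} {e : Sym2 V} :
    e ∈ s.edges ↔ s e ≠ none := by
  simp [edges]

/-- The set of vertices which `U` contains in the `j`-th copy. -/
noncomputable def slice (U : Finset (ι × V)) (j : ι) : Finset V :=
  U.preimage (Prod.mk j) (Prod.mk_right_injective j).injOn

theorem mem_slice {U : Finset (ι × V)} {j : ι} {v : V} : v ∈ slice U j ↔ (j, v) ∈ U :=
  Finset.mem_preimage

theorem card_eq_sum_card_slice [DecidableEq ι] (U : Finset (ι × V)) :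
    U.card = ∑ j ∈ U.image Prod.fst, (slice U j).card := by
  rw [Finset.card_eq_sum_card_image Prod.fst U]
  refine Finset.sum_congr rfl fun j _ => Finset.card_nbij' Prod.snd (Prod.mk j) ?_ ?_ ?_ ?_
  · rintro ⟨i, v⟩ hp
    obtain ⟨hpU, rfl⟩ := Finset.mem_filter.1 (Finset.mem_coe.1 hp)
    exact mem_slice.2 hpU
  all_goals simp +contextual [Set.MapsTo, Set.LeftInvOn, mem_slice]

variable [DecidableEq V]

/-- Every nonempty vertex set `U` spans at most `(b * #U - c) / a` of the edges in `E`. -/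
def IsSparse (a b c : ℕ) (E : Finset (Sym2 V)) : Prop :=
  ∀ U : Finset V, U.Nonempty → a * (E ∩ U.sym2).card + c ≤ b * U.card

theorem isSparse_edges_empty [Fintype V] {a b c : ℕ} (hcb : c ≤ b) :
    IsSparse a b c (empty : Board V r).edges := by
  intro U hU
  have : (empty : Board V r).edges = ∅ := by simp [edges, empty]
  simpa [this] using hcb.trans (Nat.le_mul_of_pos_right b hU.card_pos)

variable [Fintype V] [Fintype ι] [DecidableEq ι]

theorem Board.IsLinked.card_edges_inter_sym2_le {S : Board (ι × V) r} {x : ι → V}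
    {H : Finset (Sym2 ι)} (hS : IsLinked x H S) (U : Finset (ι × V)) :
    (S.edges ∩ U.sym2).card ≤
      ∑ j ∈ U.image Prod.fst, ((comap (Prod.mk j) S).edges ∩ (slice U j).sym2).card +
      (H ∩ (U.image Prod.fst).sym2).card := by
  set J := U.image Prod.fst
  have hsub : S.edges ∩ U.sym2 ⊆
      (J.biUnion fun j => ((comap (Prod.mk j) S).edges ∩ (slice U j).sym2).image
        (Sym2.map (Prod.mk j))) ∪ (H ∩ J.sym2).image (Sym2.map (transversal x)) := by
    intro e he
    rw [Finset.mem_inter, mem_edges, Finset.mem_sym2_iff] at he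
    obtain ⟨hpresent, hU⟩ := he
    by_cases hdiag : (Sym2.map Prod.fst e).IsDiag
    · obtain ⟨j, hj⟩ : ∃ j, Sym2.map Prod.fst e = s(j, j) := ⟨_, (Sym2.diag_diagElem hdiag).symm⟩
      obtain ⟨e, rfl⟩ := map_fst_eq_iff.1 hj
      simp only [Sym2.mem_map, forall_exists_index, and_imp, forall_apply_eq_imp_iff₂] at hU
      refine Finset.mem_union_left _ (Finset.mem_biUnion.2
        ⟨j, Finset.mem_image_of_mem Prod.fst (hU _ e.out_fst_mem), Finset.mem_image_of_mem _ ?_⟩)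
      exact Finset.mem_inter.2 ⟨mem_edges.2 hpresent,
        Finset.mem_sym2_iff.2 fun v hv => mem_slice.2 (hU v hv)⟩
    · obtain ⟨e, he, rfl⟩ := hS.eq_link e hpresent hdiag
      simp only [Sym2.mem_map, forall_exists_index, and_imp, forall_apply_eq_imp_iff₂] at hU
      refine Finset.mem_union_right _ (Finset.mem_image_of_mem _ (Finset.mem_inter.2 ⟨he, ?_⟩))
      exact Finset.mem_sym2_iff.2 fun j hj => Finset.mem_image_of_mem Prod.fst (hU j hj)
  refine (Finset.card_le_card hsub).trans ((Finset.card_union_le _ _).trans ?_)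
  exact add_le_add (Finset.card_biUnion_le.trans (Finset.sum_le_sum fun j _ =>
    Finset.card_image_le)) Finset.card_image_le

theorem Board.IsLinked.isSparse_edges {a b c c' : ℕ} {S : Board (ι × V) r} {x : ι → V}
    {H : Finset (Sym2 ι)} (hS : IsLinked x H S)
    (hcopies : ∀ j, IsSparse a b c (comap (Prod.mk j) S).edges) (hH : IsSparse a c c' H) :
    IsSparse a b c' S.edges := by
  intro U hU
  set J := U.image Prod.fst
  have hslice : ∀ j ∈ J, (slice U j).Nonempty := by
    intro j hj
    obtain ⟨⟨j, v⟩, hp, rfl⟩ := Finset.mem_image.1 hj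
    exact ⟨v, mem_slice.2 hp⟩
  calc a * (S.edges ∩ U.sym2).card + c'
      ≤ a * (∑ j ∈ J, ((comap (Prod.mk j) S).edges ∩ (slice U j).sym2).card +
          (H ∩ J.sym2).card) + c' := by gcongr; exact hS.card_edges_inter_sym2_le U
    _ = ∑ j ∈ J, a * ((comap (Prod.mk j) S).edges ∩ (slice U j).sym2).card +
          (a * (H ∩ J.sym2).card + c') := by rw [mul_add, Finset.mul_sum, add_assoc]
    _ ≤ ∑ j ∈ J, a * ((comap (Prod.mk j) S).edges ∩ (slice U j).sym2).card + c * J.card := by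
        gcongr; exact hH J (hU.image _)
    _ = ∑ j ∈ J, (a * ((comap (Prod.mk j) S).edges ∩ (slice U j).sym2).card + c) := by
        rw [Finset.sum_add_distrib, Finset.sum_const, smul_eq_mul, mul_comm c]
    _ ≤ ∑ j ∈ J, b * (slice U j).card := Finset.sum_le_sum fun j hj => hcopies j _ (hslice j hj)
    _ = b * U.card := by rw [card_eq_sum_card_slice U, Finset.mul_sum]

end Sparsity

section Trees

open Board

variable {α V ι : Type*} {r m : ℕ}

/-- `κ` maps every edge of the template `E` to an edge of color `c`. -/
def Board.IsMonoCopy (s : Board V r) (c : Fin r) (E : Finset (Sym2 α)) (κ : α ↪ V) : Prop :=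
  ∀ e ∈ E, s (Sym2.map κ e) = some c

theorem eq_some_one_sub {a : Option (Fin 2)} {c : Fin 2} (hnone : a ≠ none) (hc : a ≠ some c) :
    a = some (1 - c) := by
  decide +revert

theorem Board.IsLinked.isMonoCopy_transversal {S : Board (ι × V) 2} {x : ι → V}
    {H : Finset (Sym2 ι)} {c : Fin 2} (hS : IsLinked x H S)
    (hc : ∀ e ∈ H, S (Sym2.map (transversal x) e) ≠ some c) :
    S.IsMonoCopy (1 - c) H ⟨transversal x, transversal_injective x⟩ :=
  fun e he => eq_some_one_sub (hS.link_ne_none e he) (hc e he)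

/-- The edges of the tree on `Fin (m + 1)` with root `0` and parent function `par`. -/
def treeEdges (par : Fin (m + 1) → Fin (m + 1)) : Finset (Sym2 (Fin (m + 1))) :=
  (Finset.univ.erase 0).image fun k => s(k, par k)

variable {par : Fin (m + 1) → Fin (m + 1)}

theorem mk_par_mem_treeEdges {k : Fin (m + 1)} (hk : k ≠ 0) : s(k, par k) ∈ treeEdges par :=
  Finset.mem_image_of_mem _ (Finset.mem_erase.2 ⟨hk, Finset.mem_univ k⟩)

theorem forall_mem_treeEdges {p : Sym2 (Fin (m + 1)) → Prop} :
    (∀ e ∈ treeEdges par, p e) ↔ ∀ k ≠ 0, p s(k, par k) := by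
  simp [treeEdges]

theorem not_isDiag_of_mem_treeEdges (hpar : ∀ k ≠ 0, par k < k) :
    ∀ e ∈ treeEdges par, ¬ e.IsDiag :=
  forall_mem_treeEdges.2 fun k hk => by simpa using (hpar k hk).ne'

theorem card_treeEdges (hpar : ∀ k ≠ 0, par k < k) : (treeEdges par).card = m := by
  rw [treeEdges, Finset.card_image_of_injOn]
  · simp
  · intro a ha b hb hab
    rcases Sym2.eq_iff.1 hab with h | h
    · exact h.1
    · exact absurd (h.2 ▸ hpar a (Finset.ne_of_mem_erase ha))
        (h.1 ▸ hpar b (Finset.ne_of_mem_erase hb)).asymm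

theorem isSparse_treeEdges (hpar : ∀ k ≠ 0, par k < k) : IsSparse 1 1 1 (treeEdges par) := by
  intro J hJ
  have hsub : treeEdges par ∩ J.sym2 ⊆ (J.erase (J.min' hJ)).image fun k => s(k, par k) := by
    intro e he
    obtain ⟨htree, hmem⟩ := Finset.mem_inter.1 he
    obtain ⟨k, hk, rfl⟩ := Finset.mem_image.1 htree
    rw [Finset.mk_mem_sym2_iff] at hmem
    refine Finset.mem_image_of_mem _ (Finset.mem_erase.2 ⟨fun h => ?_, hmem.1⟩)
    exact (hpar k (Finset.ne_of_mem_erase hk)).not_ge (h ▸ J.min'_le _ hmem.2)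
  have hle := (Finset.card_le_card hsub).trans Finset.card_image_le
  rw [Finset.card_erase_of_mem (J.min'_mem hJ)] at hle
  have := hJ.card_pos
  omega

/-- `s` contains a copy of color `c` of the subtree spanned by the vertices up to `i`. -/
def Board.HasMonoSubtree (par : Fin (m + 1) → Fin (m + 1)) (i : Fin (m + 1)) (c : Fin r)
    (s : Board V r) : Prop :=
  ∃ κ : Fin (m + 1) → V, Set.InjOn κ (Set.Iic i) ∧
    ∀ k ≤ i, k ≠ 0 → s s(κ k, κ (par k)) = some c

theorem hasMonoSubtree_zero [Nonempty V] (c : Fin r) (s : Board V r) :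
    s.HasMonoSubtree par 0 c :=
  ⟨fun _ => Classical.arbitrary V, fun _ ha _ hb _ =>
    (Fin.le_zero_iff.1 ha).trans (Fin.le_zero_iff.1 hb).symm,
    fun _ hk hk0 => absurd (Fin.le_zero_iff.1 hk) hk0⟩

theorem hasMonoSubtree_last {c : Fin r} {s : Board V r} :
    s.HasMonoSubtree par (Fin.last m) c ↔ ∃ κ, s.IsMonoCopy c (treeEdges par) κ := by
  constructor
  · rintro ⟨κ, hinj, hc⟩
    exact ⟨⟨κ, fun a b h => hinj (Fin.le_last a) (Fin.le_last b) h⟩,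
      forall_mem_treeEdges.2 fun k hk => hc k (Fin.le_last k) hk⟩
  · rintro ⟨κ, hκ⟩
    exact ⟨κ, κ.injective.injOn, fun k _ hk => hκ _ (mk_par_mem_treeEdges hk)⟩

theorem Board.HasMonoSubtree.of_comap {i : Fin (m + 1)} {c : Fin r} {S : Board (ι × V) r} {j : ι}
    (h : (comap (Prod.mk j) S).HasMonoSubtree par i c) : S.HasMonoSubtree par i c := by
  obtain ⟨κ, hinj, hc⟩ := h
  exact ⟨fun k => (j, κ k), fun a ha b hb hab => hinj ha hb (congrArg Prod.snd hab), hc⟩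

theorem hasMonoSubtree_succ (hpar : ∀ k ≠ 0, par k < k) {i : Fin m} {c : Fin r}
    {S : Board (ι × V) r} {j : ι} {κ : Fin (m + 1) → V} (hinj : Set.InjOn κ (Set.Iic i.castSucc))
    (hc : ∀ k ≤ i.castSucc, k ≠ 0 → S s((j, κ k), (j, κ (par k))) = some c) {p : ι × V}
    (hpj : p.1 ≠ j) (hp : S s((j, κ (par i.succ)), p) = some c) :
    S.HasMonoSubtree par i.succ c := by
  have hle {k : Fin (m + 1)} (hk : k ≤ i.succ) (hk' : k ≠ i.succ) : k ≤ i.castSucc :=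
    Fin.le_castSucc_iff.2 (lt_of_le_of_ne hk hk')
  refine ⟨Function.update (fun k => (j, κ k)) i.succ p, fun a ha b hb hab => ?_,
    fun k hk hk0 => ?_⟩
  · by_cases ha' : a = i.succ <;> by_cases hb' : b = i.succ
    · rw [ha', hb']
    · subst ha'
      simp only [Function.update_self, Function.update_of_ne hb'] at hab
      exact absurd (congrArg Prod.fst hab) hpj
    · subst hb'
      simp only [Function.update_self, Function.update_of_ne ha'] at hab
      exact absurd (congrArg Prod.fst hab).symm hpj
    · simp only [Function.update_of_ne ha', Function.update_of_ne hb'] at hab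
      exact hinj (hle ha ha') (hle hb hb') (congrArg Prod.snd hab)
  · have hpark := hpar k hk0
    rw [Function.update_of_ne (hpark.trans_le hk).ne]
    rcases eq_or_ne k i.succ with rfl | hk'
    · rwa [Function.update_self, Sym2.eq_swap]
    · rw [Function.update_of_ne hk']
      exact hc k (hle hk hk') hk0

/-- The invariant under which Builder grows a tree: the board is a forest, and it contains a copy
of color `0` of the subtree up to `i` or a monochromatic copy of the whole tree. -/
def Board.IsTreeStage [Fintype V] [DecidableEq V] (par : Fin (m + 1) → Fin (m + 1))
    (i : Fin (m + 1)) (s : Board V 2) : Prop :=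
  IsSparse 1 1 1 s.edges ∧
    (s.HasMonoSubtree par i 0 ∨ ∃ c, s.HasMonoSubtree par (Fin.last m) c)

theorem exists_parent_vertex [Nonempty V] (par : Fin (m + 1) → Fin (m + 1)) (i : Fin m)
    (c : Fin r) (s : Board V r) :
    ∃ x : V, s.HasMonoSubtree par i.castSucc c → ∃ κ : Fin (m + 1) → V,
      κ (par i.succ) = x ∧ Set.InjOn κ (Set.Iic i.castSucc) ∧
        ∀ k ≤ i.castSucc, k ≠ 0 → s s(κ k, κ (par k)) = some c := by
  by_cases h : s.HasMonoSubtree par i.castSucc c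
  · obtain ⟨κ, hκ⟩ := h
    exact ⟨_, fun _ => ⟨κ, rfl, hκ⟩⟩
  · exact ⟨Classical.arbitrary V, fun h' => absurd h' h⟩

/-- Builder links `m + 1` copies along the tree itself, through the vertices at which the next
vertex is to be attached. A link of color `0` extends the subtree of one of the copies; if there
is none, then the links form a tree of color `1`. -/
theorem forces_isTreeStage_succ [Nonempty V] [Fintype V] [DecidableEq V]
    (hpar : ∀ k ≠ 0, par k < k) {i : Fin m} {n : ℕ}
    (h : Forces (fun s : Board V 2 => s.IsTreeStage par i.castSucc) n empty) :
    Forces (fun S : Board (Fin (m + 1) × V) 2 => S.IsTreeStage par i.succ)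
      (Fintype.card (Fin (m + 1)) * n + m) empty := by
  refine forces_isLinked h fun T hT => ?_
  choose x hx using fun j => exists_parent_vertex par i 0 (T j)
  refine ⟨x, treeEdges par, card_treeEdges hpar, not_isDiag_of_mem_treeEdges hpar,
    fun S hST hS => ⟨hS.isSparse_edges (fun j => hST j ▸ (hT j).1) (isSparse_treeEdges hpar), ?_⟩⟩
  by_cases hfull : ∃ j c, (T j).HasMonoSubtree par (Fin.last m) c
  · obtain ⟨j, c, hj⟩ := hfull
    exact .inr ⟨c, .of_comap (j := j) ((hST j).symm ▸ hj)⟩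
  by_cases hlinks : ∀ e ∈ treeEdges par, S (Sym2.map (transversal x) e) ≠ some 0
  · exact .inr ⟨1, hasMonoSubtree_last.2 ⟨_, hS.isMonoCopy_transversal hlinks⟩⟩
  · simp only [forall_mem_treeEdges, not_forall, ne_eq, not_not] at hlinks
    obtain ⟨k, hk, hlink⟩ := hlinks
    obtain ⟨κ, hroot, hinj, hc⟩ := hx k ((hT k).2.resolve_right fun ⟨c, h⟩ => hfull ⟨k, c, h⟩)
    rw [← hST k] at hc
    refine .inl (hasMonoSubtree_succ (p := transversal x (par k)) hpar hinj hc (hpar k hk).ne ?_)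
    rw [hroot]
    exact hlink

theorem exists_forces_isMonoCopy_treeEdges (hpar : ∀ k ≠ 0, par k < k) :
    ∃ (V : Type) (_ : Fintype V) (_ : DecidableEq V) (n : ℕ), Forces (fun s : Board V 2 =>
      IsSparse 1 1 1 s.edges ∧ ∃ c κ, s.IsMonoCopy c (treeEdges par) κ) n empty := by
  suffices h : ∀ i : Fin (m + 1), ∃ (V : Type) (_ : Nonempty V) (_ : Fintype V)
      (_ : DecidableEq V) (n : ℕ),
      Forces (fun s : Board V 2 => s.IsTreeStage par i) n empty by
    obtain ⟨V, _, hV, hdec, n, hn⟩ := h (Fin.last m)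
    refine ⟨V, hV, hdec, n, hn.mono fun s hs => ⟨hs.1, ?_⟩⟩
    simp only [← hasMonoSubtree_last]
    exact hs.2.elim (fun h => ⟨0, h⟩) id
  intro i
  induction i using Fin.induction with
  | zero => exact ⟨Unit, inferInstance, inferInstance, inferInstance, 0,
      isSparse_edges_empty le_rfl, .inl (hasMonoSubtree_zero 0 _)⟩
  | succ i ih =>
    obtain ⟨V, _, _, _, n, hn⟩ := ih
    exact ⟨Fin (m + 1) × V, inferInstance, inferInstance, inferInstance, _,
      forces_isTreeStage_succ hpar hn⟩

end Trees

section Core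

open Board

variable {α V : Type*} [DecidableEq V]

theorem card_image_map (κ : α ↪ V) (Z : Finset (Sym2 α)) :
    (Z.image (Sym2.map κ)).card = Z.card :=
  Finset.card_image_of_injective Z (Sym2.map.injective κ.injective)

theorem image_map_subset_sym2 [Fintype α] (κ : α ↪ V) (Z : Finset (Sym2 α)) :
    Z.image (Sym2.map κ) ⊆ (Finset.univ.map κ).sym2 := by
  rw [Finset.map_eq_image, Finset.sym2_image, Finset.sym2_univ]
  exact Finset.image_subset_image (Finset.subset_univ _)

theorem image_map_inter_sym2 [DecidableEq α] (κ : α ↪ V) (Z : Finset (Sym2 α)) (U : Finset V) :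
    Z.image (Sym2.map κ) ∩ U.sym2 =
      (Z ∩ (U.preimage κ κ.injective.injOn).sym2).image (Sym2.map κ) := by
  have h (e : Sym2 α) : Sym2.map κ e ∈ U.sym2 ↔ e ∈ (U.preimage κ κ.injective.injOn).sym2 := by
    simp [Finset.mem_sym2_iff]
  ext e
  simp only [Finset.mem_inter, Finset.mem_image]
  constructor
  · rintro ⟨⟨e, he, rfl⟩, hU⟩
    exact ⟨e, ⟨he, (h e).1 hU⟩, rfl⟩
  · rintro ⟨e, ⟨he, hU⟩, rfl⟩
    exact ⟨⟨e, he, rfl⟩, (h e).2 hU⟩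

variable {F : Finset (Sym2 V)} {T Z : Finset (Sym2 α)} {κ : α ↪ V} [Fintype α]

theorem IsSparse.map_notMem (hF : IsSparse 1 1 1 F) (hTF : T.image (Sym2.map κ) ⊆ F)
    (hT : T.card + 1 = Fintype.card α) {e : Sym2 α} (he : e ∉ T) : Sym2.map κ e ∉ F := by
  classical
  intro heF
  have hα : (Finset.univ : Finset α).Nonempty := Finset.card_pos.1 (by simp [← hT])
  have hsub : (insert e T).image (Sym2.map κ) ⊆ F ∩ (Finset.univ.map κ).sym2 := by
    refine Finset.subset_inter ?_ (image_map_subset_sym2 κ _)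
    rw [Finset.image_insert]
    exact Finset.insert_subset heF hTF
  have hle := Finset.card_le_card hsub
  rw [card_image_map, Finset.card_insert_of_notMem he] at hle
  have := hF _ (hα.map (f := κ))
  rw [Finset.card_map, Finset.card_univ] at this
  omega

variable [DecidableEq α]

theorem IsSparse.card_inter_sym2_le (hF : IsSparse 1 1 1 F) (hTF : T.image (Sym2.map κ) ⊆ F)
    (hT : T.card + 1 = Fintype.card α) (U : Finset V) :
    (F ∩ U.sym2).card ≤ (T ∩ (U.preimage κ κ.injective.injOn).sym2).card +
      (U \ Finset.univ.map κ).card := by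
  set R := Finset.univ.map κ
  have hR : R.Nonempty := Finset.card_pos.1 (by simp [R, ← hT])
  have hsub : F ∩ U.sym2 ∪ T.image (Sym2.map κ) ⊆ F ∩ (U ∪ R).sym2 := by
    refine Finset.union_subset
      (Finset.inter_subset_inter_left (Finset.sym2_mono Finset.subset_union_left))
      (Finset.subset_inter hTF ((image_map_subset_sym2 κ T).trans
        (Finset.sym2_mono Finset.subset_union_right)))
  have hinter : (F ∩ U.sym2 ∩ T.image (Sym2.map κ)).card ≤
      (T ∩ (U.preimage κ κ.injective.injOn).sym2).card := by
    rw [← card_image_map κ (T ∩ _), ← image_map_inter_sym2]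
    exact Finset.card_le_card fun e he => by simp_all
  have hunion := Finset.card_union_add_card_inter (F ∩ U.sym2) (T.image (Sym2.map κ))
  have hle := Finset.card_le_card hsub
  have hsparse := hF (U ∪ R) hR.inr
  rw [← Finset.card_sdiff_add_card] at hsparse
  rw [card_image_map] at hunion
  have hcard : R.card = Fintype.card α := by simp [R]
  omega

/-- As `T` spans the core `κ`, a vertex outside the core accounts for at most one edge of the forest
`F`. -/
theorem IsSparse.union_image {a b c : ℕ} (hF : IsSparse 1 1 1 F)
    (hTF : T.image (Sym2.map κ) ⊆ F) (hT : T.card + 1 = Fintype.card α)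
    (hTZ : IsSparse a b c (T ∪ Z)) (hab : a ≤ b) (hcb : c ≤ b) :
    IsSparse a b c (F ∪ Z.image (Sym2.map κ)) := by
  intro U hU
  set J := U.preimage κ κ.injective.injOn
  have hcard : ((F ∪ Z.image (Sym2.map κ)) ∩ U.sym2).card ≤
      (F ∩ U.sym2).card + ((Z \ T) ∩ J.sym2).card := by
    have hunion : F ∪ Z.image (Sym2.map κ) = F ∪ (Z \ T).image (Sym2.map κ) := by
      rw [Finset.image_sdiff _ _ (Sym2.map.injective κ.injective)]
      ext e
      have := @hTF e
      simp only [Finset.mem_union, Finset.mem_sdiff]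
      tauto
    rw [hunion, Finset.union_inter_distrib_right, image_map_inter_sym2]
    exact (Finset.card_union_le _ _).trans (add_le_add le_rfl Finset.card_image_le)
  rcases J.eq_empty_or_nonempty with hJ | hJ
  · have hFU := hF U hU
    rw [hJ, Finset.sym2_empty, Finset.inter_empty, Finset.card_empty] at hcard
    nlinarith
  have htree := hF.card_inter_sym2_le hTF hT U
  have hcore := hTZ J hJ
  rw [← Finset.union_sdiff_self_eq_union, Finset.union_inter_distrib_right,
    Finset.card_union_of_disjoint (Finset.disjoint_sdiff.mono Finset.inter_subset_left
      Finset.inter_subset_left)] at hcore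
  have hU : U.card = J.card + (U \ Finset.univ.map κ).card := by
    rw [← Finset.card_inter_add_card_sdiff U (Finset.univ.map κ), ← Finset.card_map (s := J) κ]
    congr 2
    ext v
    simp only [J, Finset.mem_inter, Finset.mem_map, Finset.mem_univ, true_and,
      Finset.mem_preimage]
    constructor
    · rintro ⟨hv, x, rfl⟩
      exact ⟨x, hv, rfl⟩
    · rintro ⟨x, hx, rfl⟩
      exact ⟨hx, x, rfl⟩
  nlinarith

end Core

section Triangles

open Board

theorem forces_present_image {α V : Type*} {r : ℕ} [Fintype V] [DecidableEq V]
    (κ : α ↪ V) {Z : Finset (Sym2 α)} (s : Board V r)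
    (hfresh : ∀ e ∈ Z, s (Sym2.map κ e) = none) (hdiag : ∀ e ∈ Z, ¬ e.IsDiag) :
    Forces (fun s' => (∀ e ∈ Z, s' (Sym2.map κ e) ≠ none) ∧
      (∀ e ∉ Z, s' (Sym2.map κ e) = s (Sym2.map κ e)) ∧
      s'.edges = s.edges ∪ Z.image (Sym2.map κ)) Z.card s := by
  classical
  rw [← card_image_map κ]
  refine (forces_present (Z.image (Sym2.map κ)) s (Finset.forall_mem_image.2 hfresh)
    (Finset.forall_mem_image.2 fun e he => ?_)).mono ?_
  · rw [Sym2.isDiag_map κ.injective]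
    exact hdiag e he
  · rintro s' ⟨hpresent, hsame⟩
    refine ⟨fun e he => hpresent _ (Finset.mem_image_of_mem _ he), fun e he => hsame _ ?_, ?_⟩
    · rwa [(Sym2.map.injective κ.injective).mem_finset_image]
    · ext e
      by_cases he : e ∈ Z.image (Sym2.map κ)
      · simp only [Finset.mem_union, he, or_true, mem_edges, hpresent e he, ne_eq,
          not_false_eq_true]
      · simp only [Finset.mem_union, he, or_false, mem_edges, hsame e he]

theorem Board.IsMonoCopy.trans {α β V : Type*} {r : ℕ} [DecidableEq α] {s : Board V r} {c : Fin r}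
    {E : Finset (Sym2 α)} {E' : Finset (Sym2 β)} {κ : α ↪ V} {ω : β ↪ α}
    (h : s.IsMonoCopy c E κ) (hω : E'.image (Sym2.map ω) ⊆ E) :
    s.IsMonoCopy c E' (ω.trans κ) := by
  intro e he
  rw [Function.Embedding.coe_trans, ← Sym2.map_map]
  exact h _ (hω (Finset.mem_image_of_mem _ he))

/-- The 6-cycle. -/
def hexagon : Finset (Sym2 (Fin 6)) := Finset.univ.image fun i => s(i, i + 1)

/-- The triangle of chords of the 6-cycle. -/
def chords : Finset (Sym2 (Fin 6)) := {s(0, 2), s(2, 4), s(4, 0)}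

/-- The edges of the triangle. -/
def triangle : Finset (Sym2 (Fin 3)) := {s(0, 1), s(1, 2), s(2, 0)}

theorem exists_image_triangle_subset :
    ∀ e ∈ chords, ∃ ω : Fin 3 ↪ Fin 6, triangle.image (Sym2.map ω) ⊆ insert e hexagon := by
  simp only [chords, Finset.forall_mem_insert, Finset.mem_singleton, forall_eq]
  exact ⟨⟨⟨![0, 1, 2], by decide⟩, by decide⟩, ⟨⟨![2, 3, 4], by decide⟩, by decide⟩,
    ⟨⟨![4, 5, 0], by decide⟩, by decide⟩⟩

/-- A chord in the color of the hexagon closes a triangle, and otherwise the three chords form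
one. -/
theorem exists_isMonoCopy_triangle {V : Type*} {s : Board V 2} {c : Fin 2} {ω : Fin 6 ↪ V}
    (hhex : s.IsMonoCopy c hexagon ω) (hchords : ∀ e ∈ chords, s (Sym2.map ω e) ≠ none) :
    ∃ c κ, s.IsMonoCopy c triangle κ := by
  by_cases h : ∃ e ∈ chords, s (Sym2.map ω e) = some c
  · obtain ⟨e, he, hc⟩ := h
    obtain ⟨ω', hω'⟩ := exists_image_triangle_subset e he
    have hinsert : s.IsMonoCopy c (insert e hexagon) ω := (Finset.forall_mem_insert ..).2 ⟨hc, hhex⟩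
    exact ⟨c, _, hinsert.trans hω'⟩
  · push Not at h
    have hother : s.IsMonoCopy (1 - c) chords ω :=
      fun e he => eq_some_one_sub (hchords e he) (h e he)
    exact ⟨1 - c, _, hother.trans (ω := ⟨![0, 2, 4], by decide⟩) (by decide)⟩

theorem isSparse_of_claims {V : Type*} [Fintype V] [DecidableEq V] {k l : ℕ} {E : Finset (Sym2 V)}
    (claim : V → Fin l → V)
    (h : ∀ e ∈ E, k ≤ Finset.card {p : V × Fin l | s(p.1, claim p.1 p.2) = e}) :
    IsSparse k l 0 E := by
  intro U _
  have hmaps : ∀ e ∈ E ∩ U.sym2, k ≤ Finset.card {p ∈ U ×ˢ Finset.univ |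
      s(p.1, claim p.1 p.2) = e} := by
    intro e he
    obtain ⟨heE, heU⟩ := Finset.mem_inter.1 he
    refine (h e heE).trans (Finset.card_le_card fun p hp => ?_)
    obtain ⟨-, rfl⟩ := Finset.mem_filter.1 hp
    simpa using (Finset.mk_mem_sym2_iff.1 heU).1
  calc k * (E ∩ U.sym2).card + 0
      = ∑ _e ∈ E ∩ U.sym2, k := by rw [Finset.sum_const, smul_eq_mul, mul_comm, add_zero]
    _ ≤ _ := Finset.sum_le_sum hmaps
    _ ≤ (U ×ˢ (Finset.univ : Finset (Fin l))).card := by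
        rw [← Finset.card_biUnion fun _ _ _ _ hne => Finset.disjoint_left.2 fun p hp hp' =>
          hne ((Finset.mem_filter.1 hp).2.symm.trans (Finset.mem_filter.1 hp').2)]
        exact Finset.card_le_card (Finset.biUnion_subset.2 fun e _ => Finset.filter_subset _ _)
    _ = l * U.card := by rw [Finset.card_product, Finset.card_univ, Fintype.card_fin, mul_comm]

/-- Up to three vertices span at most a complete graph, four vertices at most a complete graph
minus an edge by 3-colorability, and five or more at most `3 * n / 2` edges. -/
theorem IsSparse.of_coloring {V : Type*} [DecidableEq V] {E : Finset (Sym2 V)}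
    (hE : IsSparse 2 3 0 E) (col : V → Fin 3) (hcol : ∀ e ∈ E, ¬ (Sym2.map col e).IsDiag) :
    IsSparse 36 61 42 E := by
  intro U hU
  have hsparse := hE U hU
  have hsub : E ∩ U.sym2 ⊆ U.offDiag.image Sym2.mk.uncurry := by
    intro e he
    obtain ⟨heE, heU⟩ := Finset.mem_inter.1 he
    induction e with | _ u v
    rw [Finset.mk_mem_sym2_iff] at heU
    exact Finset.mem_image_of_mem Sym2.mk.uncurry (a := (u, v)) (Finset.mem_offDiag.2
      ⟨heU.1, heU.2, fun huv => hcol _ heE (congrArg col huv)⟩)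
  have hchoose := Finset.card_le_card hsub
  rw [Sym2.card_image_offDiag] at hchoose
  have hpos := hU.card_pos
  have hfour (h : U.card = 4) : (E ∩ U.sym2).card < 6 := by
    obtain ⟨u, hu, v, hv, huv, hc⟩ := Finset.exists_ne_map_eq_of_card_lt_of_maps_to
      (s := U) (t := Finset.univ) (f := col) (by simp [h]) (by simp [Set.MapsTo])
    have hssub : E ∩ U.sym2 ⊂ U.offDiag.image Sym2.mk.uncurry := by
      refine (Finset.ssubset_iff_of_subset hsub).2 ⟨s(u, v), Finset.mem_image_of_mem Sym2.mk.uncurry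
        (a := (u, v)) (Finset.mem_offDiag.2 ⟨hu, hv, huv⟩), fun he => ?_⟩
      exact hcol _ (Finset.mem_inter.1 he).1 (by simpa using hc)
    have := Finset.card_lt_card hssub
    rwa [Sym2.card_image_offDiag, h] at this
  by_cases hcard : U.card ≤ 5
  · generalize U.card = n, (E ∩ U.sym2).card = m at hsparse hchoose hfour hpos hcard ⊢
    interval_cases n <;> simp only [Nat.choose] at hchoose <;> omega
  · omega

end Triangles

section Spider

open Board

/-- The parent function of the spider with center `0`, in which three legs of length two alternate
with three legs of length three. -/
def spiderParent (k : Fin 16) : Fin 16 :=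
  if k ∈ ({0, 1, 3, 6, 8, 11, 13} : Finset (Fin 16)) then 0 else k - 1

theorem spiderParent_lt : ∀ k ≠ 0, spiderParent k < k := by
  decide

/-- The edges of the spider, the tree which Builder forces first. -/
def spider : Finset (Sym2 (Fin 16)) := treeEdges spiderParent

theorem card_spider : spider.card + 1 = Fintype.card (Fin 16) := by
  rw [spider, card_treeEdges spiderParent_lt, Fintype.card_fin]

/-- The leaves of the spider. Consecutive ones lie at distance five, so that an edge between them
closes a 6-cycle. -/
def leaf : Fin 6 ↪ Fin 16 := ⟨![2, 5, 7, 10, 12, 15], by decide⟩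

/-- The 6-cycle through the leaves, which Builder presents once the spider is monochromatic. -/
def leafHexagon : Finset (Sym2 (Fin 16)) := hexagon.image (Sym2.map leaf)

/-- The 6-cycle closed by the edge between the leaves `2` and `5`, starting at the center. -/
def legCycle : Fin 6 ↪ Fin 16 := ⟨![0, 1, 2, 5, 4, 3], by decide⟩

/-- The symmetries of the spider which take the first two leaves to each pair of consecutive
leaves. -/
def spiderSymmetry : Fin 6 → Equiv.Perm (Fin 16) :=
  let rotation := c[1, 6, 11] * c[2, 7, 12] * c[3, 8, 13] * c[4, 9, 14] * c[5, 10, 15]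
  let reflection := c[1, 6] * c[2, 7] * c[8, 13] * c[9, 14] * c[10, 15]
  ![1, reflection, rotation, rotation * reflection, rotation ^ 2, rotation ^ 2 * reflection]

theorem image_spiderSymmetry_spider :
    ∀ j, spider.image (Sym2.map (spiderSymmetry j)) = spider := by
  decide +kernel

theorem image_spiderSymmetry_leafHexagon :
    ∀ j, leafHexagon.image (Sym2.map (spiderSymmetry j)) = leafHexagon := by
  decide +kernel

theorem image_legCycle_subset : ∀ j, hexagon.image
    (Sym2.map (legCycle.trans (spiderSymmetry j).toEmbedding)) ⊆
      insert s(leaf j, leaf (j + 1)) spider := by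
  decide +kernel

theorem exists_isMonoCopy_hexagon {V : Type*} {s : Board V 2} {c : Fin 2} {κ : Fin 16 ↪ V}
    (hspider : s.IsMonoCopy c spider κ) (hleaf : ∀ e ∈ leafHexagon, s (Sym2.map κ e) ≠ none) :
    ∃ j c', s.IsMonoCopy c' hexagon (legCycle.trans ((spiderSymmetry j).toEmbedding.trans κ)) ∨
      s.IsMonoCopy c' hexagon (leaf.trans ((spiderSymmetry j).toEmbedding.trans κ)) := by
  by_cases h : ∃ j, s (Sym2.map κ s(leaf j, leaf (j + 1))) = some c
  · obtain ⟨j, hj⟩ := h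
    have hinsert : s.IsMonoCopy c (insert s(leaf j, leaf (j + 1)) spider) κ :=
      (Finset.forall_mem_insert ..).2 ⟨hj, hspider⟩
    exact ⟨j, c, .inl (hinsert.trans (image_legCycle_subset j))⟩
  · have hother : s.IsMonoCopy (1 - c) leafHexagon κ := by
      refine fun e he => eq_some_one_sub (hleaf e he) fun hc => h ?_
      simp only [leafHexagon, hexagon, Finset.image_image, Finset.mem_image, Finset.mem_univ,
        true_and] at he
      obtain ⟨j, rfl⟩ := he
      exact ⟨j, hc⟩
    exact ⟨0, 1 - c, .inr (hother.trans subset_rfl)⟩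

theorem disjoint_chords_legCycle :
    Disjoint (spider ∪ leafHexagon) (chords.image (Sym2.map legCycle)) := by
  decide +kernel

theorem disjoint_chords_leaf :
    Disjoint (spider ∪ leafHexagon) (chords.image (Sym2.map leaf)) := by
  decide +kernel

/-- Row `v` of the matrix lists the other ends of the edges that `v` claims, and the last vector is
a proper 3-coloring. -/
theorem isSparse_legCycle :
    IsSparse 36 61 42 (spider ∪ (leafHexagon ∪ chords.image (Sym2.map legCycle))) := by
  refine .of_coloring (isSparse_of_claims
    ![![1, 3, 2], ![0, 2, 2], ![0, 4, 4], ![0, 4, 4], ![5, 0, 0], ![4, 2, 2], ![0, 0, 7],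
      ![6, 5, 5], ![0, 0, 9], ![8, 10, 10], ![7, 7, 12], ![0, 0, 12], ![11, 10, 15],
      ![0, 0, 14], ![13, 15, 15], ![12, 2, 2]] ?_)
    ![0, 1, 2, 2, 1, 0, 1, 2, 1, 0, 1, 1, 0, 1, 0, 1] ?_ <;> decide +kernel

theorem isSparse_leaf :
    IsSparse 36 61 42 (spider ∪ (leafHexagon ∪ chords.image (Sym2.map leaf))) := by
  refine .of_coloring (isSparse_of_claims
    ![![1, 6, 11], ![0, 2, 2], ![5, 7, 7], ![0, 0, 4], ![3, 5, 5], ![2, 7, 7], ![0, 7, 7],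
      ![10, 12, 12], ![0, 0, 9], ![8, 10, 10], ![7, 12, 12], ![0, 12, 12], ![15, 2, 2],
      ![0, 0, 14], ![13, 15, 15], ![12, 2, 2]] ?_)
    ![0, 1, 0, 1, 0, 1, 1, 2, 1, 2, 0, 2, 1, 1, 0, 2] ?_ <;> decide +kernel

theorem card_hexagon : hexagon.card = 6 := by
  decide

theorem card_chords : chords.card = 3 := by
  decide

theorem not_isDiag_of_mem_chords : ∀ e ∈ chords, ¬ e.IsDiag := by
  decide

variable {V : Type*} [Fintype V] [DecidableEq V]

theorem forces_triangle_of_hexagon {s : Board V 2} {c : Fin 2} {F : Finset (Sym2 V)}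
    {κ : Fin 16 ↪ V} {ω : Fin 6 ↪ Fin 16} (hF : IsSparse 1 1 1 F)
    (hspider : spider.image (Sym2.map κ) ⊆ F)
    (hedges : s.edges = F ∪ leafHexagon.image (Sym2.map κ))
    (hdisj : Disjoint (spider ∪ leafHexagon) (chords.image (Sym2.map ω)))
    (hsparse : IsSparse 36 61 42 (spider ∪ (leafHexagon ∪ chords.image (Sym2.map ω))))
    (hhex : s.IsMonoCopy c hexagon (ω.trans κ)) :
    Forces (fun s : Board V 2 => IsSparse 36 61 42 s.edges ∧ ∃ c κ, s.IsMonoCopy c triangle κ)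
      3 s := by
  have hfresh : ∀ e ∈ chords, s (Sym2.map (ω.trans κ) e) = none := by
    intro e he
    have hnot := Finset.disjoint_right.1 hdisj (Finset.mem_image_of_mem _ he)
    rw [Finset.mem_union, not_or] at hnot
    rw [← not_ne_iff, ← mem_edges, hedges, Function.Embedding.coe_trans, ← Sym2.map_map,
      Finset.mem_union, not_or, (Sym2.map.injective κ.injective).mem_finset_image]
    exact ⟨hF.map_notMem hspider card_spider hnot.1, hnot.2⟩
  have hforces := forces_present_image (ω.trans κ) s hfresh not_isDiag_of_mem_chords
  rw [card_chords] at hforces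
  refine hforces.mono ?_
  rintro s' ⟨hpresent, hsame, hedges'⟩
  refine ⟨?_, exists_isMonoCopy_triangle (c := c) (ω := ω.trans κ) (fun e he => ?_) hpresent⟩
  · have himage : chords.image (Sym2.map (ω.trans κ)) =
        (chords.image (Sym2.map ω)).image (Sym2.map κ) := by
      rw [Finset.image_image, ← Sym2.map_comp, Function.Embedding.coe_trans]
    rw [hedges', hedges, himage, Finset.union_assoc, ← Finset.image_union]
    exact hF.union_image hspider card_spider hsparse (by norm_num) (by norm_num)
  · rw [hsame e fun he' => by simpa using (hfresh e he').symm.trans (hhex e he)]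
    exact hhex e he

theorem forces_triangle_of_spider {s : Board V 2} {c : Fin 2} {κ : Fin 16 ↪ V}
    (hs : IsSparse 1 1 1 s.edges) (hspider : s.IsMonoCopy c spider κ) :
    Forces (fun s : Board V 2 => IsSparse 36 61 42 s.edges ∧ ∃ c κ, s.IsMonoCopy c triangle κ)
      (6 + 3) s := by
  have hsub : spider.image (Sym2.map κ) ⊆ s.edges :=
    Finset.image_subset_iff.2 fun e he => mem_edges.2 (by simp [hspider e he])
  have hdisj : ∀ e ∈ leafHexagon, e ∉ spider := by decide +kernel
  have hcard : leafHexagon.card = 6 := by rw [leafHexagon, card_image_map, card_hexagon]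
  have hfresh : ∀ e ∈ leafHexagon, s (Sym2.map κ e) = none := fun e he =>
    not_ne_iff.1 (mem_edges.not.1 (hs.map_notMem hsub card_spider (hdisj e he)))
  refine Forces.bind ?_ (hcard ▸ forces_present_image κ s hfresh (by decide +kernel))
  rintro s' ⟨hpresent, hsame, hedges⟩
  have hspider' : s'.IsMonoCopy c spider κ := fun e he =>
    (hsame e fun he' => hdisj e he' he).trans (hspider e he)
  obtain ⟨j, c', hhex⟩ := exists_isMonoCopy_hexagon hspider' hpresent
  have himage (E : Finset (Sym2 (Fin 16))) :
      E.image (Sym2.map ((spiderSymmetry j).toEmbedding.trans κ)) =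
        (E.image (Sym2.map (spiderSymmetry j))).image (Sym2.map κ) := by
    rw [Finset.image_image, ← Sym2.map_comp]
    rfl
  rw [← image_spiderSymmetry_spider j, ← himage] at hsub
  rw [← image_spiderSymmetry_leafHexagon j, ← himage] at hedges
  rcases hhex with hhex | hhex
  · exact forces_triangle_of_hexagon hs hsub hedges disjoint_chords_legCycle isSparse_legCycle hhex
  · exact forces_triangle_of_hexagon hs hsub hedges disjoint_chords_leaf isSparse_leaf hhex

end Spider

theorem exists_forces_isMonoCopy_triangle :
    ∃ (V : Type) (_ : Fintype V) (_ : DecidableEq V) (n : ℕ), Board.Forces (fun s : Board V 2 =>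
      IsSparse 36 61 42 s.edges ∧ ∃ c κ, s.IsMonoCopy c triangle κ) n Board.empty := by
  obtain ⟨V, _, _, n, hn⟩ := exists_forces_isMonoCopy_treeEdges spiderParent_lt
  exact ⟨V, _, _, _, hn.bind fun s ⟨hs, c, κ, hκ⟩ => forces_triangle_of_spider hs hκ⟩

section Bowtie

open Board

/-- The edges of the bowtie. -/
def bowtieEdges : Finset (Sym2 (Fin 6)) :=
  {s(0, 1), s(0, 2), s(1, 2), s(3, 4), s(3, 5), s(4, 5), s(0, 3)}

theorem bowtie_adj_iff {u v : Fin 6} : bowtie.Adj u v ↔ s(u, v) ∈ bowtieEdges := by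
  unfold bowtie bowtieEdges
  simp only [SimpleGraph.fromEdgeSet_adj]
  revert u v
  decide +kernel

theorem card_bowtieEdges : bowtieEdges.card = 7 := by
  decide

theorem not_isDiag_of_mem_bowtieEdges : ∀ e ∈ bowtieEdges, ¬ e.IsDiag := by
  decide

theorem isSparse_bowtieEdges : IsSparse 36 42 0 bowtieEdges := by
  unfold IsSparse
  decide +kernel

theorem IsSparse.image {α V : Type*} [DecidableEq α] [DecidableEq V] {a b : ℕ}
    {E : Finset (Sym2 α)} (hE : IsSparse a b 0 E) (κ : α ↪ V) :
    IsSparse a b 0 (E.image (Sym2.map κ)) := by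
  intro U _
  rw [image_map_inter_sym2, card_image_map]
  set J := U.preimage κ κ.injective.injOn
  rcases J.eq_empty_or_nonempty with hJ | hJ
  · simp [hJ]
  · have hcard : J.card ≤ U.card :=
      Finset.card_le_card_of_injOn κ (fun x hx => Finset.mem_preimage.1 hx) κ.injective.injOn
    exact (hE J hJ).trans (Nat.mul_le_mul_left b hcard)

theorem exists_embedding_of_card_mul_lt {α : Type*} [Fintype α] {r k : ℕ} (col : α → Fin r)
    (h : r * k < Fintype.card α) : ∃ c, ∃ κ : Fin (k + 1) ↪ α, ∀ i, col (κ i) = c := by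
  obtain ⟨c, hc⟩ := Fintype.exists_lt_card_fiber_of_mul_lt_card (n := k) col (by simpa using h)
  obtain ⟨t, ht, htc⟩ := Finset.exists_subset_card_eq (Nat.succ_le_of_lt hc)
  exact ⟨c, (t.equivFinOfCardEq htc).symm.toEmbedding.trans (.subtype _),
    fun i => (Finset.mem_filter.1 (ht ((t.equivFinOfCardEq htc).symm i).2)).2⟩

theorem isMonoCopy_bowtieEdges_of_triangles {V ι : Type*} {r : ℕ} {S : Board (ι × V) r} {c : Fin r}
    {i j : ι} (hij : i ≠ j) {κ κ' : Fin 3 ↪ V} (hi : (comap (Prod.mk i) S).IsMonoCopy c triangle κ)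
    (hj : (comap (Prod.mk j) S).IsMonoCopy c triangle κ')
    (hlink : S s((i, κ 0), (j, κ' 0)) = some c) :
    ∃ κ, S.IsMonoCopy c bowtieEdges κ := by
  simp only [IsMonoCopy, triangle, Finset.forall_mem_insert, Finset.mem_singleton, forall_eq,
    Board.comap, Sym2.map_mk] at hi hj
  obtain ⟨hi01, hi12, hi20⟩ := hi
  obtain ⟨hj01, hj12, hj20⟩ := hj
  rw [Sym2.eq_swap] at hi20 hj20
  refine ⟨⟨Fin.append (fun a => (i, κ a)) (fun a => (j, κ' a)), ?_⟩, ?_⟩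
  · exact Fin.append_injective_iff.2 ⟨fun a b h => κ.injective (congrArg Prod.snd h),
      fun a b h => κ'.injective (congrArg Prod.snd h), fun a b h => hij (congrArg Prod.fst h)⟩
  · simp only [IsMonoCopy, bowtieEdges, Finset.forall_mem_insert, Finset.mem_singleton, forall_eq]
    exact ⟨hi01, hi20, hi12, hj01, hj20, hj12, hlink⟩

/-- Builder links triangles of equal color along a bowtie. A link of their color completes a
bowtie together with its two triangles, and otherwise the links themselves form one. -/
theorem exists_forces_isMonoCopy_bowtieEdges :
    ∃ (V : Type) (_ : Fintype V) (_ : DecidableEq V) (n : ℕ), Forces (fun s : Board V 2 =>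
      IsSparse 36 61 0 s.edges ∧ ∃ c κ, s.IsMonoCopy c bowtieEdges κ) n empty := by
  obtain ⟨V, _, _, n, hn⟩ := exists_forces_isMonoCopy_triangle
  refine ⟨Fin 11 × V, inferInstance, inferInstance, _,
    forces_isLinked (k := 7) hn fun T hT => ?_⟩
  choose hsparse col κ hκ using hT
  obtain ⟨c, ρ, hρ⟩ := exists_embedding_of_card_mul_lt (k := 5) col (by simp)
  refine ⟨fun j => κ j 0, bowtieEdges.image (Sym2.map ρ), ?_, ?_, fun S hST hS =>
    ⟨hS.isSparse_edges (fun j => hST j ▸ hsparse j) (isSparse_bowtieEdges.image ρ), ?_⟩⟩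
  · rw [card_image_map, card_bowtieEdges]
  · simp only [Finset.forall_mem_image, Sym2.isDiag_map ρ.injective]
    exact not_isDiag_of_mem_bowtieEdges
  by_cases hlinks : ∀ e ∈ bowtieEdges.image (Sym2.map ρ),
      S (Sym2.map (transversal fun j => κ j 0) e) ≠ some c
  · exact ⟨1 - c, _, (hS.isMonoCopy_transversal hlinks).trans subset_rfl⟩
  · simp only [Finset.forall_mem_image, not_forall, ne_eq, not_not] at hlinks
    obtain ⟨e, he, hlink⟩ := hlinks
    induction e with | _ a b
    have hab : ρ a ≠ ρ b := ρ.injective.ne (not_isDiag_of_mem_bowtieEdges _ he)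
    have htriangle (a : Fin 6) :
        (comap (Prod.mk (ρ a)) S).IsMonoCopy c triangle (κ (ρ a)) := by
      rw [hST, ← hρ a]
      exact hκ (ρ a)
    exact ⟨c, isMonoCopy_bowtieEdges_of_triangles hab (htriangle a) (htriangle b) hlink⟩

end Bowtie

section BuilderStrategy

variable {V : Type*} {r : ℕ}

/-- The edge presented in round `i` by the Builder strategy `σ`, a function of the colors used so
far, when Painter answers with the colors `γ`. -/
def nextEdge (σ : List (Fin r) → Sym2 V) (γ : ℕ → Fin r) (i : ℕ) : Sym2 V :=
  σ ((List.range i).map γ)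

theorem nextEdge_succ (σ : List (Fin r) → Sym2 V) (γ : ℕ → Fin r) (i : ℕ) :
    nextEdge σ γ (i + 1) = nextEdge (fun cs => σ (γ 0 :: cs)) (fun i => γ (i + 1)) i := by
  simp only [nextEdge, List.range_succ_eq_map, List.map_cons, List.map_map, Function.comp_def,
    Nat.succ_eq_add_one]

theorem nextEdge_congr (σ : List (Fin r) → Sym2 V) {γ γ' : ℕ → Fin r} {i : ℕ}
    (h : ∀ j < i, γ j = γ' j) : nextEdge σ γ i = nextEdge σ γ' i :=
  congrArg σ (List.map_congr_left fun j hj => h j (List.mem_range.1 hj))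

/-- Presenting the edges `e 0, …, e (L - 1)` and coloring them `γ 0, …, γ (L - 1)` is a legal play
leading from the board `s` to the board `s'`. -/
structure IsPlay (e : ℕ → Sym2 V) (γ : ℕ → Fin r) (L : ℕ) (s s' : Board V r) : Prop where
  not_isDiag : ∀ i < L, ¬ (e i).IsDiag
  fresh : ∀ i < L, s (e i) = none
  injOn : Set.InjOn e (Set.Iio L)
  colored : ∀ i < L, s' (e i) = some (γ i)
  unchanged : ∀ x, (∀ i < L, x ≠ e i) → s' x = s x

theorem IsPlay.cons [DecidableEq V] {e : ℕ → Sym2 V} {γ : ℕ → Fin r} {L : ℕ} {s s' : Board V r}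
    (hfresh : s (e 0) = none) (hdiag : ¬ (e 0).IsDiag)
    (h : IsPlay (fun i => e (i + 1)) (fun i => γ (i + 1)) L
      (Function.update s (e 0) (some (γ 0))) s') :
    IsPlay e γ (L + 1) s s' := by
  have hne : ∀ i < L, e (i + 1) ≠ e 0 := fun i hi heq => by
    simpa only [heq, Function.update_self, reduceCtorEq] using h.fresh i hi
  constructor
  · rintro (_ | i) hi
    exacts [hdiag, h.not_isDiag i (by lia)]
  · rintro (_ | i) hi
    · exact hfresh
    · simpa only [Function.update_of_ne (hne i (by lia))] using h.fresh i (by lia)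
  · rintro (_ | i) hi (_ | j) hj hij <;> simp only [Set.mem_Iio] at hi hj
    · rfl
    · exact absurd hij.symm (hne j (by lia))
    · exact absurd hij (hne i (by lia))
    · exact congrArg Nat.succ (h.injOn (Set.mem_Iio.2 (by lia)) (Set.mem_Iio.2 (by lia)) hij)
  · rintro (_ | i) hi
    · rw [h.unchanged _ fun i hi => (hne i hi).symm, Function.update_self]
    · exact h.colored i (by lia)
  · intro x hx
    rw [h.unchanged x fun i hi => hx (i + 1) (by lia), Function.update_of_ne (hx 0 (by lia))]

theorem Board.Forces.exists_isPlay [DecidableEq V] [Nonempty V] {P : Board V r → Prop} :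
    ∀ {L : ℕ} {s : Board V r}, Forces P L s → ∃ σ : List (Fin r) → Sym2 V, ∀ γ : ℕ → Fin r,
      ∃ s', P s' ∧ IsPlay (nextEdge σ γ) γ L s s'
  | 0, s, h => ⟨fun _ => Sym2.diag (Classical.arbitrary V), fun _ => ⟨s, h, by
      constructor <;> simp⟩⟩
  | L + 1, s, ⟨e, hfresh, hdiag, h⟩ => by
    choose σ hσ using fun c => (h c).exists_isPlay
    refine ⟨fun cs => match cs with | [] => e | c :: cs => σ c cs, fun γ => ?_⟩
    obtain ⟨s', hs', hplay⟩ := hσ (γ 0) fun i => γ (i + 1)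
    refine ⟨s', hs', .cons hfresh hdiag ?_⟩
    rw [funext (nextEdge_succ _ γ)]
    exact hplay

/-- Playing `σ` for `L` rounds forces a monochromatic copy of `F`, and all the boards on the way
have at most `d` edges per vertex on every vertex set. -/
structure WinsWithDensity {α : Type*} (F : SimpleGraph α) (d : ℝ) (L : ℕ)
    (σ : List (Fin r) → Sym2 V) : Prop where
  not_isDiag : ∀ γ, ∀ i < L, ¬ (nextEdge σ γ i).IsDiag
  card_le : ∀ γ (U : Finset V),
    ((Finset.range L).filter fun i => nextEdge σ γ i ∈ U.sym2).card ≤ d * U.card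
  exists_copy : ∀ γ, ∃ c, ∃ f : α ↪ V, ∀ u v, F.Adj u v →
    ∃ i < L, γ i = c ∧ nextEdge σ γ i = s(f u, f v)

theorem IsPlay.card_filter_le [Fintype V] [DecidableEq V] {e : ℕ → Sym2 V} {γ : ℕ → Fin r} {L : ℕ}
    {s s' : Board V r} (h : IsPlay e γ L s s') {a b : ℕ} (ha : 0 < a)
    (hsparse : IsSparse a b 0 s'.edges) (U : Finset V) :
    (((Finset.range L).filter fun i => e i ∈ U.sym2).card : ℝ) ≤ (b / a : ℝ) * U.card := by
  obtain rfl | hU := U.eq_empty_or_nonempty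
  · simp
  have hcard : ((Finset.range L).filter fun i => e i ∈ U.sym2).card ≤ (s'.edges ∩ U.sym2).card := by
    refine Finset.card_le_card_of_injOn e (fun i hi => ?_) (h.injOn.mono fun i hi => ?_)
    · obtain ⟨hiL, hiU⟩ := Finset.mem_filter.1 hi
      refine Finset.mem_coe.2 (Finset.mem_inter.2 ⟨Board.mem_edges.2 ?_, hiU⟩)
      simp [h.colored i (Finset.mem_range.1 hiL)]
    · exact Finset.mem_range.1 (Finset.mem_filter.1 hi).1
  rw [div_mul_eq_mul_div, le_div_iff₀ (by positivity), mul_comm]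
  exact_mod_cast (Nat.mul_le_mul_left a hcard).trans (hsparse U hU)

theorem IsPlay.exists_of_eq_some {e : ℕ → Sym2 V} {γ : ℕ → Fin r} {L : ℕ} {s' : Board V r}
    (h : IsPlay e γ L Board.empty s') {c : Fin r} {x : Sym2 V} (hx : s' x = some c) :
    ∃ i < L, γ i = c ∧ e i = x := by
  by_contra! hne
  have hempty : s' x = none := h.unchanged x fun i hi hxi => by
    have := h.colored i hi
    grind
  simp [hx] at hempty

theorem exists_winsWithDensity_bowtie :
    ∃ (V : Type) (_ : Finite V) (L : ℕ) (σ : List (Fin 2) → Sym2 V),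
      0 < L ∧ WinsWithDensity bowtie (61 / 36) L σ := by
  obtain ⟨V, _, _, L, hL⟩ := exists_forces_isMonoCopy_bowtieEdges
  have : Nonempty V := by
    cases L with
    | zero => exact let ⟨_, _, κ, _⟩ := hL; ⟨κ 0⟩
    | succ L => exact let ⟨e, _⟩ := hL; ⟨e.out.1⟩
  obtain ⟨σ, hσ⟩ := hL.exists_isPlay
  have hcopy (γ : ℕ → Fin 2) : ∃ c, ∃ f : Fin 6 ↪ V, ∀ u v, bowtie.Adj u v →
      ∃ i < L, γ i = c ∧ nextEdge σ γ i = s(f u, f v) := by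
    obtain ⟨s', ⟨-, c, κ, hκ⟩, hplay⟩ := hσ γ
    exact ⟨c, κ, fun u v huv => hplay.exists_of_eq_some (hκ _ (bowtie_adj_iff.1 huv))⟩
  refine ⟨V, inferInstance, L, σ, ?_, ⟨fun γ => ?_, fun γ U => ?_, hcopy⟩⟩
  · obtain ⟨_, f, hf⟩ := hcopy fun _ => 0
    obtain ⟨i, hi, -⟩ := hf 0 1 (by simp [bowtie])
    exact Nat.zero_lt_of_lt hi
  · obtain ⟨s', -, hplay⟩ := hσ γ
    exact hplay.not_isDiag
  · obtain ⟨s', ⟨hsparse, -⟩, hplay⟩ := hσ γ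
    convert hplay.card_filter_le (by norm_num) hsparse U <;> norm_num

end BuilderStrategy

section Counting

theorem exists_forall_eq_of_causal {ι E : Type*} [LinearOrder ι] [WellFoundedLT ι] [Nonempty E]
    {H : ι → (ι → E) → E} (hH : ∀ k g g', (∀ j < k, g j = g' j) → H k g = H k g') :
    ∃ g, ∀ k, g k = H k g := by
  let step (k : ι) (ih : ∀ j < k, E) : E :=
    H k fun j => if h : j < k then ih j h else Classical.arbitrary E
  refine ⟨wellFounded_lt.fix step, fun k => ?_⟩
  rw [WellFounded.fix_eq]
  exact hH k _ _ fun j hj => dif_pos hj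

variable {ι E : Type*} [Fintype ι] [LinearOrder ι] [Fintype E]

theorem pow_card_le_card_mul_pow [Nonempty E] {T : Finset ι} {F : ι → (ι → E) → E}
    (hF : ∀ k ∈ T, ∀ g g', (∀ j < k, g j = g' j) → F k g = F k g') {A : Finset (ι → E)}
    (hA : ∀ g, (∀ k ∈ T, g k = F k g) → g ∈ A) :
    Fintype.card E ^ Fintype.card ι ≤ A.card * Fintype.card E ^ T.card := by
  have hsol (x : (Tᶜ : Finset ι) → E) : ∃ g : ι → E, ∀ k,
      g k = if hk : k ∈ Tᶜ then x ⟨k, hk⟩ else F k g := by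
    refine exists_forall_eq_of_causal fun k g g' hgg' => ?_
    split_ifs with hk
    · rfl
    · exact hF k (by simpa using hk) g g' hgg'
  choose G hG using hsol
  rw [← Finset.card_compl_add_card T, pow_add, ← Fintype.card_coe Tᶜ, ← Fintype.card_fun]
  refine Nat.mul_le_mul_right _
    (Finset.card_le_card_of_injOn G (fun x _ => ?_) fun x _ x' _ h => ?_)
  · exact hA _ fun k hk => (hG x k).trans (dif_neg (by simpa using hk))
  · funext ⟨k, hk⟩
    have hx := (hG x k).trans (dif_pos hk)
    have hx' := (hG x' k).trans (dif_pos hk)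
    rw [← hx, ← hx', h]

theorem card_mul_pow_le_pow_card (A : Finset (ι → E)) (T : Finset ι)
    (hA : ∀ g ∈ A, ∀ g' ∈ A, ∀ k ∈ T, (∀ j < k, g j = g' j) → g k = g' k) :
    A.card * Fintype.card E ^ T.card ≤ Fintype.card E ^ Fintype.card ι := by
  rw [← Finset.card_compl_add_card T, pow_add, ← Fintype.card_coe Tᶜ, ← Fintype.card_fun]
  refine Nat.mul_le_mul_right _ (Finset.card_le_card_of_injOn (fun g (k : (Tᶜ : Finset ι)) => g k)
    (fun _ _ => Finset.mem_coe.2 (Finset.mem_univ _)) fun g hg g' hg' hgg' => funext fun k => ?_)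
  induction k using WellFoundedLT.induction with
  | ind k ih =>
    by_cases hk : k ∈ T
    · exact hA g hg g' hg' k hk ih
    · exact congrFun hgg' ⟨k, Finset.mem_compl.2 hk⟩

end Counting

theorem sum_pow_card_filter {ι κ R : Type*} [Fintype ι] [DecidableEq ι] [Fintype κ]
    [CommSemiring R] (P : ι → κ → Prop) [∀ i k, Decidable (P i k)] (x : R) :
    ∑ f : ι → κ, (1 + x) ^ (Finset.univ.filter fun i => P i (f i)).card =
      ∏ i, (Fintype.card κ + (Finset.univ.filter (P i)).card * x) := by
  have hfactor (i : ι) : ∑ k, (if P i k then 1 + x else 1) =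
      Fintype.card κ + (Finset.univ.filter (P i)).card * x := by
    have hsplit (k : κ) : (if P i k then 1 + x else 1) = 1 + if P i k then x else 0 := by
      split_ifs <;> simp
    simp only [hsplit, Finset.sum_add_distrib, ← Finset.sum_filter, Finset.sum_const,
      nsmul_eq_mul, Finset.card_univ, mul_one]
  simp only [← hfactor, Finset.prod_univ_sum, Fintype.piFinset_univ, Finset.prod_ite,
    Finset.prod_const, one_pow, mul_one]

section SecondMoment

variable {I Ω : Type*} [Fintype I] [DecidableEq Ω]

theorem sq_sum_card_le_card_biUnion_mul (A : I → Finset Ω) :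
    (∑ i, (A i).card) ^ 2 ≤
      (Finset.univ.biUnion A).card * ∑ i, ∑ j, (A i ∩ A j).card := by
  have hsub (i : I) : A i ⊆ Finset.univ.biUnion A :=
    Finset.subset_biUnion_of_mem A (Finset.mem_univ i)
  have hcard (B : Finset Ω) (hB : B ⊆ Finset.univ.biUnion A) :
      B.card = ∑ ω ∈ Finset.univ.biUnion A, if ω ∈ B then 1 else 0 := by
    rw [← Finset.card_filter, Finset.filter_mem_eq_inter, Finset.inter_eq_right.2 hB]
  have hfirst : ∑ i, (A i).card =
      ∑ ω ∈ Finset.univ.biUnion A, ∑ i, if ω ∈ A i then 1 else 0 := by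
    rw [Finset.sum_comm]
    exact Finset.sum_congr rfl fun i _ => hcard _ (hsub i)
  have hsecond : ∑ i, ∑ j, (A i ∩ A j).card =
      ∑ ω ∈ Finset.univ.biUnion A, (∑ i, if ω ∈ A i then 1 else 0) ^ 2 := by
    have hsq (ω : Ω) : (∑ i, if ω ∈ A i then 1 else 0) ^ 2 =
        ∑ i, ∑ j, if ω ∈ A i ∩ A j then 1 else 0 := by
      simp only [sq, Finset.sum_mul_sum, ite_mul, one_mul, zero_mul, Finset.mem_inter, ite_and]
    simp only [hsq]
    rw [Finset.sum_comm (s := Finset.univ.biUnion A)]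
    refine Finset.sum_congr rfl fun i _ => ?_
    rw [Finset.sum_comm (s := Finset.univ.biUnion A)]
    exact Finset.sum_congr rfl fun j _ => hcard _ (Finset.inter_subset_left.trans (hsub i))
  rw [hfirst, hsecond]
  exact sq_sum_le_card_mul_sum_sq

theorem card_mul_sq_le_card_biUnion_mul (A : I → Finset Ω) {a b : ℝ} (ha₀ : 0 ≤ a)
    (ha : ∀ i, a ≤ (A i).card) (hb : ∀ i, ∑ j, ((A i ∩ A j).card : ℝ) ≤ b) :
    Fintype.card I * a ^ 2 ≤ (Finset.univ.biUnion A).card * b := by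
  have hI : (0 : ℝ) ≤ Fintype.card I := by positivity
  obtain hI | hI := hI.eq_or_lt
  · have : IsEmpty I := Fintype.card_eq_zero_iff.1 (by exact_mod_cast hI.symm)
    simp
  refine le_of_mul_le_mul_left ?_ hI
  have hfirst : Fintype.card I * a ≤ ∑ i, ((A i).card : ℝ) := by
    simpa using Finset.card_nsmul_le_sum _ _ _ fun i (_ : i ∈ Finset.univ) => ha i
  have hsecond : ∑ i, ∑ j, ((A i ∩ A j).card : ℝ) ≤ Fintype.card I * b := by
    simpa using Finset.sum_le_card_nsmul _ _ _ fun i (_ : i ∈ Finset.univ) => hb i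
  have hcs : (∑ i, ((A i).card : ℝ)) ^ 2 ≤
      (Finset.univ.biUnion A).card * ∑ i, ∑ j, ((A i ∩ A j).card : ℝ) := by
    exact_mod_cast sq_sum_card_le_card_biUnion_mul A
  calc Fintype.card I * (Fintype.card I * a ^ 2) = (Fintype.card I * a) ^ 2 := by ring
    _ ≤ (∑ i, ((A i).card : ℝ)) ^ 2 := pow_le_pow_left₀ (by positivity) hfirst 2
    _ ≤ (Finset.univ.biUnion A).card * (Fintype.card I * b) := hcs.trans (by gcongr)
    _ = Fintype.card I * ((Finset.univ.biUnion A).card * b) := by ring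

end SecondMoment

section Realizations

/-- The pairs of distinct vertices of a board with `n` vertices. -/
abbrev NonLoop (n : ℕ) := {e : Sym2 (Fin n) // ¬ e.IsDiag}

theorem card_nonLoop (n : ℕ) : Fintype.card (NonLoop n) = n.choose 2 := by
  rw [Sym2.card_subtype_not_diag, Fintype.card_fin]

variable {L m n r : ℕ}

/-- The `j`-th position of the `i`-th of `L` consecutive blocks of length `m`. -/
def slot (i : Fin L) (j : Fin m) : Fin (L * m) := finProdFinEquiv (i, j)

theorem slot_injective2 : Function.Injective2 (slot : Fin L → Fin m → Fin (L * m)) :=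
  fun _ _ _ _ h => Prod.mk.inj (finProdFinEquiv.injective h)

theorem slot_lt_slot {i i' : Fin L} (h : i < i') (j j' : Fin m) : slot i j < slot i' j' := by
  rw [Fin.lt_def]
  simp only [slot, finProdFinEquiv, Equiv.coe_fn_mk]
  have hmul := Nat.mul_le_mul_left m (Nat.succ_le_of_lt h)
  rw [Nat.mul_succ] at hmul
  lia

/-- The positions picked when `τ` selects one position in each block. -/
def picks (τ : Fin L → Fin m) : Finset (Fin (L * m)) := Finset.univ.image fun i => slot i (τ i)

theorem injective_slot_comp (τ : Fin L → Fin m) : Function.Injective fun i => slot i (τ i) :=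
  fun _ _ h => (slot_injective2 h).1

theorem slot_mem_picks (τ : Fin L → Fin m) (i : Fin L) : slot i (τ i) ∈ picks τ :=
  Finset.mem_image_of_mem (fun i => slot i (τ i)) (Finset.mem_univ i)

theorem forall_mem_picks {τ : Fin L → Fin m} {p : Fin (L * m) → Prop} :
    (∀ k ∈ picks τ, p k) ↔ ∀ i, p (slot i (τ i)) := by
  simp [picks]

theorem card_picks (τ : Fin L → Fin m) : (picks τ).card = L := by
  rw [picks, Finset.card_image_of_injective _ (injective_slot_comp τ), Finset.card_fin]

/-- The blocks in which `τ` and `τ'` select the same position. -/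
def agree (τ τ' : Fin L → Fin m) : Finset (Fin L) := Finset.univ.filter fun i => τ i = τ' i

theorem picks_inter_picks (τ τ' : Fin L → Fin m) :
    picks τ ∩ picks τ' = (agree τ τ').image fun i => slot i (τ i) := by
  ext k
  simp only [Finset.mem_inter, picks, agree, Finset.mem_image, Finset.mem_univ, true_and,
    Finset.mem_filter]
  constructor
  · rintro ⟨⟨i, rfl⟩, j, hj⟩
    obtain ⟨rfl, h⟩ := slot_injective2 hj
    exact ⟨j, h.symm, rfl⟩
  · rintro ⟨i, hi, rfl⟩
    exact ⟨⟨i, rfl⟩, i, by rw [hi]⟩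

theorem card_picks_union_add_card_agree (τ τ' : Fin L → Fin m) :
    (picks τ ∪ picks τ').card + (agree τ τ').card = 2 * L := by
  rw [← Finset.card_image_of_injective (agree τ τ') (injective_slot_comp τ), ← picks_inter_picks,
    Finset.card_union_add_card_inter, card_picks, card_picks, two_mul]

/-- A rule coloring each entry of a sequence is causal if it does not look at later entries. -/
def Causal {K : ℕ} {E : Type*} (col : (Fin K → E) → Fin K → Fin r) : Prop :=
  ∀ k g g', (∀ j ≤ k, g j = g' j) → col g k = col g' k

/-- The colors of the entries of `g` picked by `τ`, in order of the blocks; beyond the last block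
the values are irrelevant. -/
def pickedColors [NeZero L] {E : Type*} (col : (Fin (L * m) → E) → Fin (L * m) → Fin r)
    (τ : Fin L → Fin m) (g : Fin (L * m) → E) (i : ℕ) : Fin r :=
  col g (slot (Fin.ofNat L i) (τ (Fin.ofNat L i)))

variable {V : Type*} [NeZero L] {σ : List (Fin r) → Sym2 V}
  {col : (Fin (L * m) → NonLoop n) → Fin (L * m) → Fin r}

/-- The entries of `g` picked by `τ` are the images under `φ` of the edges that the Builder
strategy `σ` presents when Painter answers with the colors of these entries. -/
def Realizes (σ : List (Fin r) → Sym2 V) (col : (Fin (L * m) → NonLoop n) → Fin (L * m) → Fin r)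
    (φ : V ↪ Fin n) (τ : Fin L → Fin m) (g : Fin (L * m) → NonLoop n) : Prop :=
  ∀ i : Fin L, (g (slot i (τ i))).1 = Sym2.map φ (nextEdge σ (pickedColors col τ g) i)

theorem nextEdge_pickedColors_congr (hcol : Causal col) (τ : Fin L → Fin m) (i : Fin L)
    {g g' : Fin (L * m) → NonLoop n} (h : ∀ j < slot i (τ i), g j = g' j) :
    nextEdge σ (pickedColors col τ g) i = nextEdge σ (pickedColors col τ g') i := by
  refine nextEdge_congr σ fun j hj => hcol _ _ _ fun k hk => h k (hk.trans_lt (slot_lt_slot ?_ _ _))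
  rwa [Fin.lt_def, Fin.val_ofNat, Nat.mod_eq_of_lt (hj.trans i.2)]

theorem Realizes.eq_of_forall_lt (hcol : Causal col) {φ : V ↪ Fin n} {τ : Fin L → Fin m}
    {g g' : Fin (L * m) → NonLoop n} (hg : Realizes σ col φ τ g) (hg' : Realizes σ col φ τ g') :
    ∀ k ∈ picks τ, (∀ j < k, g j = g' j) → g k = g' k :=
  forall_mem_picks.2 fun i h => Subtype.ext <| by
    rw [hg i, hg' i, nextEdge_pickedColors_congr hcol τ i h]

variable {α : Type*} {F : SimpleGraph α} {d : ℝ}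

theorem WinsWithDensity.pow_le_card_realizes_mul_pow [Nonempty (NonLoop n)]
    (hσ : WinsWithDensity F d L σ) (hcol : Causal col) (φ : V ↪ Fin n) (τ : Fin L → Fin m) :
    n.choose 2 ^ (L * m) ≤ (Finset.univ.filter (Realizes σ col φ τ)).card * n.choose 2 ^ L := by
  have hdiag (g : Fin (L * m) → NonLoop n) (i : Fin L) :
      ¬ (Sym2.map φ (nextEdge σ (pickedColors col τ g) i)).IsDiag := by
    rw [Sym2.isDiag_map φ.injective]
    exact hσ.not_isDiag _ _ i.is_lt
  let answer (k : Fin (L * m)) (g : Fin (L * m) → NonLoop n) : NonLoop n :=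
    ⟨_, hdiag g (finProdFinEquiv.symm k).1⟩
  have hanswer (i : Fin L) (g) : (answer (slot i (τ i)) g).1 =
      Sym2.map φ (nextEdge σ (pickedColors col τ g) i) := by
    simp only [answer, slot, Equiv.symm_apply_apply]
  have hcausal : ∀ k ∈ picks τ, ∀ g g', (∀ j < k, g j = g' j) → answer k g = answer k g' :=
    forall_mem_picks.2 fun i g g' h => Subtype.ext <| by
      rw [hanswer, hanswer, nextEdge_pickedColors_congr hcol τ i h]
  have hcount := pow_card_le_card_mul_pow hcausal (A := Finset.univ.filter (Realizes σ col φ τ))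
    fun g hg => Finset.mem_filter.2
      ⟨Finset.mem_univ g, fun i => by rw [hg _ (slot_mem_picks τ i), hanswer]⟩
  rwa [Fintype.card_fin, card_nonLoop, card_picks] at hcount

theorem card_realizes_and_mul_pow_le (hcol : Causal col) (φ φ' : V ↪ Fin n) (τ τ' : Fin L → Fin m) :
    (Finset.univ.filter fun g => Realizes σ col φ τ g ∧ Realizes σ col φ' τ' g).card *
      n.choose 2 ^ (2 * L) ≤ n.choose 2 ^ (L * m) * n.choose 2 ^ (agree τ τ').card := by
  have hcount := card_mul_pow_le_pow_card
    (Finset.univ.filter fun g => Realizes σ col φ τ g ∧ Realizes σ col φ' τ' g) (picks τ ∪ picks τ')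
    fun g hg g' hg' k hk h => by
      obtain ⟨hg, hgτ'⟩ := (Finset.mem_filter.1 hg).2
      obtain ⟨hg', hg'τ'⟩ := (Finset.mem_filter.1 hg').2
      obtain hk | hk := Finset.mem_union.1 hk
      exacts [hg.eq_of_forall_lt hcol hg' k hk h, hgτ'.eq_of_forall_lt hcol hg'τ' k hk h]
  rw [Fintype.card_fin, card_nonLoop] at hcount
  rw [← card_picks_union_add_card_agree τ τ', pow_add, ← mul_assoc]
  exact Nat.mul_le_mul_right _ hcount

variable [Fintype V]

/-- The vertices that `φ'` maps into the range of `φ`. -/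
noncomputable def overlap (φ : V ↪ Fin n) (φ' : V → Fin n) : Finset V :=
  Finset.univ.filter fun v => φ' v ∈ Finset.univ.map φ

theorem WinsWithDensity.card_agree_le (hσ : WinsWithDensity F d L σ) {φ φ' : V ↪ Fin n}
    {τ τ' : Fin L → Fin m} {g : Fin (L * m) → NonLoop n} (h : Realizes σ col φ τ g)
    (h' : Realizes σ col φ' τ' g) : ((agree τ τ').card : ℝ) ≤ d * (overlap φ φ').card := by
  refine le_trans ?_ (hσ.card_le (pickedColors col τ' g) (overlap φ φ'))
  refine Nat.cast_le.2
    (Finset.card_le_card_of_injOn Fin.val (fun i hi => ?_) Fin.val_injective.injOn)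
  have hi : τ i = τ' i := (Finset.mem_filter.1 hi).2
  refine Finset.mem_coe.2 (Finset.mem_filter.2 ⟨Finset.mem_range.2 i.2, Finset.mem_sym2_iff.2 ?_⟩)
  intro v hv
  have himage := h i
  rw [hi, h' i] at himage
  have hv' : φ' v ∈ Sym2.map φ (nextEdge σ (pickedColors col τ g) i) :=
    himage ▸ Sym2.mem_map.2 ⟨v, hv, rfl⟩
  obtain ⟨w, -, hw⟩ := Sym2.mem_map.1 hv'
  exact Finset.mem_filter.2 ⟨Finset.mem_univ v, Finset.mem_map.2 ⟨w, Finset.mem_univ w, hw⟩⟩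

end Realizations

section SecondMomentBound

theorem sum_pow_card_agree_le {L m : ℕ} (hm : 0 < m) (τ : Fin L → Fin m) :
    ∑ τ' : Fin L → Fin m, (m : ℝ) ^ (agree τ τ').card ≤ (m : ℝ) ^ L * 2 ^ L := by
  have hm' : (1 : ℝ) ≤ m := by exact_mod_cast hm
  have hsum := sum_pow_card_filter (fun i j => τ i = j) (m - 1 : ℝ)
  rw [add_sub_cancel] at hsum
  simp only [agree, hsum, Finset.filter_eq, Finset.mem_univ, if_true, Finset.card_singleton,
    Fintype.card_fin, Finset.prod_const, Finset.card_univ, ← mul_pow]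
  refine pow_le_pow_left₀ ?_ ?_ L <;> push_cast <;> linarith

variable {V : Type*} [Fintype V] {n : ℕ}

theorem sum_pow_card_overlap_sub_one_le (φ : V ↪ Fin n) {x : ℝ} (hx : 0 ≤ x) :
    ∑ φ' : V ↪ Fin n, ((1 + x) ^ (overlap φ φ').card - 1) ≤
      (n + Fintype.card V * x) ^ Fintype.card V - (n : ℝ) ^ Fintype.card V := by
  have hrange : (Finset.univ.filter fun k => k ∈ Finset.univ.map φ).card = Fintype.card V := by
    rw [Finset.filter_mem_eq_inter, Finset.univ_inter, Finset.card_map, Finset.card_univ]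
  have hsum := sum_pow_card_filter (fun (_ : V) k => k ∈ Finset.univ.map φ) x
  simp only [hrange, Fintype.card_fin, Finset.prod_const, Finset.card_univ] at hsum
  let toFun : (V ↪ Fin n) ↪ (V → Fin n) := ⟨(⇑), DFunLike.coe_injective⟩
  calc ∑ φ' : V ↪ Fin n, ((1 + x) ^ (overlap φ φ').card - 1)
      = ∑ f ∈ Finset.univ.map toFun, ((1 + x) ^ (overlap φ f).card - 1) :=
        (Finset.sum_map _ toFun fun f => (1 + x) ^ (overlap φ f).card - 1).symm
    _ ≤ ∑ f : V → Fin n, ((1 + x) ^ (overlap φ f).card - 1) :=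
        Finset.sum_le_univ_sum_of_nonneg fun f =>
          sub_nonneg.2 (one_le_pow₀ (le_add_of_nonneg_right hx))
    _ = (n + Fintype.card V * x) ^ Fintype.card V - (n : ℝ) ^ Fintype.card V := by
        simp only [overlap, Finset.sum_sub_distrib, hsum]
        simp

variable {α : Type*} {F : SimpleGraph α} {d : ℝ} {L m r : ℕ} [NeZero L]
  {σ : List (Fin r) → Sym2 V} {col : (Fin (L * m) → NonLoop n) → Fin (L * m) → Fin r}

theorem pow_le_one_add_mul_sub_one {y x : ℝ} (hm : 0 < m) (hmy : m ≤ y) (hx : x = (y / m) ^ d)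
    {s u : ℕ} (hsu : (s : ℝ) ≤ d * u) : y ^ s ≤ 1 + (m : ℝ) ^ s * ((1 + x) ^ u - 1) := by
  have hm' : (0 : ℝ) < m := by exact_mod_cast hm
  have hratio : 1 ≤ y / m := (one_le_div hm').2 hmy
  have hx₀ : 0 ≤ x := hx ▸ Real.rpow_nonneg (zero_le_one.trans hratio) d
  obtain rfl | hu := eq_or_ne u 0
  · have hs : s = 0 := by simpa using hsu
    simp [hs]
  have hpow : (y / m) ^ s ≤ x ^ u := by
    rw [hx, ← Real.rpow_natCast, ← Real.rpow_natCast, ← Real.rpow_mul (zero_le_one.trans hratio)]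
    exact Real.rpow_le_rpow_of_exponent_le hratio hsu
  have hadd : 1 ^ u + x ^ u ≤ (1 + x) ^ u := pow_add_pow_le zero_le_one hx₀ hu
  rw [one_pow] at hadd
  calc y ^ s = (m : ℝ) ^ s * (y / m) ^ s := by rw [← mul_pow, mul_div_cancel₀ _ hm'.ne']
    _ ≤ (m : ℝ) ^ s * ((1 + x) ^ u - 1) := by gcongr; linarith
    _ ≤ 1 + (m : ℝ) ^ s * ((1 + x) ^ u - 1) := by linarith

theorem WinsWithDensity.card_realizes_and_le (hσ : WinsWithDensity F d L σ) (hcol : Causal col)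
    (hm : 0 < m) (hmn : m ≤ n.choose 2) {x : ℝ} (hx : x = (n.choose 2 / m : ℝ) ^ d)
    (φ φ' : V ↪ Fin n) (τ τ' : Fin L → Fin m) :
    ((Finset.univ.filter fun g => Realizes σ col φ τ g ∧ Realizes σ col φ' τ' g).card : ℝ) *
      n.choose 2 ^ (2 * L) ≤ n.choose 2 ^ (L * m) *
        (1 + (m : ℝ) ^ (agree τ τ').card * ((1 + x) ^ (overlap φ φ').card - 1)) := by
  obtain hempty | ⟨g, hg⟩ := (Finset.univ.filter fun g =>
    Realizes σ col φ τ g ∧ Realizes σ col φ' τ' g).eq_empty_or_nonempty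
  · have hx₀ : 0 ≤ x := hx ▸ by positivity
    have hpow : 1 ≤ (1 + x) ^ (overlap φ φ').card := one_le_pow₀ (by linarith)
    rw [hempty, Finset.card_empty, Nat.cast_zero, zero_mul]
    exact mul_nonneg (by positivity)
      (add_nonneg zero_le_one (mul_nonneg (by positivity) (sub_nonneg.2 hpow)))
  · obtain ⟨hg, hg'⟩ := (Finset.mem_filter.1 hg).2
    refine le_trans (b := ((n.choose 2 : ℝ) ^ (L * m) * (n.choose 2 : ℝ) ^ (agree τ τ').card)) ?_ ?_
    · exact_mod_cast card_realizes_and_mul_pow_le hcol φ φ' τ τ'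
    · gcongr
      exact pow_le_one_add_mul_sub_one hm (by exact_mod_cast hmn) hx (hσ.card_agree_le hg hg')

/-- The factor by which the second moment of the number of realizations exceeds `n ^ a` times its
mean, in terms of the number `a` of vertices and `L` of edges of the Builder strategy. -/
def momentFactor (a L n : ℕ) (x : ℝ) : ℝ := n ^ a + 2 ^ L * ((n + a * x) ^ a - n ^ a)

theorem momentFactor_pos {a L n : ℕ} {x : ℝ} (hn : 0 < n) (hx : 0 ≤ x) :
    0 < momentFactor a L n x := by
  have hle : (n : ℝ) ^ a ≤ (n + a * x) ^ a :=
    pow_le_pow_left₀ n.cast_nonneg (le_add_of_nonneg_right (by positivity)) a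
  exact add_pos_of_pos_of_nonneg (by positivity) (mul_nonneg (by positivity) (sub_nonneg.2 hle))

theorem WinsWithDensity.sum_card_realizes_and_le (hσ : WinsWithDensity F d L σ)
    (hcol : Causal col) (hm : 0 < m) (hmn : m ≤ n.choose 2) {x : ℝ}
    (hx : x = (n.choose 2 / m : ℝ) ^ d) (φ : V ↪ Fin n) (τ : Fin L → Fin m) :
    (∑ φ' : V ↪ Fin n, ∑ τ' : Fin L → Fin m, ((Finset.univ.filter fun g =>
      Realizes σ col φ τ g ∧ Realizes σ col φ' τ' g).card : ℝ)) * n.choose 2 ^ (2 * L) ≤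
        n.choose 2 ^ (L * m) * m ^ L * momentFactor (Fintype.card V) L n x := by
  have hx₀ : 0 ≤ x := hx ▸ by positivity
  have hexcess (φ' : V ↪ Fin n) : 0 ≤ (1 + x) ^ (overlap φ φ').card - 1 :=
    sub_nonneg.2 (one_le_pow₀ (le_add_of_nonneg_right hx₀))
  have hcard : (Fintype.card (V ↪ Fin n) : ℝ) ≤ n ^ Fintype.card V := by
    rw [Fintype.card_embedding_eq, Fintype.card_fin]
    exact_mod_cast Nat.descFactorial_le_pow n _
  have hinner (φ' : V ↪ Fin n) : ∑ τ' : Fin L → Fin m,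
      (1 + (m : ℝ) ^ (agree τ τ').card * ((1 + x) ^ (overlap φ φ').card - 1)) ≤
        m ^ L * (1 + 2 ^ L * ((1 + x) ^ (overlap φ φ').card - 1)) := by
    rw [Finset.sum_add_distrib, ← Finset.sum_mul]
    have := mul_le_mul_of_nonneg_right (sum_pow_card_agree_le hm τ) (hexcess φ')
    simp only [Finset.sum_const, Finset.card_univ, Fintype.card_fun, Fintype.card_fin,
      nsmul_eq_mul, Nat.cast_pow, mul_one]
    linarith
  calc _ ≤ ∑ φ' : V ↪ Fin n, ∑ τ' : Fin L → Fin m, (n.choose 2 : ℝ) ^ (L * m) *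
        (1 + (m : ℝ) ^ (agree τ τ').card * ((1 + x) ^ (overlap φ φ').card - 1)) := by
        simp only [Finset.sum_mul]
        exact Finset.sum_le_sum fun φ' _ => Finset.sum_le_sum fun τ' _ =>
          hσ.card_realizes_and_le hcol hm hmn hx φ φ' τ τ'
    _ ≤ ∑ φ' : V ↪ Fin n, (n.choose 2 : ℝ) ^ (L * m) *
        (m ^ L * (1 + 2 ^ L * ((1 + x) ^ (overlap φ φ').card - 1))) := by
        refine Finset.sum_le_sum fun φ' _ => ?_
        rw [← Finset.mul_sum]
        exact mul_le_mul_of_nonneg_left (hinner φ') (by positivity)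
    _ = (n.choose 2 : ℝ) ^ (L * m) * m ^ L * (Fintype.card (V ↪ Fin n) +
        2 ^ L * ∑ φ' : V ↪ Fin n, ((1 + x) ^ (overlap φ φ').card - 1)) := by
        simp [← Finset.mul_sum, Finset.sum_add_distrib, mul_assoc]
    _ ≤ n.choose 2 ^ (L * m) * m ^ L * momentFactor (Fintype.card V) L n x := by
        unfold momentFactor
        gcongr
        exact sum_pow_card_overlap_sub_one_le φ hx₀

theorem WinsWithDensity.descFactorial_mul_le (hσ : WinsWithDensity F d L σ) (hcol : Causal col)
    (hm : 0 < m) (hmn : m ≤ n.choose 2) {x : ℝ} (hx : x = (n.choose 2 / m : ℝ) ^ d) :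
    n.descFactorial (Fintype.card V) * (n.choose 2 : ℝ) ^ (L * m) ≤
      (Finset.univ.filter fun g => ∃ φ τ, Realizes σ col φ τ g).card *
        momentFactor (Fintype.card V) L n x := by
  have hM : (0 : ℝ) < n.choose 2 := by exact_mod_cast hm.trans_le hmn
  have : Nonempty (NonLoop n) := by
    rw [← Fintype.card_pos_iff, card_nonLoop]
    exact hm.trans_le hmn
  have hmoment := card_mul_sq_le_card_biUnion_mul
    (fun p : (V ↪ Fin n) × (Fin L → Fin m) => Finset.univ.filter (Realizes σ col p.1 p.2))
    (a := (n.choose 2 : ℝ) ^ (L * m) / n.choose 2 ^ L)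
    (b := (n.choose 2 : ℝ) ^ (L * m) * m ^ L * momentFactor (Fintype.card V) L n x /
      n.choose 2 ^ (2 * L)) (by positivity) (fun p => ?_) fun p => ?_
  · have hunion : (Finset.univ.biUnion fun p : (V ↪ Fin n) × (Fin L → Fin m) =>
        Finset.univ.filter (Realizes σ col p.1 p.2)) =
        Finset.univ.filter fun g => ∃ φ τ, Realizes σ col φ τ g := by
      ext g
      simp
    simp only [hunion, Fintype.card_prod, Fintype.card_embedding_eq, Fintype.card_fun,
      Fintype.card_fin, Nat.cast_mul, Nat.cast_pow] at hmoment
    refine le_of_mul_le_mul_left (a := (n.choose 2 : ℝ) ^ (L * m) * m ^ L / n.choose 2 ^ (2 * L))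
      ?_ (by positivity)
    calc _ = n.descFactorial (Fintype.card V) * (m : ℝ) ^ L *
          ((n.choose 2 : ℝ) ^ (L * m) / n.choose 2 ^ L) ^ 2 := by ring
      _ ≤ _ := hmoment
      _ = _ := by ring
  · rw [div_le_iff₀ (by positivity)]
    exact_mod_cast hσ.pow_le_card_realizes_mul_pow hcol p.1 p.2
  · rw [le_div_iff₀ (by positivity), Fintype.sum_prod_type]
    simp only [← Finset.filter_and]
    exact hσ.sum_card_realizes_and_le hcol hm hmn hx p.1 p.2

end SecondMomentBound

section RandomOrder

theorem sum_card_filter_smul {G X : Type*} [Group G] [Fintype G] [Fintype X] [MulAction G X]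
    (p : X → Prop) :
    ∑ x, (Finset.univ.filter fun g : G => p (g • x)).card =
      Fintype.card G * (Finset.univ.filter p).card := by
  simp only [Finset.card_filter]
  rw [Finset.sum_comm]
  have hperm (g : G) : (∑ x, if p (g • x) then 1 else 0) = ∑ x, if p x then 1 else 0 :=
    Fintype.sum_equiv (MulAction.toPerm g) _ _ fun _ => rfl
  simp only [hperm, Finset.sum_const, Finset.card_univ, smul_eq_mul]

theorem card_filter_smul_mul_card {G X : Type*} [Group G] [Fintype G] [Fintype X] [MulAction G X]
    [MulAction.IsPretransitive G X] (p : X → Prop) (x : X) :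
    (Finset.univ.filter fun g : G => p (g • x)).card * Fintype.card X =
      Fintype.card G * (Finset.univ.filter p).card := by
  have hconst (y : X) : (Finset.univ.filter fun g : G => p (g • y)).card =
      (Finset.univ.filter fun g : G => p (g • x)).card := by
    obtain ⟨h, rfl⟩ := MulAction.exists_smul_eq G x y
    exact Finset.card_equiv (Equiv.mulRight h) fun g => by simp [mul_smul]
  rw [← sum_card_filter_smul, Finset.sum_congr rfl fun y _ => hconst y, Finset.sum_const,
    Finset.card_univ, smul_eq_mul, mul_comm]

theorem exists_embedding_isPrefix_ofFn {E : Type*} [Fintype E] {N : ℕ} {l : List E}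
    (hN : N ≤ Fintype.card E) (hl : l.Nodup) (hlN : l.length ≤ N) :
    ∃ f : Fin N ↪ E, l <+: List.ofFn f := by
  classical
  let rest := l.toFinsetᶜ.toList.take (N - l.length)
  have hlength : (l ++ rest).length = N := by
    have : l.toFinsetᶜ.toList.length = Fintype.card E - l.length := by
      rw [Finset.length_toList, Finset.card_compl, List.toFinset_card_of_nodup hl]
    simp only [rest, List.length_append, List.length_take, this]
    lia
  have hnodup : (l ++ rest).Nodup := by
    refine List.nodup_append'.2 ⟨hl, (Finset.nodup_toList _).sublist (List.take_sublist _ _), ?_⟩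
    intro e he he'
    have := List.mem_of_mem_take he'
    rw [Finset.mem_toList, Finset.mem_compl, List.mem_toFinset] at this
    exact this he
  refine ⟨⟨fun i => (l ++ rest).get (i.cast hlength.symm),
    hnodup.injective_get.comp (Fin.cast_injective _)⟩, ?_⟩
  convert List.prefix_append l rest
  refine List.ext_getElem (by simp [hlength]) fun i _ _ => ?_
  simp

/-- The distinct entries of a list, in the order of their first occurrences. (`List.dedup` keeps the
last occurrences instead.) -/
def firstOccurrences {E : Type*} [DecidableEq E] (l : List E) : List E := l.reverse.dedup.reverse

section firstOccurrences

variable {E : Type*} [DecidableEq E]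

theorem nodup_firstOccurrences (l : List E) : (firstOccurrences l).Nodup :=
  List.nodup_reverse.2 (List.nodup_dedup _)

theorem length_firstOccurrences_le (l : List E) : (firstOccurrences l).length ≤ l.length := by
  simpa [firstOccurrences] using (List.dedup_sublist l.reverse).length_le

theorem mem_firstOccurrences {l : List E} {e : E} : e ∈ firstOccurrences l ↔ e ∈ l := by
  simp [firstOccurrences]

theorem firstOccurrences_map (ρ : Equiv.Perm E) (l : List E) :
    firstOccurrences (l.map ρ) = (firstOccurrences l).map ρ := by
  rw [firstOccurrences, ← List.map_reverse, List.dedup_map_of_injective ρ.injective,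
    ← List.map_reverse, firstOccurrences]

theorem firstOccurrences_isPrefix_append (l l' : List E) :
    firstOccurrences l <+: firstOccurrences (l ++ l') := by
  rw [firstOccurrences, firstOccurrences, List.reverse_prefix, List.reverse_append,
    List.dedup_append]
  exact List.suffix_union_right _ _

end firstOccurrences

/-- Applying a random permutation of `E` to any fixed extension of the first occurrences in `g`
makes it a uniformly random sequence of distinct elements. -/
theorem card_filter_firstOccurrences_mul_card_embedding_le {E : Type*} [Fintype E] [DecidableEq E]
    {K N : ℕ} (hKN : K ≤ N) (hN : N ≤ Fintype.card E) {p : List E → Prop}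
    (hp : ∀ l l', l <+: l' → p l → p l') :
    (Finset.univ.filter fun g : Fin K → E => p (firstOccurrences (List.ofFn g))).card *
        Fintype.card (Fin N ↪ E) ≤
      Fintype.card E ^ K * (Finset.univ.filter fun f : Fin N ↪ E => p (List.ofFn f)).card := by
  have := Equiv.Perm.isMultiplyPretransitive E N
  have hle (g : Fin K → E) : (Finset.univ.filter fun ρ : Equiv.Perm E =>
      p (firstOccurrences (List.ofFn (ρ • g)))).card * Fintype.card (Fin N ↪ E) ≤
      Fintype.card (Equiv.Perm E) *
        (Finset.univ.filter fun f : Fin N ↪ E => p (List.ofFn f)).card := by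
    obtain ⟨f, hf⟩ := exists_embedding_isPrefix_ofFn hN (nodup_firstOccurrences (List.ofFn g))
      ((length_firstOccurrences_le _).trans (by simpa using hKN))
    rw [← card_filter_smul_mul_card (G := Equiv.Perm E) _ f]
    refine Nat.mul_le_mul_right _ (Finset.card_le_card ?_)
    refine Finset.monotone_filter_right _ fun ρ _ => ?_
    have hg : List.ofFn (ρ • g) = (List.ofFn g).map ρ := by rw [List.map_ofFn]; rfl
    have hf' : List.ofFn (ρ • f) = (List.ofFn f).map ρ := by rw [List.map_ofFn]; rfl
    rw [hg, hf', firstOccurrences_map]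
    exact hp _ _ (hf.map ρ)
  refine Nat.le_of_mul_le_mul_left (c := Fintype.card (Equiv.Perm E)) ?_ Fintype.card_pos
  rw [← mul_assoc, ← sum_card_filter_smul, Finset.sum_mul]
  refine (Finset.sum_le_card_nsmul _ _ _ fun g _ => hle g).trans_eq ?_
  rw [Finset.card_univ, Fintype.card_fun, Fintype.card_fin, smul_eq_mul]
  ring

end RandomOrder

section OnlineGame

section runPainter

variable {V : Type} {r : ℕ}

theorem runPainterAux_append (π : PainterStrategy V r) (h : EdgeHistory V r)
    (l l' : List (Sym2 V)) :
    runPainterAux π h (l ++ l') = runPainterAux π (runPainterAux π h l) l' := by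
  induction l generalizing h with
  | nil => rfl
  | cons _ _ ih => exact ih _

theorem isPrefix_runPainterAux (π : PainterStrategy V r) (h : EdgeHistory V r)
    (l : List (Sym2 V)) : h <+: runPainterAux π h l := by
  induction l generalizing h with
  | nil => exact List.prefix_rfl
  | cons _ _ ih => exact (List.prefix_append _ _).trans (ih _)

theorem runPainter_isPrefix {π : PainterStrategy V r} {l l' : List (Sym2 V)} (h : l <+: l') :
    runPainter π l <+: runPainter π l' := by
  obtain ⟨l', rfl⟩ := h
  rw [runPainter, runPainter, runPainterAux_append]
  exact isPrefix_runPainterAux _ _ _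

theorem exists_mem_runPainter (π : PainterStrategy V r) {l : List (Sym2 V)} {e : Sym2 V}
    (he : e ∈ l) : ∃ c, (e, c) ∈ runPainter π l := by
  obtain ⟨l₁, l₂, rfl⟩ := List.append_of_mem he
  refine ⟨π (runPainter π l₁) e, ?_⟩
  rw [runPainter, runPainterAux_append, runPainterAux]
  exact (isPrefix_runPainterAux _ _ _).subset (by simp [runPainter])

theorem HasMonoCopy.mono {α : Type} {F : SimpleGraph α} {h h' : EdgeHistory V r} (hh : h <+: h')
    (hcopy : HasMonoCopy F h) : HasMonoCopy F h' := by
  obtain ⟨c, f, hf⟩ := hcopy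
  refine ⟨c, f, fun u v huv => ?_⟩
  exact SimpleGraph.fromEdgeSet_mono (fun _ he => hh.subset he) (hf u v huv)

end runPainter

variable {r n : ℕ}

/-- The history of Painter's game against the distinct edges of `l`, in the order of their first
occurrences. -/
def firstRun (π : PainterStrategy (Fin n) r) (l : List (NonLoop n)) : EdgeHistory (Fin n) r :=
  runPainter π ((firstOccurrences l).map Subtype.val)

theorem firstRun_isPrefix_append (π : PainterStrategy (Fin n) r) (l l' : List (NonLoop n)) :
    firstRun π l <+: firstRun π (l ++ l') :=
  runPainter_isPrefix ((firstOccurrences_isPrefix_append l l').map _)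

theorem exists_mem_firstRun (π : PainterStrategy (Fin n) r) {l : List (NonLoop n)} {e : NonLoop n}
    (he : e ∈ l) : ∃ c, (e.1, c) ∈ firstRun π l :=
  exists_mem_runPainter π (List.mem_map_of_mem (mem_firstOccurrences.2 he))

theorem mem_take_ofFn {K : ℕ} {E : Type*} (g : Fin K → E) (k : Fin K) :
    g k ∈ (List.ofFn g).take (k + 1) :=
  List.mem_take_iff_getElem.2 ⟨k, by simp, by simp⟩

/-- The color that Painter has given to the edge `g k` once the edges `g 0, …, g k` have been
presented, repeated edges being skipped. -/
noncomputable def painterColor {K : ℕ} (π : PainterStrategy (Fin n) r) (g : Fin K → NonLoop n)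
    (k : Fin K) : Fin r :=
  (exists_mem_firstRun π (mem_take_ofFn g k)).choose

theorem causal_painterColor {K : ℕ} (π : PainterStrategy (Fin n) r) :
    Causal (painterColor π : (Fin K → NonLoop n) → Fin K → Fin r) := by
  intro k g g' h
  have htake : (List.ofFn g).take (k + 1) = (List.ofFn g').take (k + 1) := by
    refine List.ext_getElem (by simp) fun i hi _ => ?_
    rw [List.length_take, lt_min_iff] at hi
    simpa using h _ (Fin.le_def.2 (Nat.le_of_lt_succ hi.1))
  simp only [painterColor, htake, h k le_rfl]

theorem painterColor_mem_firstRun {K : ℕ} (π : PainterStrategy (Fin n) r)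
    (g : Fin K → NonLoop n) (k : Fin K) :
    ((g k).1, painterColor π g k) ∈ firstRun π (List.ofFn g) := by
  rw [← List.take_append_drop (k + 1) (List.ofFn g)]
  exact (firstRun_isPrefix_append π _ _).subset
    (exists_mem_firstRun π (mem_take_ofFn g k)).choose_spec

variable {α : Type} {V : Type*} {F : SimpleGraph α}

theorem WinsWithDensity.hasMonoCopy_firstRun {d : ℝ} {L m : ℕ} [NeZero L]
    {σ : List (Fin r) → Sym2 V} (hσ : WinsWithDensity F d L σ) {π : PainterStrategy (Fin n) r}
    {φ : V ↪ Fin n} {τ : Fin L → Fin m} {g : Fin (L * m) → NonLoop n}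
    (hg : Realizes σ (painterColor π) φ τ g) : HasMonoCopy F (firstRun π (List.ofFn g)) := by
  obtain ⟨c, f, hf⟩ := hσ.exists_copy (pickedColors (painterColor π) τ g)
  refine ⟨c, f.trans φ, fun u v huv => ?_⟩
  rw [colorGraph, SimpleGraph.fromEdgeSet_adj]
  refine ⟨?_, fun h => huv.ne ((f.trans φ).injective h)⟩
  obtain ⟨i, hi, hc, he⟩ := hf u v huv
  have hmem := painterColor_mem_firstRun π g (slot ⟨i, hi⟩ (τ ⟨i, hi⟩))
  have hi' : Fin.ofNat L i = ⟨i, hi⟩ := Fin.ext (Nat.mod_eq_of_lt hi)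
  rw [pickedColors, hi'] at hc
  rw [hc, hg ⟨i, hi⟩, he] at hmem
  exact hmem

theorem ncard_validSeqFun_and {N : ℕ} (p : (Fin N → Sym2 (Fin n)) → Prop) :
    Set.ncard {f : Fin N → Sym2 (Fin n) | ValidSeqFun f ∧ p f} =
      (Finset.univ.filter fun f : Fin N ↪ NonLoop n => p (Subtype.val ∘ f)).card := by
  have hinj : Function.Injective fun f : Fin N ↪ NonLoop n => Subtype.val ∘ f := fun f f' h =>
    DFunLike.coe_injective (Subtype.val_injective.comp_left h)
  rw [← Finset.card_image_of_injective _ hinj, ← Set.ncard_coe_finset]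
  congr 1
  ext f
  simp only [Set.mem_ofPred_eq, Finset.coe_image, Set.mem_image, Finset.coe_filter,
    Finset.mem_univ, true_and]
  constructor
  · rintro ⟨⟨hf, hdiag⟩, hp⟩
    exact ⟨⟨fun i => ⟨f i, hdiag i⟩, fun i j h => hf (congrArg Subtype.val h)⟩, hp, rfl⟩
  · rintro ⟨f, hp, rfl⟩
    exact ⟨⟨Subtype.val_injective.comp f.injective, fun i => (f i).2⟩, hp⟩

theorem onlineProb_eq_card_div_card {N : ℕ} (p : (Fin N → Sym2 (Fin n)) → Prop) :
    onlineProb n N p =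
      (Finset.univ.filter fun f : Fin N ↪ NonLoop n => p (Subtype.val ∘ f)).card /
        Fintype.card (Fin N ↪ NonLoop n) := by
  have htotal := ncard_validSeqFun_and (n := n) (N := N) fun _ => True
  simp only [and_true, Finset.filter_true, Finset.card_univ] at htotal
  rw [onlineProb, ncard_validSeqFun_and, htotal]

theorem onlineProb_le_one {N : ℕ} (p : (Fin N → Sym2 (Fin n)) → Prop) : onlineProb n N p ≤ 1 := by
  rw [onlineProb_eq_card_div_card]
  exact div_le_one_of_le₀ (by exact_mod_cast Finset.card_le_univ _) (by positivity)

theorem card_hasMonoCopy_firstRun_le {K N : ℕ} (F : SimpleGraph α) (π : PainterStrategy (Fin n) r)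
    (hKN : K ≤ N) (hN : N ≤ n.choose 2) :
    ((Finset.univ.filter fun g : Fin K → NonLoop n =>
      HasMonoCopy F (firstRun π (List.ofFn g))).card : ℝ) ≤
        n.choose 2 ^ K * onlineProb n N (OnlineMonoCopy F π) := by
  rw [← card_nonLoop] at hN
  have hpos : (0 : ℝ) < Fintype.card (Fin N ↪ NonLoop n) := by
    rw [Fintype.card_embedding_eq, Fintype.card_fin]
    exact_mod_cast Nat.descFactorial_pos.2 hN
  have hcoupling := card_filter_firstOccurrences_mul_card_embedding_le hKN hN
    (p := fun l : List (NonLoop n) => HasMonoCopy F (runPainter π (l.map Subtype.val)))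
    fun l l' h => HasMonoCopy.mono (runPainter_isPrefix (h.map _))
  simp only [List.map_ofFn, card_nonLoop] at hcoupling
  rw [onlineProb_eq_card_div_card, ← mul_div_assoc, le_div_iff₀ hpos]
  exact_mod_cast hcoupling

theorem WinsWithDensity.div_momentFactor_le_onlineProb [Fintype V] {d : ℝ} {L m N : ℕ} [NeZero L]
    {σ : List (Fin r) → Sym2 V} (hσ : WinsWithDensity F d L σ) (hn : 0 < n) (hm : 0 < m)
    (hmN : L * m ≤ N) (hN : N ≤ n.choose 2) (π : PainterStrategy (Fin n) r) :
    n.descFactorial (Fintype.card V) /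
      momentFactor (Fintype.card V) L n ((n.choose 2 / m : ℝ) ^ d) ≤
        onlineProb n N (OnlineMonoCopy F π) := by
  have hmn : m ≤ n.choose 2 := ((Nat.le_mul_of_pos_left m (NeZero.pos L)).trans hmN).trans hN
  have hfactor : 0 < momentFactor (Fintype.card V) L n ((n.choose 2 / m : ℝ) ^ d) :=
    momentFactor_pos hn (by positivity)
  have hM : (0 : ℝ) < n.choose 2 ^ (L * m) := by
    have : 0 < n.choose 2 := hm.trans_le hmn
    positivity
  rw [div_le_iff₀ hfactor]
  refine le_of_mul_le_mul_right ?_ hM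
  calc _ ≤ _ := hσ.descFactorial_mul_le (causal_painterColor π) hm hmn rfl
    _ ≤ (Finset.univ.filter fun g : Fin (L * m) → NonLoop n =>
          HasMonoCopy F (firstRun π (List.ofFn g))).card *
          momentFactor (Fintype.card V) L n ((n.choose 2 / m : ℝ) ^ d) := by
        gcongr
        rintro ⟨φ, τ, hg⟩
        exact hσ.hasMonoCopy_firstRun hg
    _ ≤ n.choose 2 ^ (L * m) * onlineProb n N (OnlineMonoCopy F π) *
          momentFactor (Fintype.card V) L n ((n.choose 2 / m : ℝ) ^ d) := by
        gcongr
        exact card_hasMonoCopy_firstRun_le F π hmN hN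
    _ = _ := by ring

end OnlineGame

section Limit

theorem tendsto_descFactorial_div_momentFactor (a L : ℕ) {x : ℕ → ℝ}
    (hx : Tendsto (fun n => x n / n) atTop (nhds 0)) :
    Tendsto (fun n : ℕ => n.descFactorial a / momentFactor a L n (x n)) atTop (nhds 1) := by
  have hpos : ∀ᶠ n : ℕ in atTop, (n : ℝ) ≠ 0 := by
    filter_upwards [eventually_gt_atTop 0] with n hn
    exact_mod_cast hn.ne'
  have hdesc := (isEquivalent_iff_tendsto_one (hpos.mono fun n hn => pow_ne_zero a hn)).1
    (isEquivalent_descFactorial a)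
  have hmoment : Tendsto (fun n : ℕ => momentFactor a L n (x n) / (n : ℝ) ^ a) atTop (nhds 1) := by
    have := ((((hx.const_mul (a : ℝ)).const_add 1).pow a).sub_const 1).const_mul (2 ^ L : ℝ)
    have := this.const_add 1
    rw [mul_zero, add_zero, one_pow, sub_self, mul_zero, add_zero] at this
    refine this.congr' ?_
    filter_upwards [hpos] with n hn
    have hfactor : (n + a * x n : ℝ) = n * (1 + a * (x n / n)) := by field_simp
    rw [momentFactor, hfactor, mul_pow]
    field_simp
  have hquot := hdesc.div hmoment one_ne_zero
  rw [div_one] at hquot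
  refine hquot.congr' ?_
  filter_upwards [hpos] with n hn
  exact div_div_div_cancel_right₀ (pow_ne_zero a hn) _ _

theorem isBigO_natCast_div {N : ℕ → ℕ} {L : ℕ} (hL : 0 < L) (hN : ∀ᶠ n in atTop, L ≤ N n) :
    (fun n => (N n : ℝ)) =O[atTop] fun n => ((N n / L : ℕ) : ℝ) := by
  refine IsBigO.of_bound (2 * L) ?_
  filter_upwards [hN] with n hn
  rw [Real.norm_natCast, Real.norm_natCast]
  have hdiv : 1 ≤ N n / L := (Nat.one_le_div_iff hL).2 hn
  have hle : N n ≤ 2 * L * (N n / L) := by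
    nlinarith [Nat.div_add_mod (N n) L, Nat.mod_lt (N n) hL]
  exact_mod_cast hle

theorem tendsto_choose_div_rpow_div {d : ℝ} (hd : 0 < d) {m : ℕ → ℕ}
    (hm : (fun n : ℕ => (n : ℝ) ^ (2 - 1 / d)) =o[atTop] fun n => (m n : ℝ)) :
    Tendsto (fun n : ℕ => (n.choose 2 / m n : ℝ) ^ d / n) atTop (nhds 0) := by
  have hlim : Tendsto (fun n : ℕ => ((n : ℝ) ^ (2 - 1 / d) / m n) ^ d) atTop (nhds 0) := by
    have := hm.tendsto_div_nhds_zero.rpow_const (p := d) (Or.inr hd.le)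
    rwa [Real.zero_rpow hd.ne'] at this
  refine squeeze_zero' (Eventually.of_forall fun n => by positivity) ?_ hlim
  filter_upwards [eventually_gt_atTop 0] with n hn
  have hn' : (0 : ℝ) < n := by exact_mod_cast hn
  have hroot : ((n : ℝ) ^ (1 / d)) ^ d = n := by
    rw [← Real.rpow_mul hn'.le, one_div_mul_cancel hd.ne', Real.rpow_one]
  have hsq : (n.choose 2 : ℝ) ≤ n ^ (2 - 1 / d) * n ^ (1 / d) := by
    rw [← Real.rpow_add hn', sub_add_cancel, Real.rpow_two]
    exact_mod_cast Nat.choose_le_pow n 2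
  rw [div_le_iff₀ hn']
  calc (n.choose 2 / m n : ℝ) ^ d ≤ (n ^ (2 - 1 / d) / m n * n ^ (1 / d)) ^ d := by
        rw [div_mul_eq_mul_div]
        gcongr
    _ = (n ^ (2 - 1 / d) / m n) ^ d * n := by
        rw [Real.mul_rpow (by positivity) (by positivity), hroot]

theorem tendsto_atTop_of_rpow_isLittleO {p : ℝ} (hp : 0 < p) {N : ℕ → ℕ}
    (hN : (fun n : ℕ => (n : ℝ) ^ p) =o[atTop] fun n => (N n : ℝ)) : Tendsto N atTop atTop := by
  have hpow : Tendsto (fun n : ℕ => (n : ℝ) ^ p) atTop atTop :=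
    (tendsto_rpow_atTop hp).comp tendsto_natCast_atTop_atTop
  rw [← tendsto_natCast_atTop_iff (R := ℝ)]
  refine tendsto_atTop_mono' _ ?_ hpow
  filter_upwards [hN.bound one_pos] with n hn
  rwa [Real.norm_of_nonneg (by positivity), Real.norm_natCast, one_mul] at hn

theorem WinsWithDensity.tendsto_onlineProb {α V : Type} [Finite V] {F : SimpleGraph α} {d : ℝ}
    {L r : ℕ} {σ : List (Fin r) → Sym2 V} (hσ : WinsWithDensity F d L σ) (hd : 1 / 2 < d)
    (hL : 0 < L) {N : ℕ → ℕ}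
    (hN : (fun n : ℕ => (n : ℝ) ^ (2 - 1 / d)) =o[atTop] fun n => (N n : ℝ))
    (hNle : ∀ n, N n ≤ n.choose 2) (π : ∀ n, PainterStrategy (Fin n) r) :
    Tendsto (fun n => onlineProb n (N n) (OnlineMonoCopy F (π n))) atTop (nhds 1) := by
  have := Fintype.ofFinite V
  have : NeZero L := ⟨hL.ne'⟩
  have hd₀ : 0 < d := one_half_pos.trans hd
  have hexp : 0 < 2 - 1 / d := sub_pos.2 ((one_div_lt hd₀ two_pos).2 hd)
  have hlarge := (tendsto_atTop_of_rpow_isLittleO hexp hN).eventually_ge_atTop L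
  have hlower := tendsto_descFactorial_div_momentFactor (Fintype.card V) L
    (tendsto_choose_div_rpow_div hd₀ (hN.trans_isBigO (isBigO_natCast_div hL hlarge)))
  refine tendsto_of_tendsto_of_tendsto_of_le_of_le' hlower tendsto_const_nhds ?_
    (Eventually.of_forall fun n => onlineProb_le_one _)
  filter_upwards [hlarge, eventually_gt_atTop 0] with n hn hn₀
  exact hσ.div_momentFactor_le_onlineProb hn₀ (Nat.div_pos hn hL) (Nat.mul_div_le _ _) (hNle n) _

end Limit

/-- upper bound for the bowtie. For every `N : ℕ → ℕ` with
`n^(86/61) = o(N(n))` and `N(n) ≤ n(n-1)/2`, and every sequence of online Painter strategies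
with 2 colors, a.a.s. the board after `N(n)` steps contains a monochromatic copy of the
bowtie graph. -/
theorem statement12 (N : ℕ → ℕ)
    (hN : (fun n : ℕ => (n : ℝ) ^ ((86 : ℝ) / 61)) =o[atTop] (fun n : ℕ => (N n : ℝ)))
    (hNle : ∀ n : ℕ, N n ≤ n * (n - 1) / 2)
    (π : (n : ℕ) → PainterStrategy (Fin n) 2) :
    Tendsto (fun n : ℕ => onlineProb n (N n) (OnlineMonoCopy bowtie (π n)))
      atTop (nhds 1) := by
  obtain ⟨V, _, L, σ, hL, hσ⟩ := exists_winsWithDensity_bowtie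
  refine hσ.tendsto_onlineProb (by norm_num) hL ?_ (fun n => ?_) π
  · convert hN using 3
    norm_num
  · rw [Nat.choose_two_right]
    exact hNle n
end
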